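/- arXiv:1611.06979 — 5 statements merged into one kernel-verified Lean document; each statement's English description precedes it below -/
import Mathlib

section
/- For 1 ≤ k ≤ n, the number of 321-avoiding permutations π ∈ S_n such that the last descent of π⁻¹ equals n−k is the ballot number C_{n,k} = binom(2n−k−1, n−1) − binom(2n−k−1, n). -/
/-- A permutation avoids the pattern 321 if it has no decreasing subsequence of length 3. -/
def Avoids321 {n : ℕ} (π : Equiv.Perm (Fin n)) : Prop :=
  ∀ i j k : Fin n, i < j → j < k → ¬ (π k < π j ∧ π j < π i)

/-- The set of positions of left-to-right maxima of a permutation. -/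
def LtrSet {n : ℕ} (π : Equiv.Perm (Fin n)) : Finset (Fin n) :=
  Finset.univ.filter (fun i => ∀ j, j ≤ i → π j ≤ π i)

/-- The block number of a permutation (0-based version of
`|{1 ≤ i ≤ n : π(j) ≤ i for all j ≤ i}|`). -/
def blockNum {n : ℕ} (π : Equiv.Perm (Fin n)) : ℕ :=
  (Finset.univ.filter (fun i : Fin n => ∀ j, j ≤ i → π j ≤ i)).card

/-- The descent set of a permutation, as a set of 1-based positions in `[n-1]`. -/
def DesSet {n : ℕ} (π : Equiv.Perm (Fin n)) : Finset ℕ :=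
  Finset.image (fun i : Fin n => (i : ℕ) + 1)
    (Finset.univ.filter (fun i : Fin n => ∃ h : (i : ℕ) + 1 < n, π ⟨(i : ℕ) + 1, h⟩ < π i))

/-- The last descent of a permutation (`0` if there is no descent). -/
def ldes {n : ℕ} (π : Equiv.Perm (Fin n)) : ℕ := (DesSet π).sup id

/-!
The inverse of a 321-avoiding permutation is 321-avoiding, so it suffices to count the 321-avoiding
`σ` with `ldes σ = m`. Removing the largest value of such a `σ ∈ S_{n+1}`, at 0-based position `p`,
leaves a 321-avoiding `τ ∈ S_n` which increases from position `p` on, that is, with `ldes τ ≤ p`;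
conversely, inserting a new maximum at such a position creates no 321. If `p = n` then
`ldes σ = ldes τ`, otherwise `ldes σ = p + 1`. Hence, for `m ≤ n`, the `σ` with `ldes σ = m`
correspond to the `τ` with `ldes τ ≤ m`, so the counts `D(n, m)` satisfy
`D(n + 1, m) = ∑ j ≤ m, D(n, j)`, which is the recurrence of the ballot numbers.
-/

open Equiv

section LastDescent

variable {n : ℕ} (σ : Perm (Fin n))

theorem ldes_le_iff_forall_lt_succ (m : ℕ) :
    ldes σ ≤ m ↔ ∀ (i : Fin n) (h : (i : ℕ) + 1 < n), m ≤ i → σ i < σ ⟨i + 1, h⟩ := by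
  have not_descent_iff (i : Fin n) (h : (i : ℕ) + 1 < n) :
      σ i < σ ⟨i + 1, h⟩ ↔ ¬ σ ⟨i + 1, h⟩ < σ i := by
    rw [not_lt]
    exact ⟨le_of_lt, fun hle => hle.lt_of_ne (σ.injective.ne (by simp [Fin.ext_iff]))⟩
  simp only [ldes, DesSet, Finset.sup_le_iff, Finset.forall_mem_image, Finset.mem_filter_univ,
    id, not_descent_iff, forall_exists_index]
  exact forall₂_congr fun _ _ => by rw [← not_imp_not, not_le, Nat.lt_succ_iff]

theorem ldes_le_iff_strictMonoOn (m : ℕ) : ldes σ ≤ m ↔ StrictMonoOn σ {i | m ≤ i} := by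
  rw [ldes_le_iff_forall_lt_succ]
  refine ⟨fun H => ?_, fun H i h hi => H hi (Nat.le_succ_of_le hi) (Nat.lt_succ_self i)⟩
  refine strictMonoOn_of_lt_succ ⟨fun i hi _ _ _ hj => Nat.le_trans hi hj.1⟩ fun i hmax hi _ => ?_
  cases n with
  | zero => exact i.elim0
  | succ n =>
    cases i using Fin.lastCases with
    | last => exact absurd isMax_top hmax
    | cast i =>
      rw [Fin.orderSucc_castSucc]
      exact H i.castSucc (by simp) hi

theorem ldes_le_pred : ldes σ ≤ n - 1 := by
  rw [ldes_le_iff_forall_lt_succ]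
  omega

theorem ldes_eq_zero_iff : ldes σ = 0 ↔ σ = 1 := by
  rw [← Nat.le_zero, ldes_le_iff_strictMonoOn]
  simp only [Nat.zero_le, Set.ofPred_true, strictMonoOn_univ]
  refine ⟨fun h => Equiv.coe_fn_injective ((h.range_inj strictMono_id).mp ?_), ?_⟩
  · simp [σ.surjective.range_eq]
  · rintro rfl
    exact strictMono_id

end LastDescent

theorem Avoids321.inv {n : ℕ} {σ : Perm (Fin n)} (h : Avoids321 σ) : Avoids321 σ⁻¹ :=
  fun _ _ _ hij hjk ⟨hkj, hji⟩ => h _ _ _ hkj hji (by simpa using ⟨hij, hjk⟩)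

theorem avoids321_one (n : ℕ) : Avoids321 (1 : Perm (Fin n)) :=
  fun _ _ _ _ hjk ⟨hkj, _⟩ => lt_asymm hjk hkj

section InsertMax

variable {n : ℕ}

/-- The permutation of `Fin (n + 1)` whose one-line notation arises from that of `σ` by inserting
the new largest value `n` at position `p`. -/
def insertMax (p : Fin (n + 1)) (σ : Perm (Fin n)) : Perm (Fin (n + 1)) :=
  (finSuccEquiv' p).trans ((optionCongr σ).trans (finSuccEquiv' (Fin.last n)).symm)

variable (p : Fin (n + 1)) (σ : Perm (Fin n))

@[simp]
theorem insertMax_self : insertMax p σ p = Fin.last n := by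
  simp [insertMax]

@[simp]
theorem insertMax_succAbove (i : Fin n) : insertMax p σ (p.succAbove i) = (σ i).castSucc := by
  simp [insertMax]

theorem insertMax_injective2 : Function.Injective2 (insertMax (n := n)) := by
  intro p q σ τ h
  obtain rfl : p = q := (insertMax q τ).injective (by rw [insertMax_self, ← h, insertMax_self])
  refine ⟨rfl, Equiv.ext fun i => Fin.castSucc_injective n ?_⟩
  rw [← insertMax_succAbove p, h, insertMax_succAbove]

theorem exists_insertMax_eq (ρ : Perm (Fin (n + 1))) : ∃ p σ, insertMax p σ = ρ := by
  have bijective := (Fintype.bijective_iff_injective_and_card _).mpr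
    ⟨(insertMax_injective2 (n := n)).uncurry, by simp [Fintype.card_perm, Nat.factorial_succ]⟩
  obtain ⟨⟨p, σ⟩, h⟩ := bijective.surjective ρ
  exact ⟨p, σ, h⟩

variable {p σ}

theorem exists_succAbove_eq_of_insertMax_lt {i j : Fin (n + 1)}
    (h : insertMax p σ i < insertMax p σ j) : ∃ i', p.succAbove i' = i := by
  refine Fin.exists_succAbove_eq ?_
  rintro rfl
  exact (Fin.le_last _).not_gt (insertMax_self i σ ▸ h)

theorem Avoids321.of_insertMax (h : Avoids321 (insertMax p σ)) : Avoids321 σ := by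
  intro i j k hij hjk
  simpa using h (p.succAbove i) (p.succAbove j) (p.succAbove k) (by simpa) (by simpa)

theorem Avoids321.ldes_le_of_insertMax (h : Avoids321 (insertMax p σ)) : ldes σ ≤ p := by
  rw [ldes_le_iff_strictMonoOn]
  intro i hi j _ hij
  have hp : p < p.succAbove i := (Fin.lt_succAbove_iff_le_castSucc p i).mpr hi
  have hle : σ i ≤ σ j := by simpa using h p _ _ hp (Fin.succAbove_lt_succAbove_iff.mpr hij)
  exact hle.lt_of_ne (σ.injective.ne hij.ne)

theorem Avoids321.insertMax (h : Avoids321 σ) (hp : ldes σ ≤ p) : Avoids321 (insertMax p σ) := by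
  rintro i j k hij hjk ⟨hkj, hji⟩
  obtain ⟨j, rfl⟩ := exists_succAbove_eq_of_insertMax_lt hji
  obtain ⟨k, rfl⟩ := exists_succAbove_eq_of_insertMax_lt hkj
  rw [Fin.succAbove_lt_succAbove_iff] at hjk
  simp only [insertMax_succAbove, Fin.castSucc_lt_castSucc_iff] at hkj
  obtain rfl | hip := eq_or_ne i p
  · have hj : (i : ℕ) ≤ j := (Fin.lt_succAbove_iff_le_castSucc i j).mp hij
    exact hkj.not_gt ((ldes_le_iff_strictMonoOn σ i).mp hp hj (hj.trans hjk.le) hjk)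
  · obtain ⟨i, rfl⟩ := Fin.exists_succAbove_eq hip
    exact h i j k (by simpa using hij) hjk ⟨hkj, by simpa using hji⟩

theorem avoids321_insertMax_iff : Avoids321 (insertMax p σ) ↔ Avoids321 σ ∧ ldes σ ≤ p :=
  ⟨fun h => ⟨h.of_insertMax, h.ldes_le_of_insertMax⟩, fun h => h.1.insertMax h.2⟩

variable (σ) in
theorem ldes_insertMax_last : ldes (insertMax (Fin.last n) σ) = ldes σ := by
  have apply_castSucc (i : Fin n) : insertMax (Fin.last n) σ i.castSucc = (σ i).castSucc := by
    rw [← Fin.succAbove_last_apply, insertMax_succAbove]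
  refine eq_of_forall_ge_iff fun m => ?_
  simp only [ldes_le_iff_strictMonoOn]
  refine ⟨fun H i hi j hj hij => ?_, fun H i hi j hj hij => ?_⟩
  · simpa [apply_castSucc] using @H i.castSucc hi j.castSucc hj hij
  · obtain ⟨i, rfl⟩ := Fin.exists_castSucc_eq.mpr (Fin.ne_last_of_lt hij)
    cases j using Fin.lastCases with
    | last => simp [apply_castSucc]
    | cast j => simpa [apply_castSucc] using H hi hj hij

theorem ldes_insertMax_castSucc {p : Fin n} (hp : ldes σ ≤ p) :
    ldes (insertMax p.castSucc σ) = p + 1 := by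
  refine le_antisymm ?_ (Nat.lt_of_not_le fun hle => ?_)
  · rw [ldes_le_iff_strictMonoOn] at hp ⊢
    intro i hi j _ hij
    have hpi : p.castSucc < i := hi
    obtain ⟨i, rfl⟩ := Fin.exists_succAbove_eq hpi.ne'
    obtain ⟨j, rfl⟩ := Fin.exists_succAbove_eq (hpi.trans hij).ne'
    rw [Fin.succAbove_lt_succAbove_iff] at hij
    have hi' : p ≤ i := (Fin.lt_succAbove_iff_le_castSucc p.castSucc i).mp hpi
    simpa using hp hi' (hi'.trans hij.le) hij
  · have h := (ldes_le_iff_forall_lt_succ _ _).mp hle p.castSucc (by simp) le_rfl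
    exact (Fin.le_last _).not_gt (insertMax_self p.castSucc σ ▸ h)

end InsertMax

section Count

/-- The number `D(n, m)` of 321-avoiding permutations in `S_n` with last descent `m`; for
`m ≤ n` and `0 < n` it is the ballot number `C_{n, n - m}`. -/
noncomputable def numAvoids321Ldes (n m : ℕ) : ℕ :=
  {σ : Perm (Fin n) | Avoids321 σ ∧ ldes σ = m}.ncard

theorem ncard_avoids321_ldes_inv (n m : ℕ) :
    {π : Perm (Fin n) | Avoids321 π ∧ ldes π⁻¹ = m}.ncard = numAvoids321Ldes n m := by
  refine Set.ncard_congr (fun π _ => π⁻¹) (fun π h => ⟨h.1.inv, h.2⟩)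
    (fun _ _ _ _ h => inv_injective h) fun σ h => ⟨σ⁻¹, ⟨h.1.inv, ?_⟩, inv_inv σ⟩
  rw [inv_inv, h.2]

theorem ncard_avoids321_ldes_le (n m : ℕ) :
    {σ : Perm (Fin n) | Avoids321 σ ∧ ldes σ ≤ m}.ncard =
      ∑ j ∈ Finset.range (m + 1), numAvoids321Ldes n j := by
  induction m with
  | zero => simp [numAvoids321Ldes]
  | succ m ih =>
    rw [Finset.sum_range_succ, ← ih, numAvoids321Ldes, ← Set.ncard_union_eq]
    · simp only [Nat.le_succ_iff, and_or_left, Set.ofPred_or]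
    · rw [Set.disjoint_left]
      rintro σ ⟨_, hle⟩ ⟨_, heq⟩
      omega

theorem setOf_avoids321_ldes_eq_succ {n : ℕ} (p : Fin n) :
    {σ : Perm (Fin (n + 1)) | Avoids321 σ ∧ ldes σ = p + 1} =
      insertMax p.castSucc '' {τ | Avoids321 τ ∧ ldes τ ≤ p} ∪
        insertMax (Fin.last n) '' {τ | Avoids321 τ ∧ ldes τ = p + 1} := by
  ext σ
  simp only [Set.mem_union, Set.mem_image, Set.mem_ofPred_eq]
  constructor
  · rintro ⟨havoids, hldes⟩
    obtain ⟨q, τ, rfl⟩ := exists_insertMax_eq σ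
    obtain ⟨hτ, hq⟩ := avoids321_insertMax_iff.mp havoids
    cases q using Fin.lastCases with
    | last => exact .inr ⟨τ, ⟨hτ, by rwa [← ldes_insertMax_last]⟩, rfl⟩
    | cast q =>
      rw [ldes_insertMax_castSucc hq, add_left_inj, ← Fin.ext_iff] at hldes
      subst hldes
      exact .inl ⟨τ, ⟨hτ, hq⟩, rfl⟩
  · rintro (⟨τ, ⟨hτ, hle⟩, rfl⟩ | ⟨τ, ⟨hτ, heq⟩, rfl⟩)
    · exact ⟨hτ.insertMax hle, ldes_insertMax_castSucc hle⟩
    · exact ⟨hτ.insertMax (heq.trans_le p.isLt), by rw [ldes_insertMax_last, heq]⟩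

theorem numAvoids321Ldes_zero (n : ℕ) : numAvoids321Ldes n 0 = 1 := by
  rw [numAvoids321Ldes, Set.ncard_eq_one]
  refine ⟨1, Set.ext fun σ => ?_⟩
  simp only [Set.mem_ofPred_eq, ldes_eq_zero_iff, Set.mem_singleton_iff, and_iff_right_iff_imp]
  rintro rfl
  exact avoids321_one n

theorem numAvoids321Ldes_eq_zero {n m : ℕ} (hn : 0 < n) (hm : n ≤ m) :
    numAvoids321Ldes n m = 0 := by
  rw [numAvoids321Ldes, Set.ncard_eq_zero, Set.eq_empty_iff_forall_notMem]
  rintro σ ⟨_, hσ⟩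
  have := ldes_le_pred σ
  omega

theorem numAvoids321Ldes_succ_eq_sum {n m : ℕ} (hm : m ≤ n) :
    numAvoids321Ldes (n + 1) m = ∑ j ∈ Finset.range (m + 1), numAvoids321Ldes n j := by
  cases m with
  | zero => simp [numAvoids321Ldes_zero]
  | succ m =>
    have hdisjoint : Disjoint
        (insertMax (Fin.castSucc ⟨m, hm⟩) '' {τ : Perm (Fin n) | Avoids321 τ ∧ ldes τ ≤ m})
        (insertMax (Fin.last n) '' {τ | Avoids321 τ ∧ ldes τ = m + 1}) := by
      rw [Set.disjoint_left]
      rintro _ ⟨τ, _, rfl⟩ ⟨τ', _, h⟩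
      exact (Fin.castSucc_lt_last _).ne' (insertMax_injective2 h).1
    rw [Finset.sum_range_succ, ← ncard_avoids321_ldes_le, numAvoids321Ldes,
      setOf_avoids321_ldes_eq_succ ⟨m, hm⟩, Set.ncard_union_eq hdisjoint,
      Set.ncard_image_of_injective _ (insertMax_injective2.right _),
      Set.ncard_image_of_injective _ (insertMax_injective2.right _), numAvoids321Ldes]

theorem numAvoids321Ldes_succ_succ {n m : ℕ} (hm : m < n) :
    numAvoids321Ldes (n + 1) (m + 1) =
      numAvoids321Ldes (n + 1) m + numAvoids321Ldes n (m + 1) := by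
  rw [numAvoids321Ldes_succ_eq_sum hm, numAvoids321Ldes_succ_eq_sum hm.le, Finset.sum_range_succ]

theorem numAvoids321Ldes_add_choose {n m : ℕ} (hm : m ≤ n + 1) :
    numAvoids321Ldes (n + 1) m + (n + m).choose (n + 1) = (n + m).choose n := by
  induction n generalizing m with
  | zero =>
    interval_cases m
    · simp [numAvoids321Ldes_zero]
    · simp [numAvoids321Ldes_eq_zero]
  | succ n ihn =>
    induction m with
    | zero => simp [numAvoids321Ldes_zero]
    | succ m ihm =>
      obtain heq | hlt := hm.eq_or_lt
      · obtain rfl : m = n + 1 := by omega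
        rw [numAvoids321Ldes_eq_zero (Nat.succ_pos _) le_rfl, zero_add]
        exact Nat.choose_symm_add.symm
      · have hleft := ihm (by omega)
        have hbelow := ihn (m := m + 1) (by omega)
        rw [show n + (m + 1) = n + 1 + m by omega] at hbelow
        rw [numAvoids321Ldes_succ_succ (by omega), ← add_assoc, Nat.choose_succ_succ',
          Nat.choose_succ_succ' _ n]
        omega

end Count

/-- The number of 321-avoiding permutations in `S_n` whose inverse has last descent
`n - k` is the ballot number `C_{n,k}`. -/
theorem card_avoids321_ldes_inv (n k : ℕ) (h1 : 1 ≤ k) (h2 : k ≤ n) :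
    Nat.card {π : Equiv.Perm (Fin n) // Avoids321 π ∧ ldes π⁻¹ = n - k} =
      Nat.choose (2 * n - k - 1) (n - 1) - Nat.choose (2 * n - k - 1) n := by
  obtain ⟨n, rfl⟩ : ∃ N, n = N + 1 := ⟨n - 1, by omega⟩
  have hcount := numAvoids321Ldes_add_choose (n := n) (m := n + 1 - k) (by omega)
  rw [show 2 * (n + 1) - k - 1 = n + (n + 1 - k) by omega, Nat.add_sub_cancel, ← hcount,
    Nat.add_sub_cancel]
  exact ncard_avoids321_ldes_inv (n + 1) (n + 1 - k)
end

section
/- For 1 ≤ k ≤ n, the number of 321-avoiding permutations π ∈ S_n with exactly k blocks equals the ballot number C_{n,k} = binom(2n−k−1, n−1) − binom(2n−k−1, n). -/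
/-!
A 321-avoiding permutation `π` of `Fin n` is determined by its running maximum `partialSups π`:
at its records `π` agrees with the running maximum, and elsewhere it lists the remaining values in
increasing order. The running maxima that occur are exactly the monotone maps `f` with `i ≤ f i`,
that is, the Dyck paths of semilength `n`, and the blocks of `π` correspond to the fixed points
of `f`, that is, to the returns of the path. Removing the first peak of such a path gives a
recursion on the length of its initial ascent, which Pascal's rule solves by a difference of
binomial coefficients.
-/

open Finset

section Records

variable {α β : Type*} [LinearOrder α]

/-- The (strict) records, or left-to-right maxima, of `f`: the arguments at which `f` exceeds all
its earlier values. A monotone `f` is recovered from its values on this set. -/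
def records [Preorder β] (f : α → β) : Set α := {i | ∀ j < i, f j < f i}

lemma strictMonoOn_records [Preorder β] (f : α → β) : StrictMonoOn f (records f) :=
  fun _ _ _ hj hij ↦ hj _ hij

lemma exists_mem_records_eq_of_monotone [WellFoundedLT α] [PartialOrder β] {f : α → β}
    (hf : Monotone f) (i : α) : ∃ j ≤ i, j ∈ records f ∧ f j = f i := by
  obtain ⟨j, hj, hmin⟩ := exists_minimal_le_of_wellFoundedLT (fun j ↦ f j = f i) i rfl
  refine ⟨j, hj, fun l hlj ↦ (hf hlj.le).lt_of_ne fun hl ↦ ?_, hmin.prop⟩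
  exact hmin.not_lt (hl.trans hmin.prop) hlj

end Records

section PartialSups

variable {α : Type*} [LinearOrder α] [LocallyFiniteOrderBot α]

lemma exists_le_le_apply_of_injective {g : α → α} (hg : g.Injective) (a : α) :
    ∃ x ≤ a, a ≤ g x := by
  by_contra! h
  have hcard : #(Iic a) ≤ #(Iio a) :=
    card_le_card_of_injOn g (fun x hx ↦ mem_Iio.2 (h x (mem_Iic.1 hx))) hg.injOn
  exact hcard.not_gt (card_lt_card (coe_ssubset.1 (by simp [Set.Iio_ssubset_Iic_self])))

lemma le_partialSups_of_injective {g : α → α} (hg : g.Injective) (i : α) :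
    i ≤ partialSups g i := by
  obtain ⟨j, hji, hij⟩ := exists_le_le_apply_of_injective hg i
  exact hij.trans (le_partialSups_of_le g hji)

lemma partialSups_eq_of_eqOn_records [WellFoundedLT α] {f : α →o α} (hf : ∀ i, i ≤ f i)
    {π : Equiv.Perm α} (hrec : Set.EqOn π f (records f))
    (hcompl : StrictMonoOn π (records f)ᶜ) : partialSups π = f := by
  have hle (i : α) : π i ≤ f i := by
    by_cases hi : i ∈ records f
    · exact (hrec hi).le
    obtain ⟨v, hvi, hij⟩ := exists_le_le_apply_of_injective π.symm.injective i
    obtain ⟨j, rfl⟩ := π.surjective v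
    rw [π.symm_apply_apply] at hij
    have hjf : π j ≤ f i := hvi.trans (hf i)
    by_cases hj : j ∈ records f
    · have hlt : i < j := hij.lt_of_ne fun h ↦ hi (h ▸ hj)
      exact absurd (hj i hlt) (hrec hj ▸ hjf).not_gt
    · exact (hcompl.monotoneOn hi hj hij).trans hjf
  refine OrderHom.ext _ _ (funext fun i ↦ le_antisymm ?_ ?_)
  · exact partialSups_le π i _ fun j hj ↦ (hle j).trans (f.monotone hj)
  · obtain ⟨j, hji, hj, hfj⟩ := exists_mem_records_eq_of_monotone f.monotone i
    exact (hfj ▸ hrec hj).ge.trans (le_partialSups_of_le π hji)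

end PartialSups

lemma exists_perm_eqOn_strictMonoOn_compl {α : Type*} [LinearOrder α] [Finite α] {s : Set α}
    {f : α → α} (hf : s.InjOn f) :
    ∃ π : Equiv.Perm α, s.EqOn π f ∧ StrictMonoOn π sᶜ := by
  classical
  have := Fintype.ofFinite α
  let e : {x // x ∈ s} ≃ {x // x ∈ f '' s} := Equiv.Set.imageOfInjOn f s hf
  have hcard : Fintype.card {x // x ∉ s} = Fintype.card {x // x ∉ f '' s} :=
    Fintype.card_congr e.toCompl
  let e' : {x // x ∉ s} ≃o {x // x ∉ f '' s} :=
    (Fintype.orderIsoFinOfCardEq _ hcard).symm.trans (Fintype.orderIsoFinOfCardEq _ rfl)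
  refine ⟨e.subtypeCongr e'.toEquiv, fun x hx ↦ ?_, fun x hx y hy hxy ↦ ?_⟩
  · simp [Equiv.subtypeCongr, Equiv.sumCompl_symm_apply_of_pos hx, e, Equiv.Set.imageOfInjOn]
  · simpa [Equiv.subtypeCongr, Equiv.sumCompl_symm_apply_of_neg hx,
      Equiv.sumCompl_symm_apply_of_neg hy] using hxy

section Avoids321

variable {n : ℕ} {π σ : Equiv.Perm (Fin n)}

lemma avoids321_of_strictMonoOn {s : Set (Fin n)} (hs : StrictMonoOn π s)
    (hsc : StrictMonoOn π sᶜ) : Avoids321 π := by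
  rintro i j k hij hjk ⟨hkj, hji⟩
  by_cases hj : j ∈ s
  · have hi : i ∉ s := fun hi ↦ (hs hi hj hij).asymm hji
    have hk : k ∉ s := fun hk ↦ (hs hj hk hjk).asymm hkj
    exact (hsc hi hk (hij.trans hjk)).asymm (hkj.trans hji)
  · have hi : i ∈ s := by_contra fun hi ↦ (hsc hi hj hij).asymm hji
    have hk : k ∈ s := by_contra fun hk ↦ (hsc hj hk hjk).asymm hkj
    exact (hs hi hk (hij.trans hjk)).asymm (hkj.trans hji)

lemma Avoids321.apply_le_of_partialSups_eq (hσ : Avoids321 σ) (h : partialSups π = partialSups σ)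
    {i : Fin n} (heq : ∀ j < i, π j = σ j) : σ i ≤ π i := by
  -- Otherwise `σ` takes the value `π i` after `i`, and the running maximum at `i`, `σ i`, `π i`
  -- form a 321 pattern of `σ`.
  by_contra! hlt
  obtain ⟨k, hk⟩ := σ.surjective (π i)
  have hik : i < k := by
    rcases lt_trichotomy i k with hik | rfl | hki
    · exact hik
    · exact absurd hk hlt.ne'
    · exact absurd (π.injective ((heq k hki).trans hk)) hki.ne
  obtain ⟨j, hj, hmax⟩ := exists_partialSups_eq π i
  have hσi : σ i ≤ π j := by
    rw [← hmax, h]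
    exact le_partialSups σ i
  have hji : j < i := hj.lt_of_ne fun hji ↦ hlt.not_ge (hji ▸ hσi)
  have hσij : σ i < σ j := (heq j hji ▸ hσi).lt_of_ne (σ.injective.ne hji.ne')
  exact hσ j i k hji hik ⟨hk ▸ hlt, hσij⟩

theorem Avoids321.eq_of_partialSups_eq (hπ : Avoids321 π) (hσ : Avoids321 σ)
    (h : partialSups π = partialSups σ) : π = σ := by
  ext1 i
  induction i using WellFoundedLT.induction with
  | ind i ih =>
    exact le_antisymm (hπ.apply_le_of_partialSups_eq h.symm fun j hj ↦ (ih j hj).symm)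
      (hσ.apply_le_of_partialSups_eq h ih)

theorem exists_avoids321_partialSups_eq {f : Fin n →o Fin n} (hf : ∀ i, i ≤ f i) :
    ∃ π : Equiv.Perm (Fin n), Avoids321 π ∧ partialSups π = f := by
  have hmono := strictMonoOn_records f
  obtain ⟨π, hrec, hcompl⟩ := exists_perm_eqOn_strictMonoOn_compl hmono.injOn
  exact ⟨π, avoids321_of_strictMonoOn (hmono.congr hrec.symm) hcompl,
    partialSups_eq_of_eqOn_records hf hrec hcompl⟩

lemma blockNum_eq_card_fixedPoints_partialSups (π : Equiv.Perm (Fin n)) :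
    blockNum π = #{i | partialSups π i = i} := by
  refine congrArg card (filter_congr fun i _ ↦ ?_)
  rw [← partialSups_le_iff, (le_partialSups_of_injective π.injective i).ge_iff_eq']

end Avoids321

/-- Dyck paths of semilength `m` with more than `e` up-steps before the first down-step and with
exactly `k` returns to the axis, encoded by the maps `f` for which `f i + 1` up-steps precede the
`(i + 1)`-st down-step. For `m = 0` the condition on `e` is vacuous. -/
def dyckMaps (m e k : ℕ) : Set (Fin m → ℕ) :=
  {f | Monotone f ∧ (∀ i : Fin m, ↑i ≤ f i) ∧ (∀ i, f i < m) ∧ (∀ i, e ≤ f i) ∧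
    #{i | f i = i} = k}

namespace dyckMaps

variable {m e k : ℕ}

instance : Finite (dyckMaps m e k) :=
  (Set.Finite.pi' fun _ ↦ Set.finite_Iio m).subset fun _ hf ↦ hf.2.2.1

lemma le_sub_of_mem {f : Fin m → ℕ} (hf : f ∈ dyckMaps m e k) : k ≤ m - e := by
  obtain ⟨-, -, -, hge, rfl⟩ := hf
  rw [← Nat.card_Ico]
  refine card_le_card_of_injOn (fun i ↦ (i : ℕ)) (fun i hi ↦ ?_) Fin.val_injective.injOn
  obtain hi : f i = i := by simpa using hi
  simpa [hi] using hge i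

lemma pos_of_mem {f : Fin (m + 1) → ℕ} (hf : f ∈ dyckMaps (m + 1) e k) : 0 < k := by
  obtain ⟨-, hle, hlt, -, rfl⟩ := hf
  refine card_pos.2 ⟨Fin.last m, mem_filter.2 ⟨mem_univ _, ?_⟩⟩
  exact le_antisymm (Nat.lt_succ_iff.1 (hlt _)) (hle _)

/-- The encoding of the Dyck path obtained by inserting a peak after the first `e` up-steps of the
path encoded by `g`, which should start with at least `e` up-steps. -/
def insertPeak (e : ℕ) (g : Fin m → ℕ) : Fin (m + 1) → ℕ := Fin.cons e fun i ↦ g i + 1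

lemma insertPeak_injective (m e : ℕ) : (insertPeak (m := m) e).Injective :=
  fun _ _ h ↦ funext fun i ↦ Nat.succ_injective (congrFun h i.succ)

lemma insertPeak_mem_zero_iff {g : Fin m → ℕ} :
    insertPeak 0 g ∈ dyckMaps (m + 1) 0 (k + 1) ↔ g ∈ dyckMaps m 0 k := by
  simp [insertPeak, dyckMaps, Monotone, Fin.forall_fin_succ, Fin.card_filter_univ_succ]

lemma insertPeak_mem_succ_iff (he : e < m) {g : Fin m → ℕ} :
    insertPeak (e + 1) g ∈ dyckMaps (m + 1) (e + 1) k ↔ g ∈ dyckMaps m e k := by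
  simpa [insertPeak, dyckMaps, Monotone, Fin.forall_fin_succ, Fin.card_filter_univ_succ, he]
    using fun _ _ hge _ _ ↦ hge

lemma mem_range_insertPeak_iff {f : Fin (m + 1) → ℕ} (hf : ∀ i : Fin (m + 1), ↑i ≤ f i) :
    f ∈ Set.range (insertPeak e) ↔ f 0 = e := by
  refine ⟨fun ⟨g, hg⟩ ↦ hg ▸ rfl, fun h0 ↦ ⟨fun i ↦ f i.succ - 1, funext (Fin.cases h0.symm ?_)⟩⟩
  intro i
  have hi : 1 ≤ f i.succ := (Nat.succ_pos i).trans_le (hf i.succ)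
  exact Nat.sub_add_cancel hi

lemma diff_range_insertPeak (m e k : ℕ) :
    dyckMaps (m + 1) e k \ Set.range (insertPeak e) = dyckMaps (m + 1) (e + 1) k := by
  ext f
  constructor
  · rintro ⟨⟨hmono, hle, hlt, hge, hfix⟩, hpeak⟩
    rw [mem_range_insertPeak_iff hle] at hpeak
    have h0 : e < f 0 := (hge 0).lt_of_ne' hpeak
    exact ⟨hmono, hle, hlt, fun i ↦ h0.trans_le (hmono (Fin.zero_le i)), hfix⟩
  · rintro ⟨hmono, hle, hlt, hge, hfix⟩
    refine ⟨⟨hmono, hle, hlt, fun i ↦ (Nat.le_succ e).trans (hge i), hfix⟩, fun hpeak ↦ ?_⟩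
    exact (Nat.ne_of_gt (hge 0)) ((mem_range_insertPeak_iff hle).1 hpeak)

lemma ncard_eq_add_ncard_preimage_insertPeak (m e k : ℕ) :
    (dyckMaps (m + 1) e k).ncard = (dyckMaps (m + 1) (e + 1) k).ncard +
      (insertPeak e ⁻¹' dyckMaps (m + 1) e k).ncard := by
  rw [← Set.ncard_inter_add_ncard_sdiff_eq_ncard _ (Set.range (insertPeak e)),
    diff_range_insertPeak, ← Set.image_preimage_eq_inter_range,
    Set.ncard_image_of_injective _ (insertPeak_injective m e), add_comm]

lemma ncard_succ_zero_succ (m k : ℕ) :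
    (dyckMaps (m + 1) 0 (k + 1)).ncard =
      (dyckMaps (m + 1) 1 (k + 1)).ncard + (dyckMaps m 0 k).ncard := by
  rw [ncard_eq_add_ncard_preimage_insertPeak]
  congr 2
  exact Set.ext fun g ↦ insertPeak_mem_zero_iff

lemma ncard_succ_succ (he : e < m) (k : ℕ) :
    (dyckMaps (m + 1) (e + 1) k).ncard =
      (dyckMaps (m + 1) (e + 2) k).ncard + (dyckMaps m e k).ncard := by
  rw [ncard_eq_add_ncard_preimage_insertPeak]
  congr 2
  exact Set.ext fun g ↦ insertPeak_mem_succ_iff he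

lemma ncard_zero_zero_zero : (dyckMaps 0 0 0).ncard = 1 := by
  rw [Set.ncard_eq_one]
  refine ⟨Fin.elim0, Set.eq_singleton_iff_unique_mem.2 ⟨?_, fun f _ ↦ Subsingleton.elim f _⟩⟩
  simp [dyckMaps, Monotone]

lemma ncard_eq_zero_of_lt (hk : 0 < k) (h : m < k + e) : (dyckMaps m e k).ncard = 0 := by
  rw [Set.ncard_eq_zero, Set.eq_empty_iff_forall_notMem]
  intro f hf
  have := le_sub_of_mem hf
  omega

lemma ncard_succ_right_zero (m e : ℕ) : (dyckMaps (m + 1) e 0).ncard = 0 := by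
  rw [Set.ncard_eq_zero, Set.eq_empty_iff_forall_notMem]
  exact fun f hf ↦ (pos_of_mem hf).ne rfl

theorem ncard_add_choose {N : ℕ} (hk : k = 0 → e = 0) (hN : N + k + e = 2 * m + 1) :
    (dyckMaps (m + 1) e k).ncard + N.choose (m + 1) = N.choose m := by
  induction N generalizing m e k with
  | zero =>
    obtain rfl | hm := m.eq_zero_or_pos
    · obtain ⟨rfl, rfl⟩ : k = 1 ∧ e = 0 := by omega
      simp [ncard_succ_zero_succ, ncard_zero_zero_zero, ncard_eq_zero_of_lt]
    · rw [ncard_eq_zero_of_lt (by omega) (by omega), Nat.choose_zero_succ,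
        Nat.choose_eq_zero_of_lt hm]
  | succ N ih =>
    by_cases hlt : m + 1 < k + e
    · rw [ncard_eq_zero_of_lt (by omega) hlt, Nat.choose_eq_zero_of_lt (by omega),
        Nat.choose_eq_zero_of_lt (by omega)]
    obtain rfl | hk0 := k.eq_zero_or_pos
    · obtain rfl := hk rfl
      obtain rfl : N = 2 * m := by omega
      rw [ncard_succ_right_zero, zero_add, Nat.choose_symm_half]
    obtain ⟨k, rfl⟩ : ∃ l, k = l + 1 := Nat.exists_eq_add_one.2 hk0
    obtain ⟨m, rfl⟩ : ∃ l, m = l + 1 := Nat.exists_eq_add_one.2 (by omega)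
    have hfst : (dyckMaps (m + 2) (e + 1) (k + 1)).ncard + N.choose (m + 2) = N.choose (m + 1) :=
      ih (by omega) (by omega)
    rw [Nat.choose_succ_succ' N m, Nat.choose_succ_succ' N (m + 1)]
    cases e with
    | zero =>
      have hsnd : (dyckMaps (m + 1) 0 k).ncard + N.choose (m + 1) = N.choose m :=
        ih (fun _ ↦ rfl) (by omega)
      rw [ncard_succ_zero_succ]
      linarith
    | succ e =>
      have hsnd : (dyckMaps (m + 1) e (k + 1)).ncard + N.choose (m + 1) = N.choose m :=
        ih (by simp) (by omega)
      rw [ncard_succ_succ (by omega)]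
      linarith

end dyckMaps

theorem card_avoids321_blockNum_eq_ncard_dyckMaps (n k : ℕ) :
    Nat.card {π : Equiv.Perm (Fin n) // Avoids321 π ∧ blockNum π = k} =
      (dyckMaps n 0 k).ncard := by
  refine Set.BijOn.ncard_eq (s := {π | Avoids321 π ∧ blockNum π = k})
    (f := fun π i ↦ (partialSups π i : ℕ)) ⟨?_, ?_, ?_⟩
  · rintro π ⟨-, hk⟩
    refine ⟨fun i j hij ↦ (partialSups π).monotone hij,
      le_partialSups_of_injective π.injective, fun i ↦ (partialSups π i).isLt,
      fun _ ↦ Nat.zero_le _, ?_⟩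
    simpa [blockNum_eq_card_fixedPoints_partialSups, Fin.ext_iff] using hk
  · rintro π ⟨hπ, -⟩ σ ⟨hσ, -⟩ h
    exact hπ.eq_of_partialSups_eq hσ (OrderHom.ext _ _ (funext fun i ↦ Fin.ext (congrFun h i)))
  · rintro f ⟨hmono, hle, hlt, -, hfix⟩
    obtain ⟨π, hπ, hf⟩ := exists_avoids321_partialSups_eq
      (f := ⟨fun i ↦ ⟨f i, hlt i⟩, fun i j hij ↦ hmono hij⟩) hle
    have hval (i : Fin n) : (partialSups π i : ℕ) = f i := by
      rw [hf]
      rfl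
    refine ⟨π, ⟨hπ, ?_⟩, funext hval⟩
    simpa [blockNum_eq_card_fixedPoints_partialSups, hval, Fin.ext_iff] using hfix

/-- The number of 321-avoiding permutations in `S_n` with exactly `k` blocks is the
ballot number `C_{n,k}`. -/
theorem card_avoids321_blockNum (n k : ℕ) (h1 : 1 ≤ k) (h2 : k ≤ n) :
    Nat.card {π : Equiv.Perm (Fin n) // Avoids321 π ∧ blockNum π = k} =
      Nat.choose (2 * n - k - 1) (n - 1) - Nat.choose (2 * n - k - 1) n := by
  obtain ⟨m, rfl⟩ : ∃ m, n = m + 1 := Nat.exists_eq_add_one.2 (h1.trans h2)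
  have hcount := dyckMaps.ncard_add_choose (N := 2 * (m + 1) - k - 1) (m := m) (e := 0) (k := k)
    (fun _ ↦ rfl) (by omega)
  rw [card_avoids321_blockNum_eq_ncard_dyckMaps, Nat.add_sub_cancel]
  exact Nat.eq_sub_of_add_eq hcount
end

section
/- For each 1 ≤ k ≤ n, the sets {π ∈ S_n(321) : bl(π) = k} and {π ∈ S_n(321) : ldes(π⁻¹) = n−k} have the same cardinality. -/
/-!
A 321-avoiding permutation is determined by its running maximum, since the entries that are not
records must appear in increasing order; the running maxima that occur are the functions encoding
Dyck paths. If `h` is the running maximum of `π`, then the blocks of `π` are the fixed points of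
`h`, and `ldes π⁻¹ ≤ d` holds exactly if every `v ≥ d` is a value of `h`, because `v` is a record
of `π` if and only if all larger values stand to the right of it. Each of the two labels, the number
of fixed points of `h` and `n` minus the start of the final segment of values of `h`, makes the Dyck
paths a generating tree for the Catalan rule `(k) → (1)(2)⋯(k + 1)`, and two such trees admit a
label-preserving bijection level by level.
-/

/-- A generating tree for the Catalan succession rule `(k) → (1)(2)⋯(k + 1)`: a node `x` of
level `n` with label `k` has the children `child n x j` for `0 ≤ j ≤ k`, these have the labels
`j + 1`, and every node of level `n + 1` is a child of exactly one node of level `n`.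
For `j > k` the value `child n x j` is irrelevant. -/
structure IsCatalanTree {X : ℕ → Type*} (label : ∀ n, X n → ℕ)
    (child : ∀ n, X n → ℕ → X (n + 1)) : Prop where
  label_child {n : ℕ} {x : X n} {j : ℕ} (hj : j ≤ label n x) :
    label (n + 1) (child n x j) = j + 1
  eq_of_child_eq {n : ℕ} {x y : X n} {j : ℕ} (hx : j ≤ label n x) (hy : j ≤ label n y)
    (h : child n x j = child n y j) : x = y
  exists_child_eq {n : ℕ} (y : X (n + 1)) : ∃ x j, j ≤ label n x ∧ child n x j = y

namespace IsCatalanTree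

variable {X Y : ℕ → Type*} {s : ∀ n, X n → ℕ} {t : ∀ n, Y n → ℕ}
  {c : ∀ n, X n → ℕ → X (n + 1)} {d : ∀ n, Y n → ℕ → Y (n + 1)}

theorem bijective_child (T : IsCatalanTree s c) (n : ℕ) :
    Function.Bijective fun p : {p : X n × ℕ // p.2 ≤ s n p.1} => c n p.1.1 p.1.2 := by
  constructor
  · rintro ⟨⟨x, j⟩, hj⟩ ⟨⟨y, k⟩, hk⟩ hxy
    have hjk : j + 1 = k + 1 := by rw [← T.label_child hj, ← T.label_child hk]; exact congrArg _ hxy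
    obtain rfl : j = k := by omega
    obtain rfl := T.eq_of_child_eq hj hk hxy
    rfl
  · intro y
    obtain ⟨x, j, hj, rfl⟩ := T.exists_child_eq y
    exact ⟨⟨(x, j), hj⟩, rfl⟩

theorem exists_equiv (S : IsCatalanTree s c) (T : IsCatalanTree t d) (e₀ : X 0 ≃ Y 0)
    (he₀ : ∀ x, t 0 (e₀ x) = s 0 x) (n : ℕ) : ∃ e : X n ≃ Y n, ∀ x, t n (e x) = s n x := by
  induction n with
  | zero => exact ⟨e₀, he₀⟩
  | succ n ih =>
    obtain ⟨e, he⟩ := ih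
    let eX := Equiv.ofBijective _ (S.bijective_child n)
    let eY := Equiv.ofBijective _ (T.bijective_child n)
    let e' : {p : X n × ℕ // p.2 ≤ s n p.1} ≃ {p : Y n × ℕ // p.2 ≤ t n p.1} :=
      (e.prodCongr (Equiv.refl ℕ)).subtypeEquiv fun p => by simp [he]
    refine ⟨eX.symm.trans (e'.trans eY), fun x => ?_⟩
    obtain ⟨p, rfl⟩ := eX.surjective x
    calc t (n + 1) (eY (e' (eX.symm (eX p)))) = t (n + 1) (eY (e' p)) := by
          rw [eX.symm_apply_apply]
      _ = p.1.2 + 1 := T.label_child (e' p).2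
      _ = s (n + 1) (eX p) := (S.label_child p.2).symm

end IsCatalanTree

/-- A Dyck path of semilength `n`, encoded by the function `h` for which `h i + 1` is the number of
up steps before the `i`-th down step (`i < n`, counting from `0`), extended by the identity to all
of `ℕ`. -/
structure IsDyck (n : ℕ) (h : ℕ → ℕ) : Prop where
  monotone : Monotone h
  le_apply (i : ℕ) : i ≤ h i
  apply_lt {i : ℕ} (hi : i < n) : h i < n
  apply_eq {i : ℕ} (hi : n ≤ i) : h i = i

/-- The Dyck paths of semilength `n`, in the encoding `IsDyck`. -/
abbrev DyckPath (n : ℕ) : Type := {h : ℕ → ℕ // IsDyck n h}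

section RaiseLower

open Classical in
/-- Adds one to the values of `h` at the elements of `A` below `n`. -/
noncomputable def raise (n : ℕ) (A : Set ℕ) (h : ℕ → ℕ) (i : ℕ) : ℕ :=
  if i < n ∧ i ∈ A then h i + 1 else h i

open Classical in
/-- Subtracts one from the values of `h` at the elements of `A` below `n`; this undoes `raise n A`
when these values are positive. -/
noncomputable def lower (n : ℕ) (A : Set ℕ) (h : ℕ → ℕ) (i : ℕ) : ℕ :=
  if i < n ∧ i ∈ A then h i - 1 else h i

variable {n i : ℕ} {A B : Set ℕ} {g h : ℕ → ℕ}

theorem raise_of_mem (hi : i < n) (hA : i ∈ A) : raise n A h i = h i + 1 := if_pos ⟨hi, hA⟩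

theorem raise_of_notMem (hA : i ∉ A) : raise n A h i = h i := if_neg fun hi => hA hi.2

theorem raise_of_le (hi : n ≤ i) : raise n A h i = h i := if_neg fun hi' => hi'.1.not_ge hi

theorem lower_of_mem (hi : i < n) (hA : i ∈ A) : lower n A h i = h i - 1 := if_pos ⟨hi, hA⟩

theorem lower_of_notMem (hA : i ∉ A) : lower n A h i = h i := if_neg fun hi => hA hi.2

theorem lower_of_le (hi : n ≤ i) : lower n A h i = h i := if_neg fun hi' => hi'.1.not_ge hi

theorem raise_lower (hAB : ∀ i < n, i ∈ A ↔ i ∈ B) (hg : ∀ i ∈ A, i < n → 0 < g i) :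
    raise n B (lower n A g) = g := by
  funext i
  have := hAB i
  have := hg i
  grind [raise, lower]

theorem eq_of_raise_eq_raise (hAB : ∀ i < n, i ∈ A ↔ i ∈ B) (hgh : raise n A g = raise n B h) :
    g = h := by
  funext i
  have := hAB i
  have := congrFun hgh i
  grind [raise]

theorem isDyck_raise (H : IsDyck n h) (hA : IsUpperSet A) : IsDyck (n + 1) (raise n A h) where
  monotone i j hij := by
    have := H.monotone hij
    have := H.le_apply j
    have := @H.apply_lt i
    have := @hA i j hij
    grind [raise]
  le_apply i := by
    have := H.le_apply i
    grind [raise]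
  apply_lt {i} hi := by
    have := @H.apply_lt i
    have := @H.apply_eq i
    grind [raise]
  apply_eq {i} hi := by rw [raise_of_le (by omega), H.apply_eq (by omega)]

theorem isDyck_lower (H : IsDyck (n + 1) g) (hA : IsUpperSet A)
    (hlt : ∀ i ∉ A, ∀ j ∈ A, j < n → g i < g j)
    (hmem : ∀ i ∈ A, i < n → i < g i) (hnotMem : ∀ i ∉ A, i < n → g i < n) :
    IsDyck n (lower n A g) where
  monotone i j hij := by
    have := H.monotone hij
    have := H.le_apply j
    have := @H.apply_lt i
    have := @hA i j hij
    have := hlt i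
    have := hnotMem i
    grind [lower]
  le_apply i := by
    have := H.le_apply i
    have := hmem i
    grind [lower]
  apply_lt {i} hi := by
    have := @H.apply_lt i
    have := hnotMem i
    grind [lower]
  apply_eq {i} hi := by
    have := H.le_apply n
    have := @H.apply_lt n
    have := @H.apply_eq i
    rw [lower_of_le hi]
    grind

end RaiseLower

section FixedPoints

/-- The number of fixed points of `h` below `m`; for a Dyck path of semilength `m` it is the number
of its returns to the axis. -/
def fixedCount (h : ℕ → ℕ) (m : ℕ) : ℕ := Nat.count (fun i => h i = i) m

variable {n i j : ℕ} {g h : ℕ → ℕ}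

theorem fixedCount_succ (h : ℕ → ℕ) (m : ℕ) :
    fixedCount h (m + 1) = fixedCount h m + if h m = m then 1 else 0 :=
  Nat.count_succ _ _

theorem fixedCount_mono (h : ℕ → ℕ) : Monotone (fixedCount h) := Nat.count_monotone _

theorem isUpperSet_le_fixedCount (h : ℕ → ℕ) (j : ℕ) : IsUpperSet {i | j ≤ fixedCount h i} :=
  fun _ _ hab ha => ha.trans (fixedCount_mono h hab)

/-- The `j`-th child of `h` for the label `fixedCount`: the part of the path after its `j`-th return
is lifted, which merges it with the new pair of steps. -/
noncomputable def fixedChild (n : ℕ) (h : ℕ → ℕ) (j : ℕ) : ℕ → ℕ :=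
  raise n {i | j ≤ fixedCount h i} h

theorem fixedCount_fixedChild (hh : ∀ i, i ≤ h i) (hi : i ≤ n) :
    fixedCount (fixedChild n h j) i = min j (fixedCount h i) := by
  induction i with
  | zero => simp [fixedCount]
  | succ i ih =>
    have := hh i
    have := ih (by omega)
    simp only [fixedCount_succ]
    by_cases hj : j ≤ fixedCount h i
    · have : fixedChild n h j i = h i + 1 := raise_of_mem (by omega) hj
      grind
    · have : fixedChild n h j i = h i := raise_of_notMem hj
      grind

theorem fixedCount_succ_fixedChild (H : IsDyck n h) (hj : j ≤ fixedCount h n) :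
    fixedCount (fixedChild n h j) (n + 1) = j + 1 := by
  have hn : fixedChild n h j n = n := (raise_of_le le_rfl).trans (H.apply_eq le_rfl)
  rw [fixedCount_succ, if_pos hn, fixedCount_fixedChild H.le_apply le_rfl, min_eq_left hj]

theorem eq_of_fixedChild_eq (hg : ∀ i, i ≤ g i) (hh : ∀ i, i ≤ h i)
    (hgh : fixedChild n g j = fixedChild n h j) : g = h := by
  refine eq_of_raise_eq_raise (fun i hi => ?_) hgh
  have hmin : min j (fixedCount g i) = min j (fixedCount h i) := by
    rw [← fixedCount_fixedChild hg hi.le, hgh, fixedCount_fixedChild hh hi.le]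
  simp only [Set.mem_ofPred_eq]
  omega

/-- The parent of `g` for the label `fixedCount`: the part of the path between its last two returns
is lowered, which undoes `fixedChild`. -/
noncomputable def fixedParent (n : ℕ) (g : ℕ → ℕ) : ℕ → ℕ :=
  lower n {i | fixedCount g n ≤ fixedCount g i} g

theorem fixedParent_of_lt (hi : fixedCount g i < fixedCount g n) : fixedParent n g i = g i :=
  lower_of_notMem hi.not_ge

theorem ne_of_fixedCount_le (hi : i < n) (hc : fixedCount g n ≤ fixedCount g i) : g i ≠ i := by
  intro hgi
  have := fixedCount_mono g (Nat.succ_le_of_lt hi)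
  have := fixedCount_succ g i
  grind

theorem isDyck_fixedParent (H : IsDyck (n + 1) g) : IsDyck n (fixedParent n g) := by
  have exists_fixed {a b : ℕ} (hab : fixedCount g a < fixedCount g b) :
      ∃ x < b, g a ≤ x ∧ g x = x := by
    obtain ⟨x, ⟨hax, hxb⟩, hx⟩ := Nat.exists_of_count_lt_count hab
    exact ⟨x, hxb, hx ▸ H.monotone hax, hx⟩
  refine isDyck_lower H (isUpperSet_le_fixedCount g _) ?_ ?_ ?_
  · intro a ha b hb _
    obtain ⟨x, hxb, hax, -⟩ := exists_fixed ((not_le.1 ha).trans_le hb)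
    exact (hax.trans_lt hxb).trans_le (H.le_apply b)
  · intro i hi hin
    exact (H.le_apply i).lt_of_ne' (ne_of_fixedCount_le hin hi)
  · intro i hi _
    obtain ⟨x, hxn, hix, -⟩ := exists_fixed (not_le.1 hi)
    exact hix.trans_lt hxn

theorem fixedCount_le_fixedCount_fixedParent (hi : i ≤ n) :
    fixedCount g i ≤ fixedCount (fixedParent n g) i := by
  refine Nat.count_mono_left fun k hk hgk => ?_
  rw [fixedParent_of_lt (not_le.1 fun hc => ne_of_fixedCount_le (by omega) hc hgk), hgk]

theorem fixedCount_fixedParent_of_lt (hi : fixedCount g i < fixedCount g n) :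
    fixedCount (fixedParent n g) i = fixedCount g i := by
  refine le_antisymm (Nat.count_mono_left fun k hk hpk => ?_)
    (fixedCount_le_fixedCount_fixedParent (Nat.lt_of_count_lt_count hi).le)
  rwa [fixedParent_of_lt ((fixedCount_mono g hk.le).trans_lt hi)] at hpk

theorem fixedChild_fixedParent (H : IsDyck (n + 1) g) :
    fixedChild n (fixedParent n g) (fixedCount g n) = g := by
  refine raise_lower (fun i hi => ?_) fun i hi hin => ?_
  · refine ⟨fun hc => hc.trans (fixedCount_le_fixedCount_fixedParent hi.le), fun hc => ?_⟩
    by_contra hlt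
    rw [Set.mem_ofPred_eq, fixedCount_fixedParent_of_lt (not_le.1 hlt)] at hc
    exact hlt hc
  · have := ne_of_fixedCount_le hin hi
    have := H.le_apply i
    omega

theorem isCatalanTree_fixedCount :
    IsCatalanTree (X := DyckPath) (fun n h => fixedCount h.1 n)
      fun n h j => ⟨fixedChild n h.1 j, isDyck_raise h.2 (isUpperSet_le_fixedCount h.1 j)⟩ where
  label_child {_ h _} hj := fixedCount_succ_fixedChild h.2 hj
  eq_of_child_eq {_ g h _} _ _ hgh :=
    Subtype.ext (eq_of_fixedChild_eq g.2.le_apply h.2.le_apply (congrArg Subtype.val hgh))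
  exists_child_eq {n} g :=
    ⟨⟨fixedParent n g.1, isDyck_fixedParent g.2⟩, fixedCount g.1 n,
      fixedCount_le_fixedCount_fixedParent le_rfl, Subtype.ext (fixedChild_fixedParent g.2)⟩

end FixedPoints

section Tail

/-- The least `d` such that all `v ≥ d` are values of `h`. For a Dyck path of semilength `n`, the
values of `h` are the (indices of the) up steps which are followed by a down step, so that
`n - tailStart h` is the length of the longest final segment of up steps of this kind. -/
noncomputable def tailStart (h : ℕ → ℕ) : ℕ := sInf {d | Set.Ici d ⊆ Set.range h}

variable {n i j p : ℕ} {g h : ℕ → ℕ}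

theorem IsDyck.Ici_subset_range (H : IsDyck n h) : Set.Ici n ⊆ Set.range h :=
  fun v hv => ⟨v, H.apply_eq hv⟩

theorem IsDyck.tailStart_le_iff (H : IsDyck n h) {d : ℕ} :
    tailStart h ≤ d ↔ Set.Ici d ⊆ Set.range h :=
  ⟨fun hd => (Set.Ici_subset_Ici.2 hd).trans
    (Nat.sInf_mem (s := {d | Set.Ici d ⊆ Set.range h}) ⟨n, H.Ici_subset_range⟩),
    fun hd => Nat.sInf_le hd⟩

theorem IsDyck.tailStart_le (H : IsDyck n h) : tailStart h ≤ n :=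
  H.tailStart_le_iff.2 H.Ici_subset_range

theorem IsDyck.tailStart_eq_succ_iff (H : IsDyck n h) :
    tailStart h = p + 1 ↔ p ∉ Set.range h ∧ Set.Ici (p + 1) ⊆ Set.range h := by
  have hp : Set.Ici p ⊆ Set.range h ↔ p ∈ Set.range h ∧ Set.Ici (p + 1) ⊆ Set.range h := by
    rw [← Set.insert_subset_iff, ← Order.succ_eq_add_one, Order.Ici_succ, Set.Ioi_insert]
  have := H.tailStart_le_iff (d := p)
  have := H.tailStart_le_iff (d := p + 1)
  grind

theorem isUpperSet_le_apply (hh : Monotone h) (p : ℕ) : IsUpperSet {i | p ≤ h i} :=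
  fun _ _ hab ha => ha.trans (hh hab)

/-- The value below `n` omitted by the `j`-th child of `h` for the label `n - tailStart h`; for the
last child (`j = n - tailStart h`) there is none, and the junk value `n` is returned. -/
noncomputable def gapValue (n : ℕ) (h : ℕ → ℕ) (j : ℕ) : ℕ :=
  if j < n - tailStart h then n - 1 - j else n

/-- The `j`-th child of `h` for the label `n - tailStart h`: the values from `gapValue n h j` on are
raised, which makes this value the last one to be omitted. -/
noncomputable def tailChild (n : ℕ) (h : ℕ → ℕ) (j : ℕ) : ℕ → ℕ :=
  raise n {i | gapValue n h j ≤ h i} h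

theorem isDyck_tailChild (H : IsDyck n h) (j : ℕ) : IsDyck (n + 1) (tailChild n h j) :=
  isDyck_raise H (isUpperSet_le_apply H.monotone _)

theorem raise_le_apply_eq_self (H : IsDyck n h) : raise n {i | n ≤ h i} h = h := by
  funext i
  have := @H.apply_lt i
  grind [raise]

theorem tailChild_eq_self (H : IsDyck n h) (hj : n - tailStart h ≤ j) : tailChild n h j = h := by
  rw [tailChild, gapValue, if_neg hj.not_gt, raise_le_apply_eq_self H]

theorem tailStart_raise (H : IsDyck n h) (hp : tailStart h ≤ p) (hpn : p < n) :
    tailStart (raise n {i | p ≤ h i} h) = p + 1 := by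
  have H' := isDyck_raise H (isUpperSet_le_apply H.monotone p)
  refine H'.tailStart_eq_succ_iff.2 ⟨?_, fun v hv => ?_⟩
  · rintro ⟨i, hi⟩
    have := H.le_apply i
    grind [raise]
  · obtain hnv | hvn := Nat.lt_or_ge n v
    · exact ⟨v, H'.apply_eq hnv⟩
    · rw [Set.mem_Ici] at hv
      obtain ⟨i, hi⟩ := H.tailStart_le_iff.1 hp (show p ≤ v - 1 by omega)
      have := @H.apply_eq i
      refine ⟨i, (raise_of_mem ?_ ?_).trans ?_⟩ <;> grind

theorem sub_tailStart_tailChild (H : IsDyck n h) (hj : j ≤ n - tailStart h) :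
    n + 1 - tailStart (tailChild n h j) = j + 1 := by
  have := H.tailStart_le
  obtain hlt | rfl := hj.lt_or_eq
  · rw [tailChild, gapValue, if_pos hlt, tailStart_raise H (by omega) (by omega)]
    omega
  · rw [tailChild_eq_self H le_rfl]
    omega

theorem gapValue_lt_iff (H : IsDyck n h) :
    gapValue n h j < n ↔ ∃ i < n, tailChild n h j i = n := by
  constructor
  · intro hlt
    have h1 := H.le_apply (n - 1)
    have h2 := @H.apply_lt (n - 1)
    refine ⟨n - 1, by omega, (raise_of_mem (by omega) ?_).trans (by omega)⟩
    exact (Nat.le_sub_one_of_lt hlt).trans h1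
  · rintro ⟨i, hi, hin⟩
    by_contra hgap
    have hlt := H.apply_lt hi
    have : tailChild n h j i = h i := raise_of_notMem fun hle : gapValue n h j ≤ h i => by omega
    omega

theorem eq_of_tailChild_eq (G : IsDyck n g) (H : IsDyck n h)
    (hgh : tailChild n g j = tailChild n h j) : g = h := by
  have hlt : gapValue n g j < n ↔ gapValue n h j < n := by
    rw [gapValue_lt_iff G, gapValue_lt_iff H, hgh]
  have hgap : gapValue n g j = gapValue n h j := by grind [gapValue]
  rw [tailChild, tailChild, hgap] at hgh
  refine eq_of_raise_eq_raise (fun i _ => ?_) hgh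
  have := congrFun hgh i
  grind [raise]

theorem apply_eq_of_Ici_subset_range (hm : Monotone h) (hh : ∀ i, i ≤ h i) (hi : h i = i)
    (hr : Set.Ici i ⊆ Set.range h) {k : ℕ} (hik : i ≤ k) : h k = k := by
  induction k, hik using Nat.le_induction with
  | base => exact hi
  | succ k hik ih =>
    obtain ⟨l, hl⟩ := hr (show i ≤ k + 1 by omega)
    have hkl : k < l := lt_of_not_ge fun hlk => by have := hm hlk; omega
    exact le_antisymm ((hm hkl).trans hl.le) (hh (k + 1))

theorem apply_ne_of_tailStart_le (H : IsDyck (n + 1) g) (hg : ∃ k < n, g k = n)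
    (hi : tailStart g ≤ i) (hin : i < n) : g i ≠ i := by
  intro hgi
  obtain ⟨k, hkn, hk⟩ := hg
  have hfix : g (max i k) = max i k := apply_eq_of_Ici_subset_range H.monotone H.le_apply hgi
    (H.tailStart_le_iff.1 hi) (le_max_left i k)
  have hmono : g k ≤ g (max i k) := H.monotone (le_max_right i k)
  omega

theorem exists_tailStart_eq_succ (H : IsDyck (n + 1) g) (hg : ∃ k < n, g k = n) :
    ∃ p < n, tailStart g = p + 1 := by
  have hpos : tailStart g ≠ 0 := by
    intro h0
    obtain ⟨i, hi⟩ := H.tailStart_le_iff.1 h0.le (Set.mem_Ici.2 le_rfl)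
    have hg0 : g 0 = 0 := Nat.le_zero.1 ((H.monotone (Nat.zero_le i)).trans hi.le)
    exact apply_ne_of_tailStart_le H hg h0.le (by omega) hg0
  have hle : tailStart g ≤ n := H.tailStart_le_iff.2 fun v hv => by
    obtain rfl | hnv := (Set.mem_Ici.1 hv).eq_or_lt
    · obtain ⟨k, -, hk⟩ := hg
      exact ⟨k, hk⟩
    · exact ⟨v, H.apply_eq hnv⟩
  exact ⟨tailStart g - 1, by omega, by omega⟩

theorem isDyck_of_forall_ne (H : IsDyck (n + 1) g) (hg : ∀ k < n, g k ≠ n) : IsDyck n g where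
  monotone := H.monotone
  le_apply := H.le_apply
  apply_lt {i} hi := by
    have := @H.apply_lt i
    grind
  apply_eq {i} hi := by
    have := H.le_apply n
    have := @H.apply_lt n
    have := @H.apply_eq i
    grind

/-- The parent of `g` for the label `n - tailStart g`, provided that at least two down steps follow
the last up step of `g` (otherwise the parent is `g` without its last two steps): the values above
the last omitted value are lowered. -/
noncomputable def tailParent (n : ℕ) (g : ℕ → ℕ) : ℕ → ℕ :=
  lower n {i | tailStart g ≤ g i} g

theorem isDyck_tailParent (H : IsDyck (n + 1) g) (hg : ∃ k < n, g k = n) :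
    IsDyck n (tailParent n g) := by
  obtain ⟨p, hpn, hp⟩ := exists_tailStart_eq_succ H hg
  refine isDyck_lower H (isUpperSet_le_apply H.monotone _) ?_ ?_ ?_
  · exact fun a ha b hb _ => (not_le.1 ha).trans_le hb
  · intro i hi hin
    refine (H.le_apply i).lt_of_ne fun hgi => ?_
    rw [Set.mem_ofPred_eq, ← hgi] at hi
    exact apply_ne_of_tailStart_le H hg hi hin hgi.symm
  · intro i (hi : ¬ tailStart g ≤ g i) _
    omega

theorem Ici_subset_range_tailParent (H : IsDyck (n + 1) g) (hg : ∃ k < n, g k = n)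
    (hp : tailStart g = p + 1) : Set.Ici p ⊆ Set.range (tailParent n g) := by
  intro v (hv : p ≤ v)
  obtain hnv | hvn := le_or_gt n v
  · exact ⟨v, (isDyck_tailParent H hg).apply_eq hnv⟩
  obtain ⟨k, hkn, hk⟩ := hg
  obtain ⟨i, hin, hi⟩ : ∃ i < n, g i = v + 1 := by
    obtain ⟨i, hi⟩ := H.tailStart_le_iff.1 hp.le (Set.mem_Ici.2 (Nat.succ_le_succ hv))
    have := H.le_apply i
    by_cases hin : i < n
    · exact ⟨i, hin, hi⟩
    · exact ⟨k, hkn, by omega⟩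
  refine ⟨i, (lower_of_mem hin ?_).trans (by omega)⟩
  rw [Set.mem_ofPred_eq]
  omega

theorem raise_tailParent (H : IsDyck (n + 1) g) (hp : tailStart g = p + 1) :
    raise n {i | p ≤ tailParent n g i} (tailParent n g) = g := by
  refine raise_lower (fun i hi => ?_) fun i (hi : tailStart g ≤ g i) _ => by omega
  have hpg : g i ≠ p := fun hgi => (H.tailStart_eq_succ_iff.1 hp).1 ⟨i, hgi⟩
  simp only [Set.mem_ofPred_eq, hp]
  by_cases hle : tailStart g ≤ g i
  · have : tailParent n g i = g i - 1 := lower_of_mem hi hle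
    omega
  · have : tailParent n g i = g i := lower_of_notMem hle
    omega

theorem exists_tailChild_eq (H : IsDyck (n + 1) g) :
    ∃ h j, IsDyck n h ∧ j ≤ n - tailStart h ∧ tailChild n h j = g := by
  by_cases hg : ∃ k < n, g k = n
  · obtain ⟨p, hpn, hp⟩ := exists_tailStart_eq_succ H hg
    have Hpar := isDyck_tailParent H hg
    have hle : tailStart (tailParent n g) ≤ p :=
      Hpar.tailStart_le_iff.2 (Ici_subset_range_tailParent H hg hp)
    have hgap : gapValue n (tailParent n g) (n - 1 - p) = p := by grind [gapValue]
    refine ⟨tailParent n g, n - 1 - p, Hpar, by omega, ?_⟩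
    rw [tailChild, hgap, raise_tailParent H hp]
  · have G : IsDyck n g := isDyck_of_forall_ne H (by simpa using hg)
    exact ⟨g, n - tailStart g, G, le_rfl, tailChild_eq_self G le_rfl⟩

theorem isCatalanTree_sub_tailStart :
    IsCatalanTree (X := DyckPath) (fun n h => n - tailStart h.1)
      fun n h j => ⟨tailChild n h.1 j, isDyck_tailChild h.2 j⟩ where
  label_child {_ h _} hj := sub_tailStart_tailChild h.2 hj
  eq_of_child_eq {_ g h _} _ _ hgh :=
    Subtype.ext (eq_of_tailChild_eq g.2 h.2 (congrArg Subtype.val hgh))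
  exists_child_eq {_} g := by
    obtain ⟨h, j, H, hj, hg⟩ := exists_tailChild_eq g.2
    exact ⟨⟨h, H⟩, j, hj, Subtype.ext hg⟩

end Tail

section GreedyFill

/-- The candidate for the 321-avoiding sequence with running maxima `h`: the strict increases of `h`
are its records, and every other entry is the least value not used before. -/
noncomputable def greedyFill (h : ℕ → ℕ) (i : ℕ) : ℕ :=
  if ∀ j < i, h j < h i then h i else sInf {v | ∀ j, (_ : j < i) → greedyFill h j ≠ v}
termination_by i

variable {i j : ℕ} {f h : ℕ → ℕ}

theorem greedyFill_of_forall_lt (hi : ∀ j < i, h j < h i) : greedyFill h i = h i := by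
  rw [greedyFill, if_pos hi]

theorem greedyFill_of_not_forall_lt (hi : ¬ ∀ j < i, h j < h i) :
    greedyFill h i = sInf {v | ∀ j < i, greedyFill h j ≠ v} := by
  rw [greedyFill, if_neg hi]

theorem exists_le_forall_ne (f : ℕ → ℕ) (i : ℕ) : ∃ v ≤ i, ∀ j < i, f j ≠ v := by
  by_contra! hc
  have hsub : Finset.range (i + 1) ⊆ (Finset.range i).image f := fun v hv => by
    obtain ⟨j, hj, hjv⟩ := hc v (Finset.mem_range_succ_iff.1 hv)
    exact Finset.mem_image.2 ⟨j, Finset.mem_range.2 hj, hjv⟩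
  have := (Finset.card_le_card hsub).trans Finset.card_image_le
  simp at this

theorem greedyFill_le (hh : ∀ i, i ≤ h i) (i : ℕ) : greedyFill h i ≤ h i := by
  by_cases hi : ∀ j < i, h j < h i
  · exact (greedyFill_of_forall_lt hi).le
  · obtain ⟨v, hvi, hv⟩ := exists_le_forall_ne (greedyFill h) i
    rw [greedyFill_of_not_forall_lt hi]
    exact ((Nat.sInf_le (s := {v | ∀ j < i, greedyFill h j ≠ v}) hv).trans hvi).trans (hh i)

theorem greedyFill_injective (hh : ∀ i, i ≤ h i) : Function.Injective (greedyFill h) := by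
  refine .of_lt_imp_ne fun j i hji => ?_
  by_cases hi : ∀ j < i, h j < h i
  · rw [greedyFill_of_forall_lt hi]
    exact ((greedyFill_le hh j).trans_lt (hi j hji)).ne
  · obtain ⟨v, -, hv⟩ := exists_le_forall_ne (greedyFill h) i
    rw [greedyFill_of_not_forall_lt hi]
    exact Nat.sInf_mem (s := {v | ∀ j < i, greedyFill h j ≠ v}) ⟨v, hv⟩ j hji

theorem not_greedyFill_lt_and_lt (hh : ∀ i, i ≤ h i) {i j k : ℕ} (hij : i < j) (hjk : j < k) :
    ¬ (greedyFill h k < greedyFill h j ∧ greedyFill h j < greedyFill h i) := by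
  rintro ⟨hkj, hji⟩
  by_cases hj : ∀ l < j, h l < h j
  · rw [greedyFill_of_forall_lt hj] at hji
    exact (hji.trans_le (greedyFill_le hh i)).not_gt (hj i hij)
  · rw [greedyFill_of_not_forall_lt hj] at hkj
    exact hkj.not_ge (Nat.sInf_le fun l hl => (greedyFill_injective hh).ne (hl.trans hjk).ne)

theorem partialSups_greedyFill (hm : Monotone h) (hh : ∀ i, i ≤ h i) :
    ⇑(partialSups (greedyFill h)) = h := by
  funext i
  refine le_antisymm (partialSups_le _ _ _ fun j hj => (greedyFill_le hh j).trans (hm hj)) ?_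
  have hex : ∃ j, h j = h i := ⟨i, rfl⟩
  have hrec : ∀ j < Nat.find hex, h j < h (Nat.find hex) := fun j hj =>
    (hm hj.le).lt_of_ne ((Nat.find_spec hex).symm ▸ Nat.find_min hex hj)
  calc h i = greedyFill h (Nat.find hex) := by rw [greedyFill_of_forall_lt hrec, Nat.find_spec hex]
    _ ≤ partialSups (greedyFill h) i := le_partialSups_of_le _ (Nat.find_min' hex rfl)

theorem eq_sInf_forall_ne (hf : Function.Bijective f)
    (hav : ∀ i j k, i < j → j < k → ¬ (f k < f j ∧ f j < f i)) (hji : j < i) (hlt : f i < f j) :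
    f i = sInf {v | ∀ j < i, f j ≠ v} := by
  have hi : f i ∈ {v | ∀ j < i, f j ≠ v} := fun j hj => hf.injective.ne hj.ne
  refine le_antisymm (not_lt.1 fun hc => ?_) (Nat.sInf_le hi)
  obtain ⟨k, hk⟩ := hf.surjective (sInf {v | ∀ j < i, f j ≠ v})
  have hik : i ≤ k := not_lt.1 fun hki => Nat.sInf_mem ⟨f i, hi⟩ k hki hk
  rw [← hk] at hc
  exact hav j i k hji (hik.lt_of_ne (by rintro rfl; exact hc.false)) ⟨hc, hlt⟩

theorem greedyFill_partialSups (hf : Function.Bijective f)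
    (hav : ∀ i j k, i < j → j < k → ¬ (f k < f j ∧ f j < f i)) :
    greedyFill (partialSups f) = f := by
  funext i
  induction i using Nat.strong_induction_on with | _ i ih
  by_cases hi : ∀ j < i, partialSups f j < partialSups f i
  · rw [greedyFill_of_forall_lt hi]
    obtain ⟨j, hji, hj⟩ := exists_partialSups_eq f i
    obtain hlt | rfl := hji.lt_or_eq
    · exact absurd (hi j hlt) (hj.trans_le (le_partialSups f j)).not_gt
    · exact hj
  · have hset : {v | ∀ j < i, greedyFill (partialSups f) j ≠ v} = {v | ∀ j < i, f j ≠ v} := by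
      ext v
      exact forall₂_congr fun j hj => by rw [ih j hj]
    rw [greedyFill_of_not_forall_lt hi, hset]
    push Not at hi
    obtain ⟨l, hli, hle⟩ := hi
    obtain ⟨j, hjl, hj⟩ := exists_partialSups_eq f l
    have hji : j < i := hjl.trans_lt hli
    have hlt : f i < f j := (((le_partialSups f i).trans hle).trans hj.le).lt_of_ne
      (hf.injective.ne hji.ne')
    exact (eq_sInf_forall_ne hf hav hji hlt).symm

end GreedyFill

section RunningMaximum

theorem mem_range_partialSups_iff {ι α : Type*} [LinearOrder ι] [LocallyFiniteOrderBot ι]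
    [LinearOrder α] (σ : ι ≃ α) {v : α} :
    v ∈ Set.range (partialSups σ) ↔ ∀ w, v < w → σ.symm v < σ.symm w := by
  constructor
  · rintro ⟨i, hi⟩ w hvw
    obtain ⟨j, hji, hj⟩ := exists_partialSups_eq σ i
    have hjv : σ.symm v = j := by rw [← hi, hj, σ.symm_apply_apply]
    have hiw : i < σ.symm w := by
      refine lt_of_not_ge fun hwi => (hvw.trans_le ?_).false
      simpa [hi] using le_partialSups_of_le σ hwi
    exact (hjv.trans_le hji).trans_lt hiw
  · intro hv
    refine ⟨σ.symm v, le_antisymm (partialSups_le _ _ _ fun j hj => ?_) ?_⟩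
    · refine le_of_not_gt fun hvj => (hv _ hvj).not_ge ?_
      rwa [σ.symm_apply_apply]
    · simpa using le_partialSups σ (σ.symm v)

theorem strictMonoOn_symm_Ici_iff {ι α : Type*} [LinearOrder ι] [LocallyFiniteOrderBot ι]
    [LinearOrder α] (σ : ι ≃ α) {d : α} :
    StrictMonoOn σ.symm (Set.Ici d) ↔ Set.Ici d ⊆ Set.range (partialSups σ) :=
  ⟨fun h _ hv => (mem_range_partialSups_iff σ).2 fun _ hvw => h hv (hv.trans hvw.le) hvw,
    fun h _ hv _ _ hvw => (mem_range_partialSups_iff σ).1 (h hv) _ hvw⟩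

theorem le_partialSups_of_injective_s13 {f : ℕ → ℕ} (hf : Function.Injective f) (i : ℕ) :
    i ≤ partialSups f i := by
  have hmaps : Set.MapsTo f (Finset.range (i + 1)) (Finset.range (partialSups f i + 1)) :=
    fun j hj => by
      have := le_partialSups_of_le f (Finset.mem_range_succ_iff.1 hj)
      simpa [Nat.lt_succ_iff] using this
  simpa using Finset.card_le_card_of_injOn f hmaps hf.injOn

end RunningMaximum

section NatExtend

variable {n : ℕ}

/-- The extension of a permutation of `Fin n` to `ℕ` by the identity. -/
def natExtend (π : Equiv.Perm (Fin n)) : Equiv.Perm ℕ := π.extendDomain Fin.equivSubtype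

theorem natExtend_val (π : Equiv.Perm (Fin n)) (i : Fin n) : natExtend π i = π i :=
  π.extendDomain_apply_image Fin.equivSubtype i

theorem natExtend_of_le (π : Equiv.Perm (Fin n)) {i : ℕ} (hi : n ≤ i) : natExtend π i = i :=
  π.extendDomain_apply_not_subtype Fin.equivSubtype hi.not_gt

theorem natExtend_lt (π : Equiv.Perm (Fin n)) {i : ℕ} (hi : i < n) : natExtend π i < n :=
  natExtend_val π ⟨i, hi⟩ ▸ (π ⟨i, hi⟩).isLt

theorem natExtend_inv (π : Equiv.Perm (Fin n)) : natExtend π⁻¹ = (natExtend π)⁻¹ :=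
  (Equiv.Perm.extendDomain_inv π Fin.equivSubtype).symm

theorem natExtend_injective : Function.Injective (natExtend (n := n)) := fun π σ h => by
  ext i
  rw [← natExtend_val, h, natExtend_val]

theorem avoids321_iff_natExtend (π : Equiv.Perm (Fin n)) :
    Avoids321 π ↔ ∀ i j k, i < j → j < k →
      ¬ (natExtend π k < natExtend π j ∧ natExtend π j < natExtend π i) := by
  constructor
  · rintro h i j k hij hjk ⟨hkj, hji⟩
    have hk : k < n := by
      by_contra! hnk
      have := natExtend_of_le π hnk
      have := @natExtend_lt n π i
      have := @natExtend_of_le n π i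
      grind
    refine h ⟨i, by omega⟩ ⟨j, by omega⟩ ⟨k, hk⟩ hij hjk ?_
    simpa only [Fin.lt_def, ← natExtend_val] using ⟨hkj, hji⟩
  · intro h i j k hij hjk
    simpa only [Fin.lt_def, natExtend_val] using h i j k hij hjk

theorem isDyck_partialSups_natExtend (π : Equiv.Perm (Fin n)) :
    IsDyck n (partialSups (natExtend π)) where
  monotone := (partialSups (natExtend π)).monotone
  le_apply := le_partialSups_of_injective_s13 (natExtend π).injective
  apply_lt {i} hi := by
    obtain ⟨j, hji, hj⟩ := exists_partialSups_eq (natExtend π) i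
    exact hj.trans_lt (natExtend_lt π (hji.trans_lt hi))
  apply_eq {i} hi := by
    refine le_antisymm (partialSups_le _ _ _ fun j hj => ?_)
      (le_partialSups_of_injective_s13 (natExtend π).injective i)
    obtain hjn | hnj := lt_or_ge j n
    · exact (natExtend_lt π hjn).le.trans hi
    · exact (natExtend_of_le π hnj).trans_le hj

theorem IsDyck.exists_perm {h : ℕ → ℕ} (H : IsDyck n h) :
    ∃ π : Equiv.Perm (Fin n), ⇑(natExtend π) = greedyFill h := by
  have hlt (i : Fin n) : greedyFill h i < n :=
    (greedyFill_le H.le_apply i).trans_lt (H.apply_lt i.2)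
  have hinj : Function.Injective fun i : Fin n => (⟨greedyFill h i, hlt i⟩ : Fin n) :=
    fun i j hij => Fin.ext (greedyFill_injective H.le_apply (congrArg Fin.val hij))
  refine ⟨Equiv.ofBijective _ (Finite.injective_iff_bijective.1 hinj), funext fun i => ?_⟩
  obtain hin | hni := lt_or_ge i n
  · exact natExtend_val _ ⟨i, hin⟩
  · have hrec : ∀ j < i, h j < h i := fun j hj => by
      have := @H.apply_lt j
      have := @H.apply_eq j
      have := H.apply_eq hni
      grind
    rw [natExtend_of_le _ hni, greedyFill_of_forall_lt hrec, H.apply_eq hni]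

theorem bijective_partialSups_natExtend (n : ℕ) :
    Function.Bijective fun π : {π : Equiv.Perm (Fin n) // Avoids321 π} =>
      (⟨partialSups (natExtend π.1), isDyck_partialSups_natExtend π.1⟩ : DyckPath n) := by
  constructor
  · rintro ⟨π, hπ⟩ ⟨σ, hσ⟩ hπσ
    have hsup : ⇑(partialSups (natExtend π)) = partialSups (natExtend σ) :=
      congrArg Subtype.val hπσ
    refine Subtype.ext (natExtend_injective (DFunLike.coe_injective ?_))
    rw [← greedyFill_partialSups (natExtend π).bijective ((avoids321_iff_natExtend π).1 hπ), hsup,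
      greedyFill_partialSups (natExtend σ).bijective ((avoids321_iff_natExtend σ).1 hσ)]
  · rintro ⟨h, H⟩
    obtain ⟨π, hπ⟩ := H.exists_perm
    have hav : Avoids321 π := (avoids321_iff_natExtend π).2 fun i j k hij hjk => by
      rw [hπ]
      exact not_greedyFill_lt_and_lt H.le_apply hij hjk
    refine ⟨⟨π, hav⟩, Subtype.ext ?_⟩
    change ⇑(partialSups (natExtend π)) = h
    rw [hπ, partialSups_greedyFill H.monotone H.le_apply]

theorem partialSups_natExtend_eq_self_iff (π : Equiv.Perm (Fin n)) (i : Fin n) :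
    partialSups (natExtend π) i = i ↔ ∀ j ≤ i, π j ≤ i := by
  rw [← ((isDyck_partialSups_natExtend π).le_apply i).ge_iff_eq', partialSups_le_iff]
  refine ⟨fun h j hj => ?_, fun h j hj => ?_⟩
  · simpa only [Fin.le_def, ← natExtend_val] using h j hj
  · simpa only [Fin.le_def, ← natExtend_val] using h ⟨j, hj.trans_lt i.2⟩ hj

theorem blockNum_eq_fixedCount (π : Equiv.Perm (Fin n)) :
    blockNum π = fixedCount (partialSups (natExtend π)) n := by
  simp only [blockNum, fixedCount, ← partialSups_natExtend_eq_self_iff]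
  rw [Nat.count_eq_card_filter_range, ← Finset.card_map Fin.valEmbedding]
  congr 1
  ext i
  simp [Fin.exists_iff, and_comm]

theorem succ_mem_desSet_iff (π : Equiv.Perm (Fin n)) (i : ℕ) :
    i + 1 ∈ DesSet π ↔ natExtend π (i + 1) < natExtend π i := by
  simp only [DesSet, Finset.mem_image, Finset.mem_filter, Finset.mem_univ, true_and,
    add_left_inj]
  constructor
  · rintro ⟨i, ⟨hi, hlt⟩, rfl⟩
    rwa [Fin.lt_def, ← natExtend_val, ← natExtend_val] at hlt
  · intro hlt
    have hi : i + 1 < n := by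
      by_contra! hni
      have := natExtend_of_le π hni
      have := @natExtend_lt n π i
      have := @natExtend_of_le n π i
      grind
    refine ⟨⟨i, by omega⟩, ⟨hi, ?_⟩, rfl⟩
    rwa [Fin.lt_def, ← natExtend_val, ← natExtend_val]

theorem ldes_le_iff (π : Equiv.Perm (Fin n)) (d : ℕ) :
    ldes π ≤ d ↔ StrictMonoOn (natExtend π) (Set.Ici d) := by
  rw [ldes, Finset.sup_le_iff]
  constructor
  · refine fun h => strictMonoOn_of_lt_add_one Set.ordConnected_Ici fun i _ hi _ => ?_
    refine lt_of_le_of_ne (not_lt.1 fun hlt => ?_) ((natExtend π).injective.ne (by omega))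
    exact (Nat.lt_of_succ_le (h _ ((succ_mem_desSet_iff π i).2 hlt))).not_ge hi
  · intro h b hb
    obtain ⟨i, -, rfl⟩ := Finset.mem_image.1 hb
    refine Nat.succ_le_of_lt (not_le.1 fun hdi => ?_)
    have hlt : natExtend π i < natExtend π (i + 1) := h hdi (hdi.trans i.val.le_succ) (by omega)
    exact ((succ_mem_desSet_iff π i).1 hb).not_gt hlt

theorem ldes_inv_eq_tailStart (π : Equiv.Perm (Fin n)) :
    ldes π⁻¹ = tailStart (partialSups (natExtend π)) :=
  eq_of_forall_ge_iff fun d => by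
    rw [ldes_le_iff, natExtend_inv, Equiv.Perm.inv_def, strictMonoOn_symm_Ici_iff,
      (isDyck_partialSups_natExtend π).tailStart_le_iff]

end NatExtend

theorem exists_equiv_ldes_inv_add_blockNum (n : ℕ) :
    ∃ E : {π : Equiv.Perm (Fin n) // Avoids321 π} ≃ {π : Equiv.Perm (Fin n) // Avoids321 π},
      ∀ π, ldes (E π).1⁻¹ + blockNum π.1 = n := by
  obtain ⟨e, he⟩ := isCatalanTree_fixedCount.exists_equiv isCatalanTree_sub_tailStart
    (Equiv.refl _) (fun _ => by simp [fixedCount]) n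
  let D := Equiv.ofBijective _ (bijective_partialSups_natExtend n)
  refine ⟨D.trans (e.trans D.symm), fun π => ?_⟩
  have hD (σ) : ldes σ.1⁻¹ = tailStart (D σ).1 := ldes_inv_eq_tailStart σ.1
  have hle : tailStart (e (D π)).1 ≤ n := (e (D π)).2.tailStart_le
  have hcount : n - tailStart (e (D π)).1 = blockNum π.1 :=
    (he (D π)).trans (blockNum_eq_fixedCount π.1).symm
  rw [hD, Equiv.trans_apply, Equiv.trans_apply, D.apply_symm_apply]
  omega

/-- The 321-avoiding permutations with `k` blocks are equinumerous with the
321-avoiding permutations whose inverse has last descent `n - k`. -/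
theorem card_blockNum_eq_card_ldes_inv (n k : ℕ) (h1 : 1 ≤ k) (h2 : k ≤ n) :
    Nat.card {π : Equiv.Perm (Fin n) // Avoids321 π ∧ blockNum π = k} =
      Nat.card {π : Equiv.Perm (Fin n) // Avoids321 π ∧ ldes π⁻¹ = n - k} := by
  obtain ⟨E, hE⟩ := exists_equiv_ldes_inv_add_blockNum n
  have hEk (π) : blockNum π.1 = k ↔ ldes (E π).1⁻¹ = n - k := by
    have := hE π
    omega
  exact Nat.card_congr ((Equiv.subtypeSubtypeEquivSubtypeInter _ _).symm.trans
    ((E.subtypeEquiv hEk).trans (Equiv.subtypeSubtypeEquivSubtypeInter _ _)))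
end

section
/- For every n ≥ 1 there exists a bijection f from S_n(321) to itself such that for every π ∈ S_n(321): (1) Ltr(f(π)) = Ltr(π), and (2) n − ldes(f(π)⁻¹) = bl(π). Consequently, the joint distribution of (Ltr(π), bl(π)) over S_n(321) equals the joint distribution of (Ltr(π), n − ldes(π⁻¹)). -/
/-!
A `321`-avoiding permutation is determined by the positions and the values of its left-to-right
maxima. Read as the up-steps and the down-steps of a ballot path, they turn the block number into
the number of returns of the path to height `0`. The descents of the inverse are the places where a
value that is not a left-to-right maximum is followed by one that is, so `n - ldes π⁻¹` becomes the
length of the final run of down-steps. It remains to see that, for fixed up-steps, these two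
statistics are equidistributed over the sets of down-steps. Removing the last time step gives a
recursion for each of them, over all final heights, and the two recursions agree because of an
exchange identity between final heights `h` and `h + 1`.
-/

section Ballot

open Finset

variable {A B : Finset ℕ} {n h d : ℕ}

/-- The sets of down-steps of ballot paths with prescribed up-steps. At time `k < n` the path takes
an up-step if `k ∈ A` and then a down-step if `k ∈ B`; it has to be at positive height between the
two, and to end at height `h`. -/
def ballotSets (A : Finset ℕ) (n h : ℕ) : Finset (Finset ℕ) :=
  {B ∈ (range n).powerset | Nat.count (· ∈ A) n = Nat.count (· ∈ B) n + h ∧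
    ∀ k < n, Nat.count (· ∈ B) k < Nat.count (· ∈ A) (k + 1)}

/-- The number of times `1, …, n` at which the path with up-steps `A` and down-steps `B` is at
height `0`. -/
def numReturns (A : Finset ℕ) (n : ℕ) (B : Finset ℕ) : ℕ :=
  #{k ∈ range n | Nat.count (· ∈ B) (k + 1) = Nat.count (· ∈ A) (k + 1)}

/-- The length of the longest run of consecutive elements of `B` ending in `n - 1`. The supremum is
one more than the largest gap of `B` below `n`, and `0` if there is no gap. -/
def finalRun (n : ℕ) (B : Finset ℕ) : ℕ := n - (range n \ B).sup Nat.succ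

lemma count_mem_insert_of_le {k : ℕ} (hk : k ≤ n) :
    Nat.count (· ∈ insert n B) k = Nat.count (· ∈ B) k := by
  simp only [Nat.count_eq_card_filter_range]
  congr 1
  exact filter_congr fun x hx ↦ by
    rw [mem_insert, or_iff_right ((mem_range.1 hx).trans_le hk).ne]

lemma count_mem_insert_self_succ :
    Nat.count (· ∈ insert n B) (n + 1) = Nat.count (· ∈ B) n + 1 := by
  rw [Nat.count_succ, count_mem_insert_of_le le_rfl, if_pos (mem_insert_self n B)]

-- `d` is `0` if `n ∈ A` and `1` otherwise; the additive form lets the recursions below treat the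
-- two cases at once, without subtraction.
lemma exists_count_mem_succ_add_eq (A : Finset ℕ) (n : ℕ) :
    ∃ d, Nat.count (· ∈ A) (n + 1) + d = Nat.count (· ∈ A) n + 1 := by
  rw [Nat.count_succ]
  split_ifs
  exacts [⟨0, rfl⟩, ⟨1, rfl⟩]

lemma mem_ballotSets_succ_succ
    (hd : Nat.count (· ∈ A) (n + 1) + d = Nat.count (· ∈ A) n + 1) (hB : B ⊆ range n) :
    B ∈ ballotSets A (n + 1) (h + 1) ↔ B ∈ ballotSets A n (h + d) := by
  have hn : n ∉ B := fun hn ↦ notMem_range_self (hB hn)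
  have hcount : Nat.count (· ∈ B) (n + 1) = Nat.count (· ∈ B) n := by simp [Nat.count_succ, hn]
  simp only [ballotSets, mem_filter, mem_powerset, hB, hB.trans (range_subset_range.2 n.le_succ),
    Nat.forall_lt_succ_right, hcount]
  grind

lemma mem_of_mem_ballotSets_succ_zero (hB : B ∈ ballotSets A (n + 1) 0) : n ∈ B := by
  obtain ⟨hend, hpos⟩ := (mem_filter.1 hB).2
  rw [← Nat.count_lt_count_succ_iff (p := (· ∈ B))]
  exact (hpos n n.lt_succ_self).trans_eq hend

lemma insert_mem_ballotSets_succ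
    (hd : Nat.count (· ∈ A) (n + 1) + d = Nat.count (· ∈ A) n + 1) (hB : B ⊆ range n) :
    insert n B ∈ ballotSets A (n + 1) h ↔ B ∈ ballotSets A n (h + d) := by
  have hsub : insert n B ⊆ range (n + 1) := by
    rw [range_add_one]
    exact insert_subset_insert n hB
  have hcount : ∀ k < n, Nat.count (· ∈ insert n B) k = Nat.count (· ∈ B) k :=
    fun k hk ↦ count_mem_insert_of_le hk.le
  simp only [ballotSets, mem_filter, mem_powerset, hB, hsub, Nat.forall_lt_succ_right,
    count_mem_insert_self_succ, count_mem_insert_of_le le_rfl]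
  grind

lemma notMem_of_mem_ballotSets (hB : B ∈ ballotSets A n h) : n ∉ B := fun hn ↦
  notMem_range_self (mem_powerset.1 (mem_filter.1 hB).1 hn)

lemma numReturns_succ (A B : Finset ℕ) (n : ℕ) :
    numReturns A (n + 1) B = numReturns A n B +
      if Nat.count (· ∈ B) (n + 1) = Nat.count (· ∈ A) (n + 1) then 1 else 0 := by
  simp only [numReturns, range_add_one, filter_insert]
  split_ifs
  · exact card_insert_of_notMem (by simp)
  · rfl

lemma numReturns_succ_of_mem_zero (hB : B ∈ ballotSets A (n + 1) 0) :
    numReturns A (n + 1) B = numReturns A n B + 1 := by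
  rw [numReturns_succ, if_pos (by simpa using (mem_filter.1 hB).2.1.symm)]

lemma numReturns_succ_of_mem_succ (hB : B ∈ ballotSets A (n + 1) (h + 1)) :
    numReturns A (n + 1) B = numReturns A n B := by
  rw [numReturns_succ, if_neg (by grind [ballotSets]), add_zero]

lemma numReturns_insert (A B : Finset ℕ) (n : ℕ) :
    numReturns A n (insert n B) = numReturns A n B := by
  refine congrArg card (filter_congr fun k hk ↦ ?_)
  rw [count_mem_insert_of_le (mem_range.1 hk)]

lemma finalRun_succ_of_notMem (hn : n ∉ B) : finalRun (n + 1) B = 0 :=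
  Nat.sub_eq_zero_of_le (le_sup (f := Nat.succ) (by simpa using hn))

lemma finalRun_succ_insert (B : Finset ℕ) (n : ℕ) :
    finalRun (n + 1) (insert n B) = finalRun n B + 1 := by
  have hgaps : range (n + 1) \ insert n B = range n \ B := by
    rw [range_add_one, insert_sdiff_insert, sdiff_insert_of_notMem notMem_range_self]
  have hle : (range n \ B).sup Nat.succ ≤ n :=
    Finset.sup_le fun k hk ↦ mem_range.1 (mem_sdiff.1 hk).1
  rw [finalRun, finalRun, hgaps, Nat.sub_add_comm hle]

section Sums

variable {M : Type*} [AddCommMonoid M]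

lemma sum_ballotSets_eq_sum_powerset (A : Finset ℕ) (n h : ℕ) (F : Finset ℕ → M) :
    ∑ B ∈ ballotSets A n h, F B =
      ∑ B ∈ (range n).powerset, if B ∈ ballotSets A n h then F B else 0 := by
  have hsub : ballotSets A n h ⊆ (range n).powerset := filter_subset _ _
  rw [sum_ite_mem, inter_eq_right.2 hsub]

lemma sum_ballotSets_succ_zero (hd : Nat.count (· ∈ A) (n + 1) + d = Nat.count (· ∈ A) n + 1)
    (F : Finset ℕ → M) :
    ∑ B ∈ ballotSets A (n + 1) 0, F B = ∑ B ∈ ballotSets A n d, F (insert n B) := by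
  have hvanish : ∑ B ∈ (range n).powerset, (if B ∈ ballotSets A (n + 1) 0 then F B else 0) = 0 :=
    sum_eq_zero fun B hB ↦ if_neg fun hmem ↦
      notMem_range_self (mem_powerset.1 hB (mem_of_mem_ballotSets_succ_zero hmem))
  simp only [sum_ballotSets_eq_sum_powerset A]
  rw [range_add_one, sum_powerset_insert notMem_range_self, hvanish, zero_add]
  refine sum_congr rfl fun B hB ↦ ?_
  simp only [insert_mem_ballotSets_succ hd (mem_powerset.1 hB), zero_add]

lemma sum_ballotSets_succ_succ (hd : Nat.count (· ∈ A) (n + 1) + d = Nat.count (· ∈ A) n + 1)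
    (F : Finset ℕ → M) :
    ∑ B ∈ ballotSets A (n + 1) (h + 1), F B =
      ∑ B ∈ ballotSets A n (h + d), F B + ∑ B ∈ ballotSets A n (h + d + 1), F (insert n B) := by
  simp only [sum_ballotSets_eq_sum_powerset A]
  rw [range_add_one, sum_powerset_insert notMem_range_self]
  congr 1 <;> refine sum_congr rfl fun B hB ↦ ?_
  · simp only [mem_ballotSets_succ_succ hd (mem_powerset.1 hB)]
  · simp only [insert_mem_ballotSets_succ hd (mem_powerset.1 hB), add_right_comm]

lemma sum_numReturns_succ_zero (hd : Nat.count (· ∈ A) (n + 1) + d = Nat.count (· ∈ A) n + 1)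
    (g : ℕ → M) :
    ∑ B ∈ ballotSets A (n + 1) 0, g (numReturns A (n + 1) B) =
      ∑ B ∈ ballotSets A n d, g (numReturns A n B + 1) := by
  rw [sum_congr rfl fun B hB ↦ congrArg g (numReturns_succ_of_mem_zero hB),
    sum_ballotSets_succ_zero hd]
  simp only [numReturns_insert]

lemma sum_numReturns_succ_succ (hd : Nat.count (· ∈ A) (n + 1) + d = Nat.count (· ∈ A) n + 1)
    (g : ℕ → M) :
    ∑ B ∈ ballotSets A (n + 1) (h + 1), g (numReturns A (n + 1) B) =
      ∑ B ∈ ballotSets A n (h + d), g (numReturns A n B) +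
        ∑ B ∈ ballotSets A n (h + d + 1), g (numReturns A n B) := by
  rw [sum_congr rfl fun B hB ↦ congrArg g (numReturns_succ_of_mem_succ hB),
    sum_ballotSets_succ_succ hd]
  simp only [numReturns_insert]

lemma sum_finalRun_succ_zero (hd : Nat.count (· ∈ A) (n + 1) + d = Nat.count (· ∈ A) n + 1)
    (g : ℕ → M) :
    ∑ B ∈ ballotSets A (n + 1) 0, g (finalRun (n + 1) B) =
      ∑ B ∈ ballotSets A n d, g (finalRun n B + 1) := by
  simp only [sum_ballotSets_succ_zero hd, finalRun_succ_insert]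

lemma sum_finalRun_succ_succ (hd : Nat.count (· ∈ A) (n + 1) + d = Nat.count (· ∈ A) n + 1)
    (g : ℕ → M) :
    ∑ B ∈ ballotSets A (n + 1) (h + 1), g (finalRun (n + 1) B) =
      ∑ _B ∈ ballotSets A n (h + d), g 0 +
        ∑ B ∈ ballotSets A n (h + d + 1), g (finalRun n B + 1) := by
  simp only [sum_ballotSets_succ_succ hd, finalRun_succ_insert]
  congr 1
  exact sum_congr rfl fun B hB ↦ by
    rw [finalRun_succ_of_notMem (notMem_of_mem_ballotSets hB)]

-- Bijectively: filling the largest gap of `B` lowers the final height from `h + 1` to `h`, and it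
-- matches the sets with final run `r` to those with final run greater than `r`.
lemma sum_finalRun_add_sum_finalRun (A : Finset ℕ) (n h : ℕ) (g : ℕ → M) :
    ∑ B ∈ ballotSets A n h, g (finalRun n B) + ∑ B ∈ ballotSets A n (h + 1), g (finalRun n B) =
      ∑ _B ∈ ballotSets A n h, g 0 + ∑ B ∈ ballotSets A n (h + 1), g (finalRun n B + 1) := by
  induction n generalizing h g with
  | zero =>
    have hempty : ballotSets A 0 (h + 1) = ∅ := by simp [ballotSets]
    simp [hempty, finalRun]
  | succ n ih =>
    obtain ⟨d, hd⟩ := exists_count_mem_succ_add_eq A n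
    cases h with
    | zero =>
      rw [sum_finalRun_succ_zero hd, sum_finalRun_succ_succ hd,
        sum_finalRun_succ_succ hd fun r ↦ g (r + 1), sum_ballotSets_succ_zero hd, zero_add,
        add_left_comm, ih d fun r ↦ g (r + 1)]
    | succ h =>
      rw [sum_finalRun_succ_succ hd, sum_finalRun_succ_succ hd,
        sum_finalRun_succ_succ hd fun r ↦ g (r + 1), sum_ballotSets_succ_succ hd,
        add_right_comm h 1 d, add_add_add_comm, ih (h + d + 1) fun r ↦ g (r + 1)]

theorem sum_numReturns_eq_sum_finalRun (A : Finset ℕ) (n h : ℕ) (g : ℕ → M) :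
    ∑ B ∈ ballotSets A n h, g (numReturns A n B) = ∑ B ∈ ballotSets A n h, g (finalRun n B) := by
  induction n generalizing h g with
  | zero => simp [numReturns, finalRun]
  | succ n ih =>
    obtain ⟨d, hd⟩ := exists_count_mem_succ_add_eq A n
    cases h with
    | zero => rw [sum_numReturns_succ_zero hd, sum_finalRun_succ_zero hd, ih d fun r ↦ g (r + 1)]
    | succ h =>
      rw [sum_numReturns_succ_succ hd, sum_finalRun_succ_succ hd, ih, ih,
        sum_finalRun_add_sum_finalRun]

end Sums

lemma exists_equiv_of_card_fiber_eq {α β : Type*} [DecidableEq β] {s : Finset α} {f g : α → β}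
    (hfg : ∀ b, #{a ∈ s | f a = b} = #{a ∈ s | g a = b}) :
    ∃ e : s ≃ s, ∀ a : s, g (e a) = f a := by
  have hcard (f : α → β) (b : β) : Fintype.card {a : s // f a = b} = #{a ∈ s | f a = b} := by
    rw [Fintype.card_subtype, univ_eq_attach, filter_attach fun a ↦ f a = b, card_map, card_attach]
  have hfiber (b : β) : Nonempty ({a : s // f a = b} ≃ {a : s // g a = b}) :=
    Fintype.card_eq.1 (by rw [hcard f, hcard g, hfg])
  exact ⟨Equiv.ofFiberEquiv fun b ↦ (hfiber b).some, Equiv.ofFiberEquiv_map fun b ↦ (hfiber b).some⟩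

theorem exists_equiv_finalRun_eq_numReturns (A : Finset ℕ) (n h : ℕ) :
    ∃ e : ballotSets A n h ≃ ballotSets A n h,
      ∀ B : ballotSets A n h, finalRun n (e B : Finset ℕ) = numReturns A n B :=
  exists_equiv_of_card_fiber_eq fun r ↦ by
    simpa only [card_filter] using
      sum_numReturns_eq_sum_finalRun A n h fun x ↦ if x = r then 1 else 0

end Ballot

section Permutations

open Finset Equiv

lemma exists_perm_strictMonoOn {α : Type*} [Finite α] [LinearOrder α] {S T : Finset α}
    (hST : #S = #T) : ∃ π : Perm α,
      StrictMonoOn π S ∧ StrictMonoOn π (S : Set α)ᶜ ∧ S.map π.toEmbedding = T := by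
  cases nonempty_fintype α
  have hSTc : #Tᶜ = #Sᶜ := by rw [card_compl, card_compl, hST]
  let eS := finSumEquivOfFinset hST rfl
  let eT := finSumEquivOfFinset rfl hSTc
  let π : Perm α := eS.symm.trans eT
  have hinl (i : Fin #T) : π (S.orderEmbOfFin hST i) = T.orderEmbOfFin rfl i :=
    congrArg eT (eS.symm_apply_apply (.inl i))
  have hinr (i : Fin #Sᶜ) : π (Sᶜ.orderEmbOfFin rfl i) = Tᶜ.orderEmbOfFin hSTc i :=
    congrArg eT (eS.symm_apply_apply (.inr i))
  refine ⟨π, ?_, ?_, eq_of_subset_of_card_le ?_ (by rw [card_map, hST])⟩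
  · rw [← S.range_orderEmbOfFin hST]
    rintro _ ⟨i, rfl⟩ _ ⟨j, rfl⟩ hij
    simpa only [hinl, OrderEmbedding.lt_iff_lt] using hij
  · rw [← coe_compl, ← Sᶜ.range_orderEmbOfFin rfl]
    rintro _ ⟨i, rfl⟩ _ ⟨j, rfl⟩ hij
    simpa only [hinr, OrderEmbedding.lt_iff_lt] using hij
  · rw [← S.map_orderEmbOfFin_univ hST, map_map]
    exact map_subset_iff_subset_preimage.2 fun i _ ↦ by simp [hinl]

lemma eqOn_of_strictMonoOn_of_image_eq {α β : Type*} [LinearOrder α] [WellFoundedLT α]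
    [PartialOrder β] {s : Set α} {f g : α → β} (hf : StrictMonoOn f s) (hg : StrictMonoOn g s)
    (hfg : f '' s = g '' s) : Set.EqOn f g s := by
  rw [← Set.domRestrict_eq_domRestrict_iff, ← StrictMono.range_inj hf.domRestrict hg.domRestrict,
    Set.range_domRestrict, Set.range_domRestrict, hfg]

lemma perm_eq_of_strictMonoOn {α : Type*} [LinearOrder α] [WellFoundedLT α] {π σ : Perm α}
    {s : Set α} (hπ : StrictMonoOn π s) (hπc : StrictMonoOn π sᶜ) (hσ : StrictMonoOn σ s)
    (hσc : StrictMonoOn σ sᶜ) (himage : π '' s = σ '' s) : π = σ := by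
  have himagec : π '' sᶜ = σ '' sᶜ := by
    rw [Set.image_compl_eq π.bijective, Set.image_compl_eq σ.bijective, himage]
  ext1 i
  by_cases hi : i ∈ s
  · exact eqOn_of_strictMonoOn_of_image_eq hπ hσ himage hi
  · exact eqOn_of_strictMonoOn_of_image_eq hπc hσc himagec hi

lemma count_mem_map {ι : Type*} (S : Finset ι) (f : ι ↪ ℕ) (k : ℕ) :
    Nat.count (· ∈ S.map f) k = #{i ∈ S | f i < k} := by
  rw [Nat.count_eq_card_filter_range, filter_mem_eq_inter, ← card_map f]
  refine congrArg card (ext fun x ↦ ?_)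
  simp only [mem_inter, mem_range, mem_map, mem_filter]
  exact ⟨fun ⟨hx, i, hi, hix⟩ ↦ ⟨i, ⟨hi, hix ▸ hx⟩, hix⟩,
    fun ⟨i, ⟨hi, hik⟩, hix⟩ ↦ ⟨hix ▸ hik, i, hi, hix⟩⟩

variable {n : ℕ}

lemma exists_le_le_apply (π : Perm (Fin n)) (i : Fin n) : ∃ j ≤ i, i ≤ π j := by
  by_contra! hlt
  have hcard := card_le_card_of_injOn (s := Iic i) (t := Iio i) π
    (fun j hj ↦ by simpa using hlt j (by simpa using hj)) π.injective.injOn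
  simp at hcard

lemma mem_ltrSet {π : Perm (Fin n)} {i : Fin n} : i ∈ LtrSet π ↔ ∀ j ≤ i, π j ≤ π i := by
  simp [LtrSet]

lemma strictMonoOn_ltrSet (π : Perm (Fin n)) : StrictMonoOn π (LtrSet π) := fun i _ _ hj hij ↦
  (mem_ltrSet.1 hj i hij.le).lt_of_ne (π.injective.ne hij.ne)

lemma exists_lt_apply_lt_of_notMem_ltrSet {π : Perm (Fin n)} {i : Fin n} (hi : i ∉ LtrSet π) :
    ∃ j < i, π i < π j := by
  simp only [mem_ltrSet, not_forall, not_le] at hi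
  obtain ⟨j, hji, hlt⟩ := hi
  exact ⟨j, hji.lt_of_ne fun h ↦ (h ▸ hlt).false, hlt⟩

lemma avoids321_iff_strictMonoOn {π : Perm (Fin n)} :
    Avoids321 π ↔ StrictMonoOn π (LtrSet π : Set (Fin n))ᶜ := by
  constructor
  · intro hπ i hi j _ hij
    obtain ⟨l, hli, hlt⟩ := exists_lt_apply_lt_of_notMem_ltrSet hi
    exact (π.injective.ne hij.ne).lt_of_le (not_lt.1 fun hji ↦ hπ l i j hli hij ⟨hji, hlt⟩)
  · rintro hπ i j k hij hjk ⟨hkj, hji⟩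
    have hj : j ∉ LtrSet π := fun hj ↦ (mem_ltrSet.1 hj i hij.le).not_gt hji
    have hk : k ∉ LtrSet π := fun hk ↦ (mem_ltrSet.1 hk j hjk.le).not_gt hkj
    exact (hπ hj hk hjk).not_gt hkj

lemma exists_mem_ltrSet_forall_le (π : Perm (Fin n)) (i : Fin n) :
    ∃ a ∈ LtrSet π, a ≤ i ∧ ∀ j ≤ i, π j ≤ π a := by
  obtain ⟨a, ha, hmax⟩ := exists_max_image (Iic i) π ⟨i, by simp⟩
  simp only [mem_Iic] at ha hmax
  exact ⟨a, mem_ltrSet.2 fun j hj ↦ hmax j (hj.trans ha), ha, hmax⟩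

lemma le_apply_of_mem_ltrSet {π : Perm (Fin n)} {i : Fin n} (hi : i ∈ LtrSet π) : i ≤ π i := by
  obtain ⟨j, hji, hij⟩ := exists_le_le_apply π i
  exact hij.trans (mem_ltrSet.1 hi j hji)

lemma ltrSet_eq_of_strictMonoOn {π : Perm (Fin n)} {S : Finset (Fin n)} (hS : StrictMonoOn π S)
    (hSc : StrictMonoOn π (S : Set (Fin n))ᶜ) (hcover : ∀ k, ∃ a ∈ S, a ≤ k ∧ k ≤ π a) :
    LtrSet π = S := by
  have le_apply {i : Fin n} (hi : i ∈ S) : i ≤ π i := by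
    by_contra! hlt
    obtain ⟨a, ha, hai, hia⟩ := hcover (π i)
    exact (hS ha hi (hai.trans_lt hlt)).not_ge hia
  have apply_le {i : Fin n} (hi : i ∉ S) : π i ≤ i := by
    obtain ⟨v, hvi, hiv⟩ := exists_le_le_apply π⁻¹ i
    obtain ⟨j, rfl⟩ := π.surjective v
    rw [Perm.inv_def, symm_apply_apply] at hiv
    have hj : j ∉ S := fun hj ↦ hi (hiv.antisymm ((le_apply hj).trans hvi) ▸ hj)
    exact (hSc.monotoneOn hi hj hiv).trans hvi
  ext i
  rw [mem_ltrSet]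
  refine ⟨fun hmax ↦ by_contra fun hi ↦ ?_, fun hi j hji ↦ ?_⟩
  · obtain ⟨a, ha, hai, hia⟩ := hcover i
    have hne : π i ≠ π a := π.injective.ne fun h ↦ hi (h ▸ ha)
    exact ((apply_le hi).trans hia |>.lt_of_ne hne).not_ge (hmax a hai)
  · by_cases hj : j ∈ S
    · exact hS.monotoneOn hj hi hji
    · exact (apply_le hj).trans (hji.trans (le_apply hi))

/-- The values of the left-to-right maxima of `π`, as `0`-based natural numbers. -/
def ltrValues (π : Perm (Fin n)) : Finset ℕ :=
  (LtrSet π).map (π.toEmbedding.trans Fin.valEmbedding)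

lemma mem_ltrValues_iff {π : Perm (Fin n)} {v : Fin n} :
    (v : ℕ) ∈ ltrValues π ↔ π⁻¹ v ∈ LtrSet π := by
  simp [ltrValues, Fin.val_inj, ← Perm.eq_inv_iff_eq]

lemma count_mem_map_val (S : Finset (Fin n)) (k : ℕ) :
    Nat.count (· ∈ S.map Fin.valEmbedding) k = #{i ∈ S | i.val < k} :=
  count_mem_map S Fin.valEmbedding k

lemma count_mem_ltrValues (π : Perm (Fin n)) (k : ℕ) :
    Nat.count (· ∈ ltrValues π) k = #{i ∈ LtrSet π | (π i).val < k} :=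
  count_mem_map _ _ k

lemma filter_apply_lt_subset (π : Perm (Fin n)) (k : ℕ) :
    {i ∈ LtrSet π | (π i).val < k} ⊆ {i ∈ LtrSet π | i.val < k} := fun i hi ↦ by
  rw [mem_filter] at hi ⊢
  exact ⟨hi.1, (Fin.le_def.1 (le_apply_of_mem_ltrSet hi.1)).trans_lt hi.2⟩

lemma ltrValues_mem_ballotSets (π : Perm (Fin n)) :
    ltrValues π ∈ ballotSets ((LtrSet π).map Fin.valEmbedding) n 0 := by
  simp only [ballotSets, mem_filter, mem_powerset, count_mem_map_val, count_mem_ltrValues]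
  refine ⟨?_, ?_, fun k hk ↦ card_lt_card ?_⟩
  · simp [ltrValues, subset_iff]
  · simp
  · obtain ⟨a, ha, hak, hmax⟩ := exists_mem_ltrSet_forall_le π ⟨k, hk⟩
    obtain ⟨j, hjk, hkj⟩ := exists_le_le_apply π ⟨k, hk⟩
    have hka : k ≤ π a := hkj.trans (hmax j hjk)
    refine (ssubset_iff_of_subset ?_).2 ⟨a, ?_, ?_⟩
    · exact (filter_apply_lt_subset π k).trans (monotone_filter_right _ fun i _ hi ↦ by grind)
    · exact mem_filter.2 ⟨ha, Nat.lt_succ_of_le hak⟩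
    · simp [hka]

lemma exists_mem_le_le_apply_of_mem_ballotSets {π : Perm (Fin n)} {S : Finset (Fin n)}
    (hS : S.map (π.toEmbedding.trans Fin.valEmbedding) ∈ ballotSets (S.map Fin.valEmbedding) n 0)
    (k : Fin n) : ∃ a ∈ S, a ≤ k ∧ k ≤ π a := by
  have hlt := (mem_filter.1 hS).2.2 k k.2
  rw [count_mem_map, count_mem_map_val] at hlt
  obtain ⟨a, ha, ha'⟩ := exists_mem_notMem_of_card_lt_card hlt
  rw [mem_filter] at ha ha'
  exact ⟨a, ha.1, Nat.le_of_lt_succ ha.2, not_lt.1 fun h ↦ ha' ⟨ha.1, h⟩⟩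

lemma exists_avoids321_of_mem_ballotSets {S : Finset (Fin n)} {B : Finset ℕ}
    (hB : B ∈ ballotSets (S.map Fin.valEmbedding) n 0) :
    ∃ π : Perm (Fin n), Avoids321 π ∧ LtrSet π = S ∧ ltrValues π = B := by
  obtain ⟨hrange, hcount, -⟩ := mem_filter.1 hB
  obtain ⟨T, rfl⟩ : ∃ T : Finset (Fin n), T.map Fin.valEmbedding = B := by
    rw [mem_powerset, ← Nat.Iio_eq_range, ← Fin.map_valEmbedding_univ, subset_map_iff] at hrange
    obtain ⟨T, -, rfl⟩ := hrange
    exact ⟨T, rfl⟩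
  obtain ⟨π, hS, hSc, rfl⟩ := exists_perm_strictMonoOn (S := S) (T := T) (by
    simpa only [count_mem_map_val, Fin.is_lt, filter_true, add_zero] using hcount)
  rw [map_map] at hB
  have hltr : LtrSet π = S :=
    ltrSet_eq_of_strictMonoOn hS hSc (exists_mem_le_le_apply_of_mem_ballotSets hB)
  subst hltr
  exact ⟨π, avoids321_iff_strictMonoOn.2 hSc, rfl, (map_map ..).symm⟩

lemma Avoids321.eq_of_ltrSet_eq_of_ltrValues_eq {π σ : Perm (Fin n)} (hπ : Avoids321 π)
    (hσ : Avoids321 σ) (hltr : LtrSet π = LtrSet σ) (hval : ltrValues π = ltrValues σ) :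
    π = σ := by
  have hσ' := avoids321_iff_strictMonoOn.1 hσ
  rw [← hltr] at hσ'
  refine perm_eq_of_strictMonoOn (strictMonoOn_ltrSet π) (avoids321_iff_strictMonoOn.1 hπ)
    (hltr ▸ strictMonoOn_ltrSet σ) hσ' ?_
  simp only [ltrValues, ← map_map, map_inj] at hval
  simpa [hltr] using congrArg (fun s : Finset (Fin n) ↦ (s : Set (Fin n))) hval

/-- The bijection between `321`-avoiding permutations and pairs of position and value sets of
left-to-right maxima. -/
noncomputable def avoids321Equiv (n : ℕ) : {π : Perm (Fin n) // Avoids321 π} ≃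
    Σ S : Finset (Fin n), ballotSets (S.map Fin.valEmbedding) n 0 :=
  ofBijective (fun π ↦ ⟨LtrSet π.1, ltrValues π.1, ltrValues_mem_ballotSets π.1⟩) <| by
    constructor
    · intro π σ h
      exact Subtype.ext <| π.2.eq_of_ltrSet_eq_of_ltrValues_eq σ.2 (congrArg Sigma.fst h)
        (congrArg (fun x ↦ x.2.1) h)
    · rintro ⟨S, B, hB⟩
      obtain ⟨π, hπ, rfl, rfl⟩ := exists_avoids321_of_mem_ballotSets hB
      exact ⟨⟨π, hπ⟩, rfl⟩

lemma forall_apply_le_iff_count_eq {π : Perm (Fin n)} {i : Fin n} :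
    (∀ j ≤ i, π j ≤ i) ↔ Nat.count (· ∈ ltrValues π) (i + 1) =
      Nat.count (· ∈ (LtrSet π).map Fin.valEmbedding) (i + 1) := by
  rw [count_mem_ltrValues, count_mem_map_val]
  constructor
  · intro hblock
    refine congrArg card ((filter_apply_lt_subset π _).antisymm fun j hj ↦ ?_)
    rw [mem_filter] at hj ⊢
    exact ⟨hj.1, Nat.lt_succ_of_le (hblock j (Nat.le_of_lt_succ hj.2))⟩
  · intro hcount j hji
    have heq := eq_of_subset_of_card_le (filter_apply_lt_subset π (i.val + 1)) hcount.ge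
    obtain ⟨a, ha, hai, hmax⟩ := exists_mem_ltrSet_forall_le π i
    have hmem : a ∈ ({l ∈ LtrSet π | l.val < i.val + 1} : Finset (Fin n)) :=
      mem_filter.2 ⟨ha, Nat.lt_succ_of_le hai⟩
    rw [← heq, mem_filter] at hmem
    exact (hmax j hji).trans (Nat.le_of_lt_succ hmem.2)

lemma blockNum_eq_numReturns (π : Perm (Fin n)) :
    blockNum π = numReturns ((LtrSet π).map Fin.valEmbedding) n (ltrValues π) := by
  simp only [blockNum, numReturns, forall_apply_le_iff_count_eq]
  rw [← Nat.Iio_eq_range, ← Fin.map_valEmbedding_univ, filter_map, card_map]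
  rfl

lemma Avoids321.inv_descent_iff {π : Perm (Fin n)} (hπ : Avoids321 π) {i j : Fin n}
    (hij : i.val + 1 = j) : π⁻¹ j < π⁻¹ i ↔ i.val ∉ ltrValues π ∧ j.val ∈ ltrValues π := by
  obtain ⟨a, rfl⟩ := π.surjective i
  obtain ⟨b, rfl⟩ := π.surjective j
  have hab : π a < π b := Nat.lt_of_succ_le hij.le
  simp only [mem_ltrValues_iff, Perm.inv_def, symm_apply_apply]
  constructor
  · intro hba
    have ha : a ∉ LtrSet π := fun ha ↦ (mem_ltrSet.1 ha b hba.le).not_gt hab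
    refine ⟨ha, by_contra fun hb ↦ ?_⟩
    exact (avoids321_iff_strictMonoOn.1 hπ hb ha hba).not_gt hab
  · rintro ⟨ha, hb⟩
    obtain ⟨c, hca, hac⟩ := exists_lt_apply_lt_of_notMem_ltrSet ha
    by_contra! hle
    have hcb : π c < π b :=
      (mem_ltrSet.1 hb c (hca.le.trans hle)).lt_of_ne (π.injective.ne (hca.trans_le hle).ne)
    omega

lemma Avoids321.mem_desSet_inv_iff {π : Perm (Fin n)} (hπ : Avoids321 π) {m : ℕ} :
    m + 1 ∈ DesSet π⁻¹ ↔ m + 1 < n ∧ m ∉ ltrValues π ∧ m + 1 ∈ ltrValues π := by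
  simp only [DesSet, mem_image, mem_filter, mem_univ, true_and, Nat.add_right_cancel_iff]
  constructor
  · rintro ⟨i, ⟨hi, hdesc⟩, rfl⟩
    exact ⟨hi, (hπ.inv_descent_iff rfl).1 hdesc⟩
  · rintro ⟨hm, hgap⟩
    exact ⟨⟨m, by omega⟩, ⟨hm, (hπ.inv_descent_iff rfl).2 hgap⟩, rfl⟩

lemma pred_mem_ltrValues (π : Perm (Fin n)) (hn : n ≠ 0) : n - 1 ∈ ltrValues π := by
  have hlt : n - 1 < n := Nat.sub_one_lt hn
  refine (mem_ltrValues_iff (v := ⟨n - 1, hlt⟩)).2 (mem_ltrSet.2 fun j _ ↦ ?_)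
  rw [Perm.inv_def, apply_symm_apply]
  exact Nat.le_sub_one_of_lt (π j).2

lemma Avoids321.ldes_inv {π : Perm (Fin n)} (hπ : Avoids321 π) :
    ldes π⁻¹ = (range n \ ltrValues π).sup Nat.succ := by
  refine le_antisymm (Finset.sup_le fun k hk ↦ ?_) (Finset.sup_le fun g hg ↦ ?_)
  · obtain ⟨i, -, rfl⟩ := mem_image.1 hk
    have hi := (hπ.mem_desSet_inv_iff.1 hk).2.1
    exact le_sup (f := Nat.succ) (mem_sdiff.2 ⟨mem_range.2 i.2, hi⟩)
  · obtain ⟨m, hm, hmax⟩ := exists_max_image (range n \ ltrValues π) id ⟨g, hg⟩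
    simp only [mem_sdiff, mem_range, id] at hm hmax hg
    have hlast := pred_mem_ltrValues π (by omega)
    have hne : m ≠ n - 1 := fun h ↦ hm.2 (h ▸ hlast)
    have hlt : m + 1 < n := by omega
    have hmem : m + 1 ∈ ltrValues π :=
      by_contra fun h ↦ (hmax (m + 1) ⟨hlt, h⟩).not_gt m.lt_succ_self
    exact (Nat.succ_le_succ (hmax g hg)).trans
      (le_sup (f := id) (hπ.mem_desSet_inv_iff.2 ⟨hlt, hm.2, hmem⟩))

end Permutations

/-- There is a bijection of `S_n(321)` onto itself preserving the set of
left-to-right maxima and carrying the statistic `bl(π)` to `n - ldes(π⁻¹)`. -/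
theorem exists_ltr_preserving_bijection (n : ℕ) (hn : 1 ≤ n) :
    ∃ f : {π : Equiv.Perm (Fin n) // Avoids321 π} ≃ {π : Equiv.Perm (Fin n) // Avoids321 π},
      ∀ π : {π : Equiv.Perm (Fin n) // Avoids321 π},
        LtrSet ((f π : {π : Equiv.Perm (Fin n) // Avoids321 π}) : Equiv.Perm (Fin n)) =
            LtrSet (π : Equiv.Perm (Fin n)) ∧
          n - ldes (((f π : {π : Equiv.Perm (Fin n) // Avoids321 π}) : Equiv.Perm (Fin n)))⁻¹ =
            blockNum (π : Equiv.Perm (Fin n)) := by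
  choose e he using fun S : Finset (Fin n) ↦
    exists_equiv_finalRun_eq_numReturns (S.map Fin.valEmbedding) n 0
  let f := (avoids321Equiv n).trans ((Equiv.sigmaCongrRight e).trans (avoids321Equiv n).symm)
  refine ⟨f, fun π ↦ ?_⟩
  have hf : avoids321Equiv n (f π) = Equiv.sigmaCongrRight e (avoids321Equiv n π) :=
    (avoids321Equiv n).apply_symm_apply _
  have hltr : LtrSet (f π).1 = LtrSet π.1 := congrArg Sigma.fst hf
  have hval : ltrValues (f π).1 = e _ ⟨ltrValues π.1, ltrValues_mem_ballotSets π.1⟩ :=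
    congrArg (fun x ↦ x.2.1) hf
  refine ⟨hltr, ?_⟩
  rw [(f π).2.ldes_inv, hval, blockNum_eq_numReturns]
  exact he _ _
end

section
/- For every 1 ≤ k ≤ n and every D ⊆ [n−1], the number of 321-avoiding permutations π ∈ S_n with bl(π) = k and Des(π) = D equals the number of standard Young tableaux T of shape (n−1, n−k) with Des(T) ∩ [n−1] = D. -/
/-- A standard Young tableau with two rows of lengths `a` and `b` (where `b ≤ a`),
with entries `1, …, a + b`, increasing along rows and down columns. -/
structure TwoRowSYT (a b : ℕ) where
  row1 : Fin a → ℕ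
  row2 : Fin b → ℕ
  mono1 : StrictMono row1
  mono2 : StrictMono row2
  col_lt : ∀ j : Fin b, ∀ h : (j : ℕ) < a, row1 ⟨j, h⟩ < row2 j
  mem1 : ∀ i, row1 i ∈ Finset.Icc 1 (a + b)
  mem2 : ∀ i, row2 i ∈ Finset.Icc 1 (a + b)
  surj : ∀ x ∈ Finset.Icc 1 (a + b), (∃ i, row1 i = x) ∨ (∃ i, row2 i = x)

/-- The descent set of a two-row standard Young tableau:
entries `i` such that `i + 1` lies in a lower row than `i`. -/
def DesSYT {a b : ℕ} (T : TwoRowSYT a b) : Finset ℕ :=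
  (Finset.Icc 1 (a + b)).filter
    (fun i => (∃ p, T.row1 p = i) ∧ (∃ q, T.row2 q = i + 1))

/-!
A permutation `π` that avoids 321 is determined by the walk whose height at `i` is
`i - min {π j | i ≤ j}`. These are the Łukasiewicz walks from `0` to `0`: each step goes up by one
or to any height that is not larger. The blocks of `π` are the returns to `0`. A tableau with two
rows is determined by the ballot walk whose height at `i` is the number of entries at most `i` in
the first row minus the number of those in the second. In both cases a descent is a peak, that is,
an up step followed by a step that is not up.

Let `U` sum over the up steps and `D` over all others, and let `L = U + D`. By inclusion and
exclusion the sum over the walks with a given set of peaks is a polynomial in `L` and `U * D`. For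
ballot walks `U * D = 1`. For Łukasiewicz walks `U * D = L`, because an up step from `h` followed
by a step that is not up can end at any height up to `h + 1`, just as a single step from `h` can;
this remains true when each return to `0` has weight `X`. So both polynomials reduce to
combinations of powers of `L`, term by term, and it remains to compare the numbers of all walks of
a given length, which satisfy the same recurrence.
-/

namespace HeightWalk

section General

variable {α : Type*}

theorem natCard_subtype_eq_card {β : Type*} {p : α → Prop} {s : Finset β} {f : α → β}
    (hf : Set.BijOn f {a | p a} s) : Nat.card {a // p a} = s.card :=
  (Nat.card_congr hf.equiv).trans (Set.ncard_coe_finset s)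

theorem natCard_subtype_of_forall_iff {p : α → Prop} {a : α} {q : Prop} [Decidable q]
    (h : ∀ x, p x ↔ x = a ∧ q) : Nat.card {x // p x} = if q then 1 else 0 := by
  split_ifs with hq
  · simp only [h, hq, and_true]
    exact Nat.card_unique
  · simp only [h, hq, and_false]
    exact Nat.card_of_isEmpty

theorem mapsTo_compl_iff_mapsTo_symm (e : Equiv.Perm α) {s : Set α} :
    Set.MapsTo e sᶜ sᶜ ↔ Set.MapsTo e.symm s s :=
  ⟨fun h x hx => by_contra fun hx' => h hx' (by rwa [e.apply_symm_apply]),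
    fun h x hx hx' => hx (e.symm_apply_apply x ▸ h hx')⟩

theorem exists_perm_eqOn_strictMonoOn_compl [Finite α] [LinearOrder α]
    {f : α → α} {s : Finset α} (hf : Set.InjOn f s) :
    ∃ π : Equiv.Perm α, Set.EqOn π f s ∧ StrictMonoOn π (s : Set α)ᶜ := by
  cases nonempty_fintype α
  let t := s.image f
  have hbij : Set.BijOn f s t := by simpa only [t, Finset.coe_image] using hf.bijOn_image
  let e : {x // x ∈ s} ≃ {x // x ∈ t} := hbij.equiv
  have hcard : Fintype.card {x // x ∉ t} = Fintype.card {x // x ∉ s} := by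
    rw [Fintype.card_subtype_compl, Fintype.card_subtype_compl, Fintype.card_congr e]
  let o : {x // x ∉ s} ≃o {x // x ∉ t} :=
    (Fintype.orderIsoFinOfCardEq _ rfl).symm.trans (Fintype.orderIsoFinOfCardEq _ hcard)
  refine ⟨e.subtypeCongr o, fun x hx => ?_, fun x hx y hy hxy => ?_⟩
  · simp [Equiv.subtypeCongr, Equiv.sumCompl_symm_apply_of_pos (p := (· ∈ s)) hx, e,
      Set.BijOn.equiv]
  · have hlt : o ⟨x, hx⟩ < o ⟨y, hy⟩ := o.strictMono hxy
    simpa [Equiv.subtypeCongr, Equiv.sumCompl_symm_apply_of_neg (p := (· ∈ s)) hx,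
      Equiv.sumCompl_symm_apply_of_neg (p := (· ∈ s)) hy] using hlt

end General

section PeakSums

/-- Expansion, in `L` and `P`, of the sum of all words of length `f.length + 1` in two letters `U`
and `D` whose factors `UD` occur exactly at the places where `f` is `true`; here `L = U + D` and
`P = U * D`. The second component is the same sum for `true :: f`, so that the recursion is
structural. -/
def peakSums {R : Type*} [Ring R] (L P : R) : List Bool → R × R
  | [] => (L, P)
  | true :: f => ((peakSums L P f).2, 0)
  | false :: f => (L * (peakSums L P f).1 - (peakSums L P f).2, P * (peakSums L P f).1)

variable {R₁ R₂ A : Type*} [Ring R₁] [Ring R₂] [AddCommGroup A]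

/- Every monomial of `peakSums` has degree `f.length + 1` if `L` has degree `1` and `P` has
degree `2`. So a monomial that becomes `L₁ ^ m` for `P = L₁` becomes `L₂ ^ t` for `P = 1`, where
`2 * m - t` depends on the length of `f` only. -/
theorem map_pow_mul_peakSums_eq (φ₁ : R₁ →+ A) (φ₂ : R₂ →+ A) {L₁ : R₁} {L₂ : R₂} {d : ℕ}
    (hφ : ∀ m t, t + d = 2 * m → φ₁ (L₁ ^ m) = φ₂ (L₂ ^ t)) (f : List Bool) :
    (∀ m t, t + d = 2 * m + f.length + 1 →
      φ₁ (L₁ ^ m * (peakSums L₁ L₁ f).1) = φ₂ (L₂ ^ t * (peakSums L₂ 1 f).1)) ∧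
    (∀ m t, t + d = 2 * m + f.length + 2 →
      φ₁ (L₁ ^ m * (peakSums L₁ L₁ f).2) = φ₂ (L₂ ^ t * (peakSums L₂ 1 f).2)) := by
  induction f with
  | nil =>
    refine ⟨fun m t h => ?_, fun m t h => ?_⟩
    · simpa only [peakSums, pow_succ] using hφ (m + 1) (t + 1) (by grind)
    · simpa only [peakSums, pow_succ, mul_one] using hφ (m + 1) t (by grind)
  | cons b f ih =>
    obtain ⟨ih₁, ih₂⟩ := ih
    rw [List.length_cons]
    cases b with
    | true => exact ⟨fun m t h => ih₂ m t (by omega), fun m t _ => by simp [peakSums]⟩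
    | false =>
      refine ⟨fun m t h => ?_, fun m t h => ?_⟩
      · simp only [peakSums, mul_sub, map_sub, ← mul_assoc, ← pow_succ]
        rw [ih₁ (m + 1) (t + 1) (by omega), ih₂ m t (by omega)]
      · simp only [peakSums, one_mul, ← mul_assoc, ← pow_succ]
        exact ih₁ (m + 1) t (by omega)

theorem map_peakSums_eq (φ₁ : R₁ →+ A) (φ₂ : R₂ →+ A) {L₁ : R₁} {L₂ : R₂} (f : List Bool)
    (hφ : ∀ m t, t + f.length + 1 = 2 * m → φ₁ (L₁ ^ m) = φ₂ (L₂ ^ t)) :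
    φ₁ (peakSums L₁ L₁ f).1 = φ₂ (peakSums L₂ 1 f).1 := by
  simpa using (map_pow_mul_peakSums_eq φ₁ φ₂ (d := f.length + 1) hφ f).1 0 0 (by omega)

end PeakSums

section Walks

variable (down : ℕ → Finset ℕ)

/-- The sequence `h, c 0, c 1, …`. -/
def cons (h : ℕ) (c : ℕ → ℕ) : ℕ → ℕ
  | 0 => h
  | i + 1 => c i

/-- The heights that a walk can reach in one step from `h`: an up step leads to `h + 1`, any other
step to an element of `down h`. -/
def steps (h : ℕ) : Finset ℕ := insert (h + 1) (down h)

open Classical in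
/-- The walks with `n` steps that start at height `h`, as sequences of heights that are constant
from index `n` on. -/
noncomputable def walks : ℕ → ℕ → Finset (ℕ → ℕ)
  | 0, h => {fun _ => h}
  | n + 1, h => (steps down h).biUnion fun j => (walks n j).image (cons h)

/-- The walk `c` has a peak at the index `i + 1`: an up step followed by a step that is not up. -/
def IsPeak (c : ℕ → ℕ) (i : ℕ) : Prop := c (i + 1) = c i + 1 ∧ c (i + 2) ≠ c (i + 1) + 1

instance (c : ℕ → ℕ) (i : ℕ) : Decidable (IsPeak c i) := inferInstanceAs (Decidable (_ ∧ _))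

/-- The truth values of the presence of a peak at the indices `1, …, n`. -/
def peakList (n : ℕ) (c : ℕ → ℕ) : List Bool :=
  (List.range n).map fun i => decide (IsPeak c i)

variable {down}

theorem mem_steps {h j : ℕ} : j ∈ steps down h ↔ j = h + 1 ∨ j ∈ down h := Finset.mem_insert

theorem cons_injective (h : ℕ) : Function.Injective (cons h) := fun _ _ hc =>
  funext fun i => congrFun hc (i + 1)

theorem cons_tail (c : ℕ → ℕ) : cons (c 0) (fun i => c (i + 1)) = c := by
  ext (_ | i) <;> rfl

theorem mem_walks {n h : ℕ} {c : ℕ → ℕ} : c ∈ walks down n h ↔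
    c 0 = h ∧ (∀ i < n, c (i + 1) ∈ steps down (c i)) ∧ ∀ i, n ≤ i → c i = c n := by
  induction n generalizing h c with
  | zero =>
    simp only [walks, Finset.mem_singleton]
    exact ⟨by rintro rfl; simp, fun ⟨h0, _, hc⟩ => funext fun i => (hc i i.zero_le).trans h0⟩
  | succ n ih =>
    simp only [walks, Finset.mem_biUnion, Finset.mem_image, ih]
    constructor
    · rintro ⟨j, hj, c, ⟨rfl, hstep, hconst⟩, rfl⟩
      refine ⟨rfl, ?_, ?_⟩
      · rintro (_ | i) hi
        · exact hj
        · exact hstep i (by omega)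
      · rintro (_ | i) hi
        · omega
        · exact hconst i (by omega)
    · rintro ⟨rfl, hstep, hconst⟩
      exact ⟨c 1, hstep 0 (by omega), fun i => c (i + 1),
        ⟨rfl, fun i hi => hstep (i + 1) (by omega), fun i hi => hconst (i + 1) (by omega)⟩,
        cons_tail c⟩

theorem sum_walks_succ {M : Type*} [AddCommMonoid M] (n h : ℕ) (F : (ℕ → ℕ) → M) :
    ∑ c ∈ walks down (n + 1) h, F c =
      ∑ j ∈ steps down h, ∑ c ∈ walks down n j, F (cons h c) := by
  classical
  have hdisj : (steps down h : Set ℕ).PairwiseDisjoint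
      fun j => (walks down n j).image (cons h) := by
    intro i _ j _ hij
    simp only [Function.onFun, Finset.disjoint_left, Finset.mem_image, not_exists, not_and]
    rintro _ ⟨c, hc, rfl⟩ c' hc' heq
    rw [cons_injective h heq] at hc'
    exact hij ((mem_walks.1 hc).1.symm.trans (mem_walks.1 hc').1)
  rw [walks, Finset.sum_biUnion hdisj]
  exact Finset.sum_congr rfl fun j _ => Finset.sum_image (cons_injective h).injOn

theorem peakList_succ (n : ℕ) (c : ℕ → ℕ) :
    peakList (n + 1) c = decide (IsPeak c 0) :: peakList n (fun i => c (i + 1)) := by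
  simp only [peakList, List.range_succ_eq_map, List.map_cons, List.map_map]
  rfl

theorem peakList_eq_map_iff {n : ℕ} {c : ℕ → ℕ} {D : Finset ℕ} :
    peakList n c = (List.range n).map (fun i => decide (i + 1 ∈ D)) ↔
      ∀ i < n, IsPeak c i ↔ i + 1 ∈ D := by
  simp [peakList, List.map_inj_left]

theorem peakList_eq_map_iff_inter_eq {n : ℕ} {c : ℕ → ℕ} {D E : Finset ℕ}
    (hD : D ⊆ Finset.Icc 1 n) (hE : ∀ i < n, IsPeak c i ↔ i + 1 ∈ E) :
    peakList n c = (List.range n).map (fun i => decide (i + 1 ∈ D)) ↔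
      E ∩ Finset.Icc 1 n = D := by
  rw [peakList_eq_map_iff]
  refine ⟨fun h => Finset.ext fun x => ?_, fun h i hi => ?_⟩
  · rw [Finset.mem_inter, ← and_iff_left_of_imp (@hD x)]
    refine and_congr_left fun hx => ?_
    obtain ⟨hx₁, hxn⟩ := Finset.mem_Icc.1 hx
    obtain ⟨i, rfl⟩ := Nat.exists_eq_add_of_le' hx₁
    rw [← hE i hxn, h i hxn]
  · rw [hE i hi, ← h, Finset.mem_inter, Finset.mem_Icc]
    exact (and_iff_left ⟨by omega, hi⟩).symm

theorem not_isPeak_succ {c : ℕ → ℕ} {i : ℕ} (h : IsPeak c i) : ¬IsPeak c (i + 1) :=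
  fun h' => h.2 h'.1

end Walks

section WalkSums

variable {R : Type*} [CommRing R] (down : ℕ → Finset ℕ) (w : ℕ → R)

/-- The operator `L` that sums over one step, a step to height `j` having weight `w j`. -/
def stepOp : Module.End R (ℕ → R) where
  toFun G h := ∑ j ∈ steps down h, w j * G j
  map_add' G G' := by ext h; simp [mul_add, Finset.sum_add_distrib]
  map_smul' r G := by ext h; simp [Finset.mul_sum, mul_left_comm]

/-- The operator `P` that sums over an up step followed by a step that is not up. -/
def peakOp : Module.End R (ℕ → R) where
  toFun G h := w (h + 1) * ∑ j ∈ down (h + 1), w j * G j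
  map_add' G G' := by ext h; simp [mul_add, Finset.sum_add_distrib]
  map_smul' r G := by ext h; simp [Finset.mul_sum, mul_left_comm]

open Classical in
/-- The weighted sum over the walks with `n` steps from height `h` that satisfy `Q`, with `g`
evaluated at the last height. -/
noncomputable def walkSum (g : ℕ → R) (n : ℕ) (Q : (ℕ → ℕ) → Prop) (h : ℕ) : R :=
  ∑ c ∈ walks down n h with Q c, (∏ i ∈ Finset.range n, w (c (i + 1))) * g (c n)

variable {down w} {g : ℕ → R}

theorem stepOp_apply (G : ℕ → R) (h : ℕ) :
    stepOp down w G h = ∑ j ∈ steps down h, w j * G j := rfl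

theorem peakOp_apply (G : ℕ → R) (h : ℕ) :
    peakOp down w G h = w (h + 1) * ∑ j ∈ down (h + 1), w j * G j := rfl

theorem walkSum_succ_apply (n : ℕ) (Q : (ℕ → ℕ) → Prop) (h : ℕ) :
    walkSum down w g (n + 1) Q h =
      ∑ j ∈ steps down h, w j * walkSum down w g n (fun c => Q (cons h c)) j := by
  simp only [walkSum, Finset.sum_filter, sum_walks_succ, Finset.mul_sum]
  refine Finset.sum_congr rfl fun j _ => Finset.sum_congr rfl fun c hc => ?_
  rw [mul_ite, mul_zero, ← mul_assoc, Finset.prod_range_succ', mul_comm (w j)]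
  simp only [cons, (mem_walks.1 hc).1]

theorem walkSum_tail (n : ℕ) (Q : (ℕ → ℕ) → Prop) :
    walkSum down w g (n + 1) (fun c => Q fun i => c (i + 1)) =
      stepOp down w (walkSum down w g n Q) :=
  funext fun _ => walkSum_succ_apply _ _ _

theorem walkSum_true (n : ℕ) : walkSum down w g n (fun _ => True) = (stepOp down w ^ n) g := by
  induction n with
  | zero => ext h; simp [walkSum, walks]
  | succ n ih => rw [walkSum_tail n fun _ => True, ih, pow_succ', Module.End.mul_apply]

theorem walkSum_congr {n h : ℕ} {Q Q' : (ℕ → ℕ) → Prop}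
    (hQ : ∀ c, c 0 = h → (Q c ↔ Q' c)) : walkSum down w g n Q h = walkSum down w g n Q' h := by
  classical
  exact Finset.sum_congr (Finset.filter_congr fun c hc => hQ c (mem_walks.1 hc).1) fun _ _ => rfl

theorem walkSum_false (n h : ℕ) : walkSum down w g n (fun _ => False) h = 0 := by
  simp [walkSum]

theorem walkSum_and_add_walkSum_and_not (n h : ℕ) (Q Q' : (ℕ → ℕ) → Prop) :
    walkSum down w g n (fun c => Q' c ∧ Q c) h + walkSum down w g n (fun c => ¬Q' c ∧ Q c) h =
      walkSum down w g n Q h := by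
  classical
  simp only [walkSum, ← Finset.filter_filter, and_comm (b := Q _)]
  exact Finset.sum_filter_add_sum_filter_not _ _ _

theorem walkSum_isPeak (hdown : ∀ h, h + 1 ∉ down h) (n : ℕ) (Q : (ℕ → ℕ) → Prop) :
    walkSum down w g (n + 2) (fun c => IsPeak c 0 ∧ Q fun i => c (i + 2)) =
      peakOp down w (walkSum down w g n Q) := by
  ext h
  rw [walkSum_succ_apply, steps, Finset.sum_insert (hdown h), Finset.sum_eq_zero, add_zero,
    walkSum_succ_apply, steps, Finset.sum_insert (hdown _), peakOp_apply,
    walkSum_congr (Q' := fun _ => False), walkSum_false, mul_zero, zero_add]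
  · refine congrArg _ (Finset.sum_congr rfl fun j hj => congrArg _ (walkSum_congr fun c hc => ?_))
    have hne : j ≠ h + 2 := fun h' => hdown (h + 1) (h' ▸ hj)
    simp [IsPeak, cons, hc, hne]
  · intro c hc
    simp [IsPeak, cons, hc]
  · intro j hj
    have hne : j ≠ h + 1 := fun h' => hdown h (h' ▸ hj)
    rw [walkSum_congr (Q' := fun _ => False), walkSum_false, mul_zero]
    intro c hc
    simp [IsPeak, cons, hc, hne]

theorem walkSum_peakList (hdown : ∀ h, h + 1 ∉ down h) (s : ℕ) (f : List Bool) :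
    walkSum down w g (s + f.length + 1) (peakList f.length · = f) =
      (peakSums (stepOp down w) (peakOp down w) f).1 ((stepOp down w ^ s) g) ∧
    walkSum down w g (s + f.length + 2) (peakList (f.length + 1) · = true :: f) =
      (peakSums (stepOp down w) (peakOp down w) f).2 ((stepOp down w ^ s) g) := by
  induction f with
  | nil =>
    simp only [peakList_succ, List.length_nil, add_zero, List.cons.injEq, decide_eq_true_eq]
    simp only [peakList, List.range_zero, List.map_nil, peakSums, ← walkSum_true]
    exact ⟨walkSum_tail s fun _ => True, walkSum_isPeak hdown s fun _ => True⟩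
  | cons b f ih =>
    obtain ⟨ih₁, ih₂⟩ := ih
    rw [List.length_cons, ← add_assoc]
    cases b with
    | true =>
      refine ⟨ih₂, funext fun h => ?_⟩
      rw [walkSum_congr (Q' := fun _ => False), walkSum_false]
      · rfl
      · intro c _
        simp only [peakList_succ, List.cons.injEq, decide_eq_true_eq, iff_false]
        exact fun ⟨hpeak, hpeak', _⟩ => not_isPeak_succ hpeak hpeak'
    | false =>
      constructor
      · simp only [peakSums, LinearMap.sub_apply, Module.End.mul_apply, ← ih₁, ← ih₂,
          ← walkSum_tail]
        ext h
        rw [Pi.sub_apply, eq_sub_iff_add_eq', ← walkSum_and_add_walkSum_and_not (Q' := (IsPeak · 0))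
          (Q := fun c => peakList f.length (fun i => c (i + 1)) = f)]
        simp only [peakList_succ, List.cons.injEq, decide_eq_true_eq, decide_eq_false_iff_not]
      · rw [peakSums, Module.End.mul_apply, ← ih₁, ← walkSum_isPeak hdown]
        ext h
        refine walkSum_congr fun c _ => ?_
        simp only [peakList_succ, List.cons.injEq, decide_eq_true_eq, decide_eq_false_iff_not]
        exact and_congr_right fun hpeak => and_iff_right (not_isPeak_succ hpeak)

end WalkSums

section WalkModels

open Polynomial

/-- The steps of a Łukasiewicz walk that are not up: to any height that is not larger. -/
def lukDown (h : ℕ) : Finset ℕ := Finset.range (h + 1)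

/-- The steps of a ballot walk that are not up: to `h - 1` if `0 < h`, and none if `h = 0`. -/
def ballotDown (h : ℕ) : Finset ℕ := Finset.Ico (h - 1) h

/-- The number of visits to the height `0` in the steps `1, …, n`. -/
def numReturns (n : ℕ) (c : ℕ → ℕ) : ℕ := {i ∈ Finset.range n | c (i + 1) = 0}.card

/-- The weight under which the power of `X` counts the returns to the height `0`. -/
noncomputable def lukWeight (h : ℕ) : ℤ[X] := if h = 0 then X else 1

/-- The step operator of the Łukasiewicz walks. -/
noncomputable abbrev lukStep : Module.End ℤ[X] (ℕ → ℤ[X]) := stepOp lukDown lukWeight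

/-- The step operator of the ballot walks. -/
abbrev ballotStep : Module.End ℤ (ℕ → ℤ) := stepOp ballotDown 1

/-- The generating polynomial, by the number of returns, of the Łukasiewicz walks with `m` steps
from `h` to `0`. -/
noncomputable def lukPoly (m h : ℕ) : ℤ[X] := (lukStep ^ m) (Pi.single 0 1) h

/-- The number of ballot walks with `n` steps from `0` to `e`. -/
def ballotNum (n e : ℕ) : ℤ := (ballotStep ^ n) (Pi.single e 1) 0

theorem succ_notMem_lukDown (h : ℕ) : h + 1 ∉ lukDown h := by simp [lukDown]

theorem succ_notMem_ballotDown (h : ℕ) : h + 1 ∉ ballotDown h := by simp [ballotDown]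

theorem steps_lukDown (h : ℕ) : steps lukDown h = Finset.range (h + 2) :=
  Finset.range_add_one.symm

theorem mem_steps_ballotDown {h j : ℕ} : j ∈ steps ballotDown h ↔ j = h + 1 ∨ j + 1 = h := by
  rw [mem_steps, ballotDown, Finset.mem_Ico]
  omega

theorem peakOp_lukDown : peakOp lukDown lukWeight = lukStep := by
  refine LinearMap.ext fun G => funext fun h => ?_
  simp [peakOp_apply, stepOp_apply, steps_lukDown, lukDown, lukWeight]

theorem peakOp_ballotDown : peakOp ballotDown (1 : ℕ → ℤ) = 1 := by
  refine LinearMap.ext fun G => funext fun h => ?_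
  simp [peakOp_apply, ballotDown]

theorem lukPoly_zero (h : ℕ) : lukPoly 0 h = if h = 0 then 1 else 0 := Pi.single_apply 0 1 h

theorem lukPoly_succ (m h : ℕ) :
    lukPoly (m + 1) h = ∑ j ∈ Finset.range (h + 2), lukWeight j * lukPoly m j := by
  simp only [lukPoly, pow_succ', Module.End.mul_apply, stepOp_apply, steps_lukDown]

theorem lukPoly_one (h : ℕ) : lukPoly 1 h = X := by
  simp [lukPoly_succ, lukPoly_zero, lukWeight]

theorem lukPoly_succ_zero (m : ℕ) : lukPoly (m + 1) 0 = X * lukPoly m 0 + lukPoly m 1 := by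
  simp [lukPoly_succ, Finset.sum_range_succ, lukWeight]

theorem lukPoly_succ_succ (m h : ℕ) :
    lukPoly (m + 1) (h + 1) = lukPoly (m + 1) h + lukPoly m (h + 2) := by
  rw [lukPoly_succ, Finset.sum_range_succ, ← lukPoly_succ]
  simp [lukWeight]

theorem coeff_zero_lukPoly_succ (m h : ℕ) : (lukPoly (m + 1) h).coeff 0 = 0 := by
  induction m generalizing h with
  | zero => simp [lukPoly_one]
  | succ m ih =>
    rw [lukPoly_succ, finsetSum_coeff]
    exact Finset.sum_eq_zero fun j _ => by rw [mul_coeff_zero, ih, mul_zero]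

theorem natDegree_lukPoly_le (m h : ℕ) : (lukPoly m h).natDegree ≤ m := by
  induction m generalizing h with
  | zero =>
    rw [lukPoly_zero]
    split_ifs <;> simp
  | succ m ih =>
    rw [lukPoly_succ]
    refine natDegree_sum_le_of_forall_le _ _ fun j _ => natDegree_mul_le.trans ?_
    have hweight : (lukWeight j).natDegree ≤ 1 := by
      rw [lukWeight]
      split_ifs <;> simp
    have := ih j
    omega

theorem stepOp_one_single_apply (down : ℕ → Finset ℕ) (e h : ℕ) :
    stepOp down 1 (Pi.single e (1 : ℤ)) h = if e ∈ steps down h then 1 else 0 := by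
  simp [stepOp_apply, Pi.single_apply]

theorem ballotStep_single_zero : ballotStep (Pi.single 0 1) = Pi.single 1 1 := by
  ext h
  rw [stepOp_one_single_apply, Pi.single_apply]
  exact if_congr (by rw [mem_steps_ballotDown]; omega) rfl rfl

theorem ballotStep_single_succ (e : ℕ) :
    ballotStep (Pi.single (e + 1) 1) = Pi.single e 1 + Pi.single (e + 2) 1 := by
  ext h
  rw [stepOp_one_single_apply, Pi.add_apply, Pi.single_apply, Pi.single_apply]
  simp only [mem_steps_ballotDown]
  grind

theorem ballotNum_zero (e : ℕ) : ballotNum 0 e = if e = 0 then 1 else 0 := by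
  simp [ballotNum, Pi.single_apply, eq_comm]

theorem ballotNum_succ_zero (n : ℕ) : ballotNum (n + 1) 0 = ballotNum n 1 := by
  rw [ballotNum, pow_succ, Module.End.mul_apply, ballotStep_single_zero, ballotNum]

theorem ballotNum_succ_succ (n e : ℕ) :
    ballotNum (n + 1) (e + 1) = ballotNum n e + ballotNum n (e + 2) := by
  rw [ballotNum, pow_succ, Module.End.mul_apply, ballotStep_single_succ, map_add]
  rfl

theorem ballotNum_eq_zero_of_lt {n e : ℕ} (h : n < e) : ballotNum n e = 0 := by
  induction n generalizing e with
  | zero => rw [ballotNum_zero, if_neg (by omega)]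
  | succ n ih =>
    obtain ⟨e, rfl⟩ := Nat.exists_eq_succ_of_ne_zero (Nat.ne_zero_of_lt h)
    rw [Nat.succ_eq_add_one, ballotNum_succ_succ, ih (by omega), ih (by omega), add_zero]

theorem coeff_lukPoly_eq_ballotNum {n m h k : ℕ} (hn : n + k = 2 * m + h) :
    (lukPoly (m + 1) h).coeff (k + 1) = ballotNum n (k + h) := by
  induction n generalizing m h k with
  | zero =>
    rcases Nat.eq_zero_or_pos k with rfl | hk
    · obtain ⟨rfl, rfl⟩ : m = 0 ∧ h = 0 := by omega
      simp [lukPoly_one, ballotNum_zero]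
    · rw [ballotNum_eq_zero_of_lt (by omega)]
      exact coeff_eq_zero_of_natDegree_lt ((natDegree_lukPoly_le _ _).trans_lt (by omega))
  | succ n ih =>
    rcases h with _ | h
    · obtain ⟨m, rfl⟩ : ∃ m', m = m' + 1 := ⟨m - 1, by omega⟩
      rw [lukPoly_succ_zero, coeff_add, coeff_X_mul, ih (m := m) (h := 1) (by omega)]
      rcases k with _ | k
      · rw [coeff_zero_lukPoly_succ, zero_add, ballotNum_succ_zero]
      · rw [ih (m := m) (by omega), ← ballotNum_succ_succ]
    · rw [lukPoly_succ_succ, coeff_add, ih (by omega), ← add_assoc, ballotNum_succ_succ]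
      congr 1
      rcases m with _ | m
      · rw [lukPoly_zero, if_neg (by omega), coeff_zero, ballotNum_eq_zero_of_lt (by omega)]
      · exact ih (by omega)

theorem prod_lukWeight (n : ℕ) (c : ℕ → ℕ) :
    ∏ i ∈ Finset.range n, lukWeight (c (i + 1)) = X ^ numReturns n c := by
  simp [lukWeight, numReturns, Finset.prod_ite]

theorem coeff_walkSum_luk (n k h : ℕ) (Q : (ℕ → ℕ) → Prop) [DecidablePred Q] :
    (walkSum lukDown lukWeight (Pi.single 0 1) n Q h).coeff k =
      ({c ∈ walks lukDown n h | Q c ∧ c n = 0 ∧ numReturns n c = k}.card : ℤ) := by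
  simp only [walkSum, prod_lukWeight, Finset.sum_filter, finsetSum_coeff, Finset.card_filter,
    Nat.cast_sum]
  refine Finset.sum_congr rfl fun c _ => ?_
  by_cases hQ : Q c <;> by_cases hc : c n = 0 <;>
    simp [hQ, hc, coeff_X_pow, eq_comm]

theorem walkSum_ballot (n e h : ℕ) (Q : (ℕ → ℕ) → Prop) [DecidablePred Q] :
    walkSum ballotDown 1 (Pi.single e 1) n Q h =
      ({c ∈ walks ballotDown n h | Q c ∧ c n = e}.card : ℤ) := by
  simp only [walkSum, Finset.sum_filter, Finset.card_filter, Nat.cast_sum]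
  refine Finset.sum_congr rfl fun c _ => ?_
  by_cases hQ : Q c <;> by_cases hc : c n = e <;> simp [hQ, hc]

theorem card_lukWalks_eq_card_ballotWalks {k s : ℕ} (f : List Bool) (h : s + k + 1 = f.length) :
    {c ∈ walks lukDown (f.length + 1) 0 | peakList f.length c = f ∧
      c (f.length + 1) = 0 ∧ numReturns (f.length + 1) c = k + 1}.card =
    {c ∈ walks ballotDown (s + f.length + 1) 0 | peakList f.length c = f ∧
      c (s + f.length + 1) = k}.card := by
  let φ₁ : Module.End ℤ[X] (ℕ → ℤ[X]) →+ ℤ :=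
    { toFun T := (T (Pi.single 0 1) 0).coeff (k + 1)
      map_zero' := by simp
      map_add' := by simp }
  let φ₂ : Module.End ℤ (ℕ → ℤ) →+ ℤ :=
    { toFun T := T ((ballotStep ^ s) (Pi.single k 1)) 0
      map_zero' := by simp
      map_add' := by simp }
  have hpow : ∀ m t, t + f.length + 1 = 2 * m → φ₁ (lukStep ^ m) = φ₂ (ballotStep ^ t) := by
    intro m t ht
    obtain ⟨m, rfl⟩ : ∃ m', m = m' + 1 := ⟨m - 1, by omega⟩
    change (lukPoly (m + 1) 0).coeff (k + 1) = (ballotStep ^ t * ballotStep ^ s) (Pi.single k 1) 0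
    rw [← pow_add]
    exact coeff_lukPoly_eq_ballotNum (by omega)
  have hluk := congrFun (walkSum_peakList (w := lukWeight) (g := Pi.single 0 1)
    succ_notMem_lukDown 0 f).1 0
  have hballot := congrFun (walkSum_peakList (w := (1 : ℕ → ℤ)) (g := Pi.single k 1)
    succ_notMem_ballotDown s f).1 0
  rw [peakOp_lukDown, pow_zero, zero_add] at hluk
  rw [peakOp_ballotDown, walkSum_ballot] at hballot
  have hcoeff := congrArg (coeff · (k + 1)) hluk
  simp only [coeff_walkSum_luk] at hcoeff
  have := map_peakSums_eq φ₁ φ₂ f hpow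
  exact_mod_cast hcoeff.trans (this.trans hballot.symm)

end WalkModels

section Tableaux

/-- The number of entries that are at most `i` in the row `r` of a tableau. -/
def rowCount {m : ℕ} (r : Fin m → ℕ) (i : ℕ) : ℕ := Finset.card {p | r p ≤ i}

/-- The number of entries at most `i` in the first row minus the number of those in the second. -/
def tableauHeight {a b : ℕ} (T : TwoRowSYT a b) (i : ℕ) : ℕ :=
  rowCount T.row1 i - rowCount T.row2 i

section RowCount

variable {m : ℕ} {r : Fin m → ℕ}

theorem lt_rowCount_iff (hr : StrictMono r) {q : Fin m} {i : ℕ} :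
    (q : ℕ) < rowCount r i ↔ r q ≤ i := by
  constructor
  · contrapose!
    intro hlt
    calc rowCount r i ≤ (Finset.Iio q).card := Finset.card_le_card fun p hp =>
          Finset.mem_Iio.2 (hr.lt_iff_lt.1 ((Finset.mem_filter.1 hp).2.trans_lt hlt))
      _ = q := Fin.card_Iio q
  · intro hle
    calc (q : ℕ) < (Finset.Iic q).card := by rw [Fin.card_Iic]; exact Nat.lt_succ_self _
      _ ≤ rowCount r i := Finset.card_le_card fun p hp =>
          Finset.mem_filter.2 ⟨Finset.mem_univ p, (hr.monotone (Finset.mem_Iic.1 hp)).trans hle⟩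

theorem rowCount_succ (hr : Function.Injective r) (i : ℕ) :
    rowCount r (i + 1) = rowCount r i + if ∃ p, r p = i + 1 then 1 else 0 := by
  have hcard : (if ∃ p, r p = i + 1 then 1 else 0) = Finset.card {p | r p = i + 1} := by
    split_ifs with h
    · obtain ⟨p, hp⟩ := h
      refine (Finset.card_eq_one.2 ⟨p, ?_⟩).symm
      ext q
      simp [← hp, hr.eq_iff]
    · exact (Finset.card_eq_zero.2 (Finset.filter_eq_empty_iff.2 fun p _ hp => h ⟨p, hp⟩)).symm
  rw [hcard, rowCount, rowCount, ← Finset.card_union_of_disjoint, ← Finset.filter_or]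
  · simp only [Nat.le_succ_iff]
  · exact Finset.disjoint_filter.2 fun p _ h h' => by omega

theorem rowCount_zero (hr : ∀ p, 1 ≤ r p) : rowCount r 0 = 0 := by
  rw [rowCount, Finset.card_eq_zero, Finset.filter_eq_empty_iff]
  exact fun p _ h => by have := hr p; omega

theorem rowCount_eq_of_le {N i : ℕ} (hr : ∀ p, r p ≤ N) (hi : N ≤ i) : rowCount r i = m := by
  rw [rowCount, Finset.filter_true_of_mem fun p _ => (hr p).trans hi, Finset.card_fin]

end RowCount

variable {a b : ℕ}

theorem sumElim_rows_injective (T : TwoRowSYT a b) :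
    Function.Injective (Sum.elim T.row1 T.row2) := by
  have himage : Finset.univ.image (Sum.elim T.row1 T.row2) = Finset.Icc 1 (a + b) := by
    ext x
    simp only [Finset.mem_image, Finset.mem_univ, true_and, Sum.exists, Sum.elim_inl, Sum.elim_inr]
    refine ⟨?_, T.surj x⟩
    rintro (⟨p, rfl⟩ | ⟨q, rfl⟩)
    exacts [T.mem1 p, T.mem2 q]
  have hinj := Finset.card_image_iff.1 (himage ▸ by simp :
    (Finset.univ.image (Sum.elim T.row1 T.row2)).card = Finset.univ.card)
  simpa using hinj

theorem range_row2 (T : TwoRowSYT a b) :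
    Set.range T.row2 = Set.Icc 1 (a + b) \ Set.range T.row1 := by
  ext x
  constructor
  · rintro ⟨q, rfl⟩
    refine ⟨Finset.mem_Icc.1 (T.mem2 q), ?_⟩
    rintro ⟨p, hp⟩
    exact Sum.inl_ne_inr (@sumElim_rows_injective _ _ T (Sum.inl p) (Sum.inr q) hp)
  · exact fun ⟨hx, hrow⟩ => (T.surj x (Finset.mem_Icc.2 hx)).resolve_left hrow

theorem exists_row2_eq_iff (T : TwoRowSYT a b) {i : ℕ} (hi : i < a + b) :
    (∃ q, T.row2 q = i + 1) ↔ ¬∃ p, T.row1 p = i + 1 := by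
  have h := Set.ext_iff.1 (range_row2 T) (i + 1)
  exact h.trans (and_iff_right ⟨by omega, hi⟩)

theorem rowCount_row2_le_row1 (hab : b ≤ a) (T : TwoRowSYT a b) (i : ℕ) :
    rowCount T.row2 i ≤ rowCount T.row1 i := by
  by_contra! hlt
  have hb : rowCount T.row1 i < b := hlt.trans_le ((Finset.card_le_univ _).trans_eq (by simp))
  have hrow2 : T.row2 ⟨_, hb⟩ ≤ i := (lt_rowCount_iff T.mono2).1 hlt
  have hrow1 := (T.col_lt ⟨_, hb⟩ (hb.trans_le hab)).le.trans hrow2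
  exact lt_irrefl _ ((lt_rowCount_iff T.mono1).2 hrow1)

theorem tableauHeight_zero (T : TwoRowSYT a b) : tableauHeight T 0 = 0 := by
  rw [tableauHeight, rowCount_zero fun p => (Finset.mem_Icc.1 (T.mem1 p)).1, Nat.zero_sub]

theorem tableauHeight_eq_sub (T : TwoRowSYT a b) {i : ℕ} (hi : a + b ≤ i) :
    tableauHeight T i = a - b := by
  rw [tableauHeight, rowCount_eq_of_le (fun p => (Finset.mem_Icc.1 (T.mem1 p)).2) hi,
    rowCount_eq_of_le (fun p => (Finset.mem_Icc.1 (T.mem2 p)).2) hi]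

theorem tableauHeight_succ (hab : b ≤ a) (T : TwoRowSYT a b) {i : ℕ} (hi : i < a + b) :
    if ∃ p, T.row1 p = i + 1 then tableauHeight T (i + 1) = tableauHeight T i + 1
    else tableauHeight T (i + 1) + 1 = tableauHeight T i := by
  have hi₁ := rowCount_row2_le_row1 hab T i
  have hi₂ := rowCount_row2_le_row1 hab T (i + 1)
  rw [rowCount_succ T.mono1.injective, rowCount_succ T.mono2.injective] at hi₂
  simp only [tableauHeight, rowCount_succ T.mono1.injective, rowCount_succ T.mono2.injective,
    exists_row2_eq_iff T hi] at hi₂ ⊢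
  by_cases h : ∃ p, T.row1 p = i + 1
  · simp only [h, if_true, not_true, if_false] at hi₂ ⊢
    omega
  · simp only [h, if_false, not_false_iff, if_true] at hi₂ ⊢
    omega

theorem tableauHeight_succ_eq_iff (hab : b ≤ a) (T : TwoRowSYT a b) {i : ℕ} (hi : i < a + b) :
    tableauHeight T (i + 1) = tableauHeight T i + 1 ↔ ∃ p, T.row1 p = i + 1 := by
  have h := tableauHeight_succ hab T hi
  split_ifs at h with hrow
  · exact iff_of_true h hrow
  · exact iff_of_false (by omega) hrow

theorem tableauHeight_mem_walks (hab : b ≤ a) (T : TwoRowSYT a b) :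
    tableauHeight T ∈ walks ballotDown (a + b) 0 := by
  refine mem_walks.2 ⟨tableauHeight_zero T, fun i hi => mem_steps_ballotDown.2 ?_, fun i hi => ?_⟩
  · have h := tableauHeight_succ hab T hi
    split_ifs at h
    exacts [Or.inl h, Or.inr h]
  · rw [tableauHeight_eq_sub T hi, tableauHeight_eq_sub T le_rfl]

theorem range_row1 (hab : b ≤ a) (T : TwoRowSYT a b) :
    Set.range T.row1 =
      {x ∈ Set.Icc 1 (a + b) | tableauHeight T x = tableauHeight T (x - 1) + 1} := by
  ext x
  have hmem : x ∈ Set.range T.row1 → x ∈ Set.Icc 1 (a + b) := by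
    rintro ⟨p, rfl⟩
    exact Finset.mem_Icc.1 (T.mem1 p)
  rw [Set.mem_sep_iff, ← and_iff_right_of_imp hmem]
  refine and_congr_right fun ⟨hx, hxN⟩ => ?_
  obtain ⟨i, rfl⟩ := Nat.exists_eq_add_of_le' hx
  exact (tableauHeight_succ_eq_iff hab T (by omega)).symm

theorem tableau_ext {T T' : TwoRowSYT a b} (h : Set.range T.row1 = Set.range T'.row1) :
    T = T' := by
  have h₁ : T.row1 = T'.row1 := (StrictMono.range_inj T.mono1 T'.mono1).1 h
  have h₂ : T.row2 = T'.row2 := (StrictMono.range_inj T.mono2 T'.mono2).1 <| by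
    rw [range_row2, range_row2, h]
  cases T
  cases T'
  congr

theorem tableauHeight_injective (hab : b ≤ a) :
    Function.Injective (tableauHeight : TwoRowSYT a b → ℕ → ℕ) := fun _ _ h =>
  tableau_ext <| by rw [range_row1 hab, range_row1 hab, h]

theorem add_rowCount_eq_rowCount {m₁ m₂ N : ℕ} {c : ℕ → ℕ} {r₁ : Fin m₁ → ℕ} {r₂ : Fin m₂ → ℕ}
    (hc : c ∈ walks ballotDown N 0) (hr₁ : Function.Injective r₁) (hr₂ : Function.Injective r₂)
    (hrange₁ : Set.range r₁ = {x ∈ Set.Icc 1 N | c x = c (x - 1) + 1})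
    (hrange₂ : Set.range r₂ = {x ∈ Set.Icc 1 N | c x ≠ c (x - 1) + 1}) {i : ℕ} (hi : i ≤ N) :
    c i + rowCount r₂ i = rowCount r₁ i := by
  obtain ⟨h0, hstep, -⟩ := mem_walks.1 hc
  induction i with
  | zero =>
    have hpos₁ : ∀ p, 1 ≤ r₁ p := fun p => (hrange₁.subset ⟨p, rfl⟩).1.1
    have hpos₂ : ∀ p, 1 ≤ r₂ p := fun p => (hrange₂.subset ⟨p, rfl⟩).1.1
    rw [h0, rowCount_zero hpos₁, rowCount_zero hpos₂]
  | succ i ih =>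
    have hmem : i + 1 ∈ Set.Icc 1 N := ⟨by omega, hi⟩
    have hup : (∃ p, r₁ p = i + 1) ↔ c (i + 1) = c i + 1 :=
      (Set.ext_iff.1 hrange₁ (i + 1)).trans (and_iff_right hmem)
    have hdown : (∃ p, r₂ p = i + 1) ↔ c (i + 1) ≠ c i + 1 :=
      (Set.ext_iff.1 hrange₂ (i + 1)).trans (and_iff_right hmem)
    have hstep_i := mem_steps_ballotDown.1 (hstep i hi)
    have := ih (by omega)
    simp only [rowCount_succ hr₁, rowCount_succ hr₂, hup, hdown]
    split_ifs <;> omega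

theorem exists_rows (hab : b ≤ a) {c : ℕ → ℕ} (hc : c ∈ walks ballotDown (a + b) 0)
    (hend : c (a + b) = a - b) :
    ∃ (r₁ : Fin a → ℕ) (r₂ : Fin b → ℕ), StrictMono r₁ ∧ StrictMono r₂ ∧
      Set.range r₁ = {x ∈ Set.Icc 1 (a + b) | c x = c (x - 1) + 1} ∧
      Set.range r₂ = {x ∈ Set.Icc 1 (a + b) | c x ≠ c (x - 1) + 1} := by
  let S₁ : Finset ℕ := {x ∈ Finset.Icc 1 (a + b) | c x = c (x - 1) + 1}
  let S₂ : Finset ℕ := {x ∈ Finset.Icc 1 (a + b) | c x ≠ c (x - 1) + 1}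
  have hrange₁ {m : ℕ} (h : S₁.card = m) : Set.range (S₁.orderEmbOfFin h) =
    {x ∈ Set.Icc 1 (a + b) | c x = c (x - 1) + 1} := by simp [S₁]
  have hrange₂ {m : ℕ} (h : S₂.card = m) : Set.range (S₂.orderEmbOfFin h) =
    {x ∈ Set.Icc 1 (a + b) | c x ≠ c (x - 1) + 1} := by simp [S₂]
  have hsum : S₁.card + S₂.card = a + b := by
    simpa [S₁, S₂] using Finset.card_filter_add_card_filter_not (s := Finset.Icc 1 (a + b))
      (fun x => c x = c (x - 1) + 1)
  have hdiff : a - b + S₂.card = S₁.card := by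
    have h := add_rowCount_eq_rowCount hc (S₁.orderEmbOfFin rfl).injective
      (S₂.orderEmbOfFin rfl).injective (hrange₁ rfl) (hrange₂ rfl) le_rfl
    rwa [hend, rowCount_eq_of_le (N := a + b) _ le_rfl, rowCount_eq_of_le (N := a + b) _ le_rfl]
      at h
    · exact fun p => ((hrange₁ rfl).subset ⟨p, rfl⟩).1.2
    · exact fun p => ((hrange₂ rfl).subset ⟨p, rfl⟩).1.2
  exact ⟨_, _, (S₁.orderEmbOfFin (by omega)).strictMono, (S₂.orderEmbOfFin (by omega)).strictMono,
    hrange₁ _, hrange₂ _⟩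

theorem exists_tableauHeight_eq (hab : b ≤ a) {c : ℕ → ℕ} (hc : c ∈ walks ballotDown (a + b) 0)
    (hend : c (a + b) = a - b) : ∃ T : TwoRowSYT a b, tableauHeight T = c := by
  obtain ⟨r₁, r₂, hr₁, hr₂, hrange₁, hrange₂⟩ := exists_rows hab hc hend
  have hmem₁ (p) := hrange₁.subset (Set.mem_range_self p)
  have hmem₂ (q) := hrange₂.subset (Set.mem_range_self q)
  have hcount {i : ℕ} (hi : i ≤ a + b) :=
    add_rowCount_eq_rowCount hc hr₁.injective hr₂.injective hrange₁ hrange₂ hi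
  have hcol (q : Fin b) (hq : (q : ℕ) < a) : r₁ ⟨q, hq⟩ < r₂ q := by
    have hle : r₁ ⟨q, hq⟩ ≤ r₂ q := by
      rw [← lt_rowCount_iff hr₁, ← hcount (hmem₂ q).1.2]
      exact Nat.lt_add_left _ ((lt_rowCount_iff hr₂).2 le_rfl)
    exact lt_of_le_of_ne hle fun h => (hmem₂ q).2 (h ▸ (hmem₁ ⟨q, hq⟩).2)
  let T : TwoRowSYT a b :=
    { row1 := r₁
      row2 := r₂
      mono1 := hr₁
      mono2 := hr₂
      col_lt := hcol
      mem1 p := Finset.mem_Icc.2 (hmem₁ p).1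
      mem2 q := Finset.mem_Icc.2 (hmem₂ q).1
      surj x hx := by
        by_cases hup : c x = c (x - 1) + 1
        · exact Or.inl (hrange₁.superset ⟨Finset.mem_Icc.1 hx, hup⟩)
        · exact Or.inr (hrange₂.superset ⟨Finset.mem_Icc.1 hx, hup⟩) }
  have hT (i : ℕ) (hi : i ≤ a + b) : tableauHeight T i = c i :=
    Nat.sub_eq_of_eq_add (hcount hi).symm
  refine ⟨T, funext fun i => ?_⟩
  rcases le_total i (a + b) with hi | hi
  · exact hT i hi
  · rw [(mem_walks.1 hc).2.2 i hi, tableauHeight_eq_sub T hi, hend]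

theorem isPeak_tableauHeight_iff (hab : b ≤ a) (T : TwoRowSYT a b) {i : ℕ} (hi : i + 1 < a + b) :
    IsPeak (tableauHeight T) i ↔ i + 1 ∈ DesSYT T := by
  rw [IsPeak, Ne, tableauHeight_succ_eq_iff hab T (by omega), tableauHeight_succ_eq_iff hab T hi,
    ← exists_row2_eq_iff T hi, DesSYT, Finset.mem_filter, Finset.mem_Icc]
  exact (and_iff_right ⟨by omega, by omega⟩).symm

theorem card_tableaux_eq_card_ballotWalks {n : ℕ} (hab : b ≤ a) (hn : n < a + b) {D : Finset ℕ}
    (hD : D ⊆ Finset.Icc 1 n) :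
    Nat.card {T : TwoRowSYT a b // DesSYT T ∩ Finset.Icc 1 n = D} =
      {c ∈ walks ballotDown (a + b) 0 |
        peakList n c = (List.range n).map (fun i => decide (i + 1 ∈ D)) ∧
          c (a + b) = a - b}.card := by
  have hpeak (T : TwoRowSYT a b) := peakList_eq_map_iff_inter_eq hD
    fun i hi => isPeak_tableauHeight_iff hab T (by omega : i + 1 < a + b)
  refine natCard_subtype_eq_card (f := tableauHeight)
    ⟨fun T hT => ?_, (tableauHeight_injective hab).injOn, fun c hc => ?_⟩
  · exact Finset.mem_filter.2 ⟨tableauHeight_mem_walks hab T, (hpeak T).2 hT,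
      tableauHeight_eq_sub T le_rfl⟩
  · obtain ⟨hc, hpeaks, hend⟩ := Finset.mem_filter.1 hc
    obtain ⟨T, rfl⟩ := exists_tableauHeight_eq hab hc hend
    exact ⟨T, (hpeak T).1 hpeaks, rfl⟩

/-- The tableau with the single row `1, …, a`. -/
def oneRowTableau (a : ℕ) : TwoRowSYT a 0 where
  row1 i := i + 1
  row2 := Fin.elim0
  mono1 _ _ h := Nat.succ_lt_succ h
  mono2 i := i.elim0
  col_lt i := i.elim0
  mem1 i := Finset.mem_Icc.2 ⟨by omega, i.isLt⟩
  mem2 i := i.elim0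
  surj x hx := by
    obtain ⟨hx₁, hxa⟩ := Finset.mem_Icc.1 hx
    exact Or.inl ⟨⟨x - 1, by omega⟩, Nat.sub_add_cancel hx₁⟩

theorem eq_oneRowTableau (T : TwoRowSYT a 0) : T = oneRowTableau a := by
  have hrange (T : TwoRowSYT a 0) : Set.range T.row1 = Set.Icc 1 a := by
    ext x
    refine ⟨?_, fun hx => (T.surj x (Finset.mem_Icc.2 hx)).resolve_right fun ⟨q, _⟩ => q.elim0⟩
    rintro ⟨p, rfl⟩
    exact Finset.mem_Icc.1 (T.mem1 p)
  exact tableau_ext ((hrange T).trans (hrange _).symm)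

theorem desSYT_eq_empty (T : TwoRowSYT a 0) : DesSYT T = ∅ :=
  Finset.filter_eq_empty_iff.2 fun _ _ ⟨_, q, _⟩ => q.elim0

theorem card_oneRowTableaux (a n : ℕ) (D : Finset ℕ) :
    Nat.card {T : TwoRowSYT a 0 // DesSYT T ∩ Finset.Icc 1 n = D} = if ∅ = D then 1 else 0 := by
  refine natCard_subtype_of_forall_iff (a := oneRowTableau a) fun T => ?_
  rw [desSYT_eq_empty, Finset.empty_inter]
  exact (and_iff_right (eq_oneRowTableau T)).symm

end Tableaux

section SuffixMinima

/-- The least of the values `σ i, σ (i + 1), …`. -/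
noncomputable def suffixMin (σ : ℕ → ℕ) (i : ℕ) : ℕ := sInf (σ '' Set.Ici i)

/-- The height walk of a permutation: how far the least of the values at `i, i + 1, …` is
below `i`. -/
noncomputable def permHeight (σ : ℕ → ℕ) (i : ℕ) : ℕ := i - suffixMin σ i

/-- Avoidance of the pattern 321 by a sequence of natural numbers. -/
def SeqAvoids321 (σ : ℕ → ℕ) : Prop := ∀ ⦃i j k⦄, i < j → j < k → ¬(σ k < σ j ∧ σ j < σ i)

section Sequences

variable {σ : ℕ → ℕ} {i j : ℕ}

theorem suffixMin_le (h : i ≤ j) : suffixMin σ i ≤ σ j := Nat.sInf_le ⟨j, h, rfl⟩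

theorem exists_apply_eq_suffixMin (σ : ℕ → ℕ) (i : ℕ) : ∃ j ≥ i, σ j = suffixMin σ i :=
  Nat.sInf_mem (Set.nonempty_Ici.image σ)

theorem le_suffixMin_iff : j ≤ suffixMin σ i ↔ ∀ k ≥ i, j ≤ σ k := by
  refine ⟨fun h k hk => h.trans (suffixMin_le hk), fun h => ?_⟩
  obtain ⟨k, hk, hmin⟩ := exists_apply_eq_suffixMin σ i
  exact hmin ▸ h k hk

theorem suffixMin_mono : Monotone (suffixMin σ) := fun _ _ h =>
  le_suffixMin_iff.2 fun _ hk => suffixMin_le (h.trans hk)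

theorem apply_eq_suffixMin_iff (hσ : Function.Injective σ) :
    σ i = suffixMin σ i ↔ suffixMin σ (i + 1) ≠ suffixMin σ i := by
  constructor
  · intro h h'
    obtain ⟨j, hj, hmin⟩ := exists_apply_eq_suffixMin σ (i + 1)
    have : j = i := hσ (hmin.trans (h'.trans h.symm))
    omega
  · intro h
    obtain ⟨j, hj, hmin⟩ := exists_apply_eq_suffixMin σ i
    rcases eq_or_lt_of_le hj with rfl | hj
    · exact hmin
    · have hlt := lt_of_le_of_ne (suffixMin_mono i.le_succ) h.symm
      exact absurd (hmin ▸ suffixMin_le hj) hlt.not_ge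

theorem apply_eq_suffixMin_iff_mem_range (hσ : Function.Injective σ) :
    σ i = suffixMin σ i ↔ σ i ∈ Set.range (suffixMin σ) := by
  refine ⟨fun h => ⟨i, h.symm⟩, ?_⟩
  rintro ⟨j, hj⟩
  obtain ⟨k, hk, hmin⟩ := exists_apply_eq_suffixMin σ j
  obtain rfl : k = i := hσ (hmin.trans hj)
  exact le_antisymm (hj ▸ suffixMin_mono hk) (suffixMin_le le_rfl)

end Sequences

section Perm

variable {σ τ : Equiv.Perm ℕ} {i : ℕ}

theorem suffixMin_le_self (σ : Equiv.Perm ℕ) (i : ℕ) : suffixMin σ i ≤ i := by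
  by_contra! hlt
  have hmaps : Set.MapsTo σ.symm (Finset.range (i + 1)) (Finset.range i) := by
    intro v hv
    simp only [Finset.coe_range, Set.mem_Iio] at hv ⊢
    by_contra! hle
    have := suffixMin_le (σ := σ) hle
    rw [σ.apply_symm_apply] at this
    omega
  have := Finset.card_le_card_of_injOn _ hmaps σ.symm.injective.injOn
  simp at this

theorem permHeight_succ_eq_iff :
    permHeight σ (i + 1) = permHeight σ i + 1 ↔ σ i ≠ suffixMin σ i := by
  have := suffixMin_le_self σ i
  have := suffixMin_le_self σ (i + 1)
  rw [Ne, apply_eq_suffixMin_iff σ.injective, permHeight, permHeight]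
  omega

theorem permHeight_succ_eq_zero_iff :
    permHeight σ (i + 1) = 0 ↔ ∀ j ≤ i, σ j ≤ i := by
  calc permHeight σ (i + 1) = 0 ↔ Set.MapsTo σ (Set.Iic i)ᶜ (Set.Iic i)ᶜ := by
        rw [permHeight, Nat.sub_eq_zero_iff_le, le_suffixMin_iff]
        simp only [Set.MapsTo, Set.mem_compl_iff, Set.mem_Iic, not_le, Nat.succ_le_iff, ge_iff_le]
    _ ↔ Set.MapsTo σ.symm (Set.Iic i) (Set.Iic i) := mapsTo_compl_iff_mapsTo_symm σ
    _ ↔ Set.MapsTo σ (Set.Iic i) (Set.Iic i) := Equiv.Perm.perm_symm_mapsTo_iff_mapsTo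

theorem isPeak_permHeight_iff (hσ : SeqAvoids321 σ) :
    IsPeak (permHeight σ) i ↔ σ (i + 1) < σ i := by
  rw [IsPeak, Ne, permHeight_succ_eq_iff, permHeight_succ_eq_iff, not_not]
  constructor
  · rintro ⟨hi, hmin⟩
    have hle : suffixMin σ i ≤ σ i := suffixMin_le le_rfl
    have hsucc : suffixMin σ (i + 1) = suffixMin σ i :=
      not_not.1 fun h => hi ((apply_eq_suffixMin_iff σ.injective).2 h)
    omega
  · intro hlt
    have hle : suffixMin σ i ≤ σ (i + 1) := suffixMin_le i.le_succ
    refine ⟨by omega, ?_⟩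
    obtain ⟨k, hk, hmin⟩ := exists_apply_eq_suffixMin σ (i + 1)
    rcases eq_or_lt_of_le hk with rfl | hk
    · exact hmin
    · have := not_and'.1 (hσ i.lt_succ_self hk) hlt
      exact le_antisymm (hmin ▸ not_lt.1 this) (suffixMin_le le_rfl)

theorem not_lt_of_suffixMin_eq (hτ : SeqAvoids321 τ) (h : suffixMin σ = suffixMin τ)
    (hlt : ∀ j < i, σ j = τ j) : ¬σ i < τ i := by
  intro hi
  obtain ⟨j, hj⟩ := τ.surjective (σ i)
  have hij : i < j := by
    refine lt_of_not_ge fun hji => ?_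
    rcases eq_or_lt_of_le hji with rfl | hji
    · exact hi.ne hj.symm
    · exact hji.ne (σ.injective ((hlt j hji).trans hj))
  have hτi : τ i ≠ suffixMin τ i := fun hmin =>
    (hmin.trans_le (suffixMin_le hij.le)).not_gt (hj ▸ hi)
  have hσi : σ i ≠ suffixMin σ i := by
    rwa [Ne, apply_eq_suffixMin_iff σ.injective, h, ← apply_eq_suffixMin_iff τ.injective]
  have hτj : τ j ≠ suffixMin τ j := by
    rwa [Ne, apply_eq_suffixMin_iff_mem_range τ.injective, hj, ← h,
      ← apply_eq_suffixMin_iff_mem_range σ.injective]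
  -- `τ` has the pattern 321 at `i < j < k`.
  obtain ⟨k, hk, hmin⟩ := exists_apply_eq_suffixMin τ j
  have hkj : τ k < τ j := lt_of_le_of_ne (hmin ▸ suffixMin_le le_rfl) (hmin ▸ hτj.symm)
  exact hτ hij (lt_of_le_of_ne hk (by rintro rfl; exact hτj hmin)) ⟨hkj, hj ▸ hi⟩

theorem eq_of_permHeight_eq (hσ : SeqAvoids321 σ) (hτ : SeqAvoids321 τ)
    (h : permHeight σ = permHeight τ) : σ = τ := by
  have hmin : suffixMin σ = suffixMin τ := by
    ext i
    have hi : i - suffixMin σ i = i - suffixMin τ i := congrFun h i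
    have := suffixMin_le_self σ i
    have := suffixMin_le_self τ i
    omega
  ext i
  induction i using Nat.strong_induction_on with
  | _ i ih =>
    exact le_antisymm (not_lt.1 (not_lt_of_suffixMin_eq hσ hmin.symm fun j hj => (ih j hj).symm))
      (not_lt.1 (not_lt_of_suffixMin_eq hτ hmin ih))

end Perm

/- A 321-avoiding permutation agrees with its suffix minima `m` where `m` increases, and is
increasing on the remaining indices. -/
section Reconstruction

variable {σ : Equiv.Perm ℕ} {m : ℕ → ℕ}

theorem le_apply_of_eqOn_of_strictMonoOn (hm : Monotone m) (hle : ∀ i, m i ≤ i)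
    (heq : Set.EqOn σ m {i | m i < m (i + 1)}) (hmono : StrictMonoOn σ {i | m i < m (i + 1)}ᶜ)
    (i : ℕ) : m i ≤ σ i := by
  by_cases hi : m i < m (i + 1)
  · exact (heq hi).ge
  by_contra! hlt
  have hmaps : Set.MapsTo σ (Finset.range (i + 1)) (Finset.range (m i)) := by
    intro j hj
    simp only [Finset.coe_range, Set.mem_Iio, Nat.lt_succ_iff] at hj ⊢
    by_cases hj' : m j < m (j + 1)
    · have hji : j < i := lt_of_le_of_ne hj (by rintro rfl; exact hi hj')
      exact (heq hj').trans_lt (hj'.trans_le (hm hji))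
    · exact (hmono.monotoneOn hj' hi hj).trans_lt hlt
  have hcard := Finset.card_le_card_of_injOn _ hmaps σ.injective.injOn
  rw [Finset.card_range, Finset.card_range] at hcard
  have := hle i
  omega

theorem seqAvoids321_of_eqOn_of_strictMonoOn (hm : Monotone m) (hle : ∀ i, m i ≤ σ i)
    (heq : Set.EqOn σ m {i | m i < m (i + 1)}) (hmono : StrictMonoOn σ {i | m i < m (i + 1)}ᶜ) :
    SeqAvoids321 σ := by
  have hnotMem {i j : ℕ} (hij : i < j) (hlt : σ j < σ i) : i ∈ {i | m i < m (i + 1)}ᶜ :=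
    fun hi => ((heq hi).trans_le ((hm hij.le).trans (hle j))).not_gt hlt
  intro i j k hij hjk ⟨hkj, hji⟩
  exact (hmono (hnotMem hij hji) (hnotMem hjk hkj) hij).not_gt hji

theorem suffixMin_eq_of_eqOn (hm : Monotone m) (hle : ∀ i, m i ≤ σ i)
    (heq : Set.EqOn σ m {i | m i < m (i + 1)}) (hunbdd : ∀ i, ∃ j, m i < m j) :
    suffixMin σ = m := by
  ext i
  refine le_antisymm ?_ (le_suffixMin_iff.2 fun j hj => (hm hj).trans (hle j))
  let t := Nat.find (hunbdd i)
  have ht : m i < m t := Nat.find_spec (hunbdd i)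
  have hit : i < t := hm.reflect_lt ht
  obtain ⟨j, hj⟩ : ∃ j, t = j + 1 := ⟨t - 1, by omega⟩
  have hmj : m j ≤ m i := not_lt.1 (Nat.find_min (hunbdd i) (by omega : j < t))
  calc suffixMin σ i ≤ σ j := suffixMin_le (by omega)
    _ = m j := heq (hmj.trans_lt (hj ▸ ht))
    _ ≤ m i := hmj

end Reconstruction

end SuffixMinima

section NatPerm

/-- A permutation of `{0, …, n - 1}`, extended to the natural numbers by fixed points. -/
noncomputable def natPerm {n : ℕ} (π : Equiv.Perm (Fin n)) : Equiv.Perm ℕ :=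
  π.viaEmbedding Fin.valEmbedding

variable {n i : ℕ} {π : Equiv.Perm (Fin n)}

theorem natPerm_val (π : Equiv.Perm (Fin n)) (i : Fin n) : natPerm π i = π i :=
  π.viaEmbedding_apply Fin.valEmbedding i

theorem natPerm_of_le (π : Equiv.Perm (Fin n)) (hi : n ≤ i) : natPerm π i = i :=
  π.viaEmbedding_apply_of_notMem Fin.valEmbedding i (by rintro ⟨j, rfl⟩; exact hi.not_gt j.isLt)

theorem natPerm_injective : Function.Injective (natPerm : Equiv.Perm (Fin n) → Equiv.Perm ℕ) :=
  Equiv.Perm.viaEmbeddingHom_injective Fin.valEmbedding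

theorem natPerm_lt_iff (π : Equiv.Perm (Fin n)) : natPerm π i < n ↔ i < n := by
  refine ⟨fun h => ?_, fun h => ?_⟩
  · by_contra! hi
    rw [natPerm_of_le π hi] at h
    omega
  · exact (natPerm_val π ⟨i, h⟩).trans_lt (π ⟨i, h⟩).isLt

theorem seqAvoids321_natPerm_iff : SeqAvoids321 (natPerm π) ↔ Avoids321 π := by
  constructor
  · intro h i j k hij hjk hlt
    exact h hij hjk (by simpa only [natPerm_val, Fin.lt_def] using hlt)
  · intro h i j k hij hjk hlt
    by_cases hk : k < n
    · refine h ⟨i, by omega⟩ ⟨j, by omega⟩ ⟨k, hk⟩ hij hjk ?_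
      simpa only [Fin.lt_def, ← natPerm_val] using hlt
    · have hj : ¬ natPerm π j < n := by rw [natPerm_of_le π (not_lt.1 hk)] at hlt; omega
      rw [natPerm_lt_iff] at hj
      rw [natPerm_of_le π (not_lt.1 hk), natPerm_of_le π (not_lt.1 hj)] at hlt
      omega

theorem suffixMin_natPerm_of_le (π : Equiv.Perm (Fin n)) (hi : n ≤ i) :
    suffixMin (natPerm π) i = i :=
  le_antisymm (suffixMin_le_self _ i) <| le_suffixMin_iff.2 fun _ hk =>
    (natPerm_of_le π (hi.trans hk)).symm ▸ hk

theorem permHeight_natPerm_of_le (π : Equiv.Perm (Fin n)) (hi : n ≤ i) :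
    permHeight (natPerm π) i = 0 := by
  rw [permHeight, suffixMin_natPerm_of_le π hi, Nat.sub_self]

theorem permHeight_natPerm_mem_walks (π : Equiv.Perm (Fin n)) :
    permHeight (natPerm π) ∈ walks lukDown n 0 := by
  refine mem_walks.2 ⟨Nat.zero_sub _, fun i _ => ?_, fun i hi => ?_⟩
  · have := suffixMin_mono (σ := natPerm π) (Nat.le_add_right i 1)
    rw [steps_lukDown, Finset.mem_range, permHeight, permHeight]
    omega
  · rw [permHeight_natPerm_of_le π hi, permHeight_natPerm_of_le π le_rfl]

theorem blockNum_eq_numReturns (π : Equiv.Perm (Fin n)) :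
    blockNum π = numReturns n (permHeight (natPerm π)) := by
  have hblock (i : Fin n) :
      (∀ j ≤ i, π j ≤ i) ↔ permHeight (natPerm π) (i + 1) = 0 := by
    rw [permHeight_succ_eq_zero_iff]
    refine ⟨fun h j hj => ?_, fun h j hj => ?_⟩
    · exact (natPerm_val π ⟨j, by omega⟩).trans_le (h ⟨j, by omega⟩ hj)
    · exact (natPerm_val π j).symm.trans_le (h j hj)
  simp only [blockNum, numReturns, Finset.card_filter, hblock]
  exact Fin.sum_univ_eq_sum_range
    (fun i => if permHeight (natPerm π) (i + 1) = 0 then 1 else 0) n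

theorem succ_mem_desSet_iff (hi : i + 1 < n) :
    i + 1 ∈ DesSet π ↔ natPerm π (i + 1) < natPerm π i := by
  rw [natPerm_val π ⟨i + 1, hi⟩, natPerm_val π ⟨i, by omega⟩, DesSet, Finset.mem_image]
  constructor
  · rintro ⟨j, hj, hji⟩
    obtain rfl : (j : ℕ) = i := by omega
    exact (Finset.mem_filter.1 hj).2.2
  · exact fun h => ⟨⟨i, by omega⟩, Finset.mem_filter.2 ⟨Finset.mem_univ _, hi, h⟩, rfl⟩

theorem desSet_subset (π : Equiv.Perm (Fin n)) : DesSet π ⊆ Finset.Icc 1 (n - 1) := by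
  intro x hx
  obtain ⟨j, hj, rfl⟩ := Finset.mem_image.1 hx
  obtain ⟨-, hlt, -⟩ := Finset.mem_filter.1 hj
  exact Finset.mem_Icc.2 ⟨by omega, by omega⟩

theorem exists_natPerm_eqOn_strictMonoOn_compl {m : ℕ → ℕ} (hm : Monotone m) (hle : ∀ i, m i ≤ i)
    (hconst : ∀ i, n ≤ i → m i = i) : ∃ π : Equiv.Perm (Fin n),
      Set.EqOn (natPerm π) m {i | m i < m (i + 1)} ∧
      StrictMonoOn (natPerm π) {i | m i < m (i + 1)}ᶜ := by
  have hinj : Set.InjOn m {i | m i < m (i + 1)} := by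
    have hstrict : StrictMonoOn m {i | m i < m (i + 1)} := fun i hi j _ hij =>
      lt_of_lt_of_le hi (hm hij)
    exact hstrict.injOn
  let f (i : Fin n) : Fin n := ⟨m i, (hle i).trans_lt i.isLt⟩
  let s : Finset (Fin n) := {i | m i < m (i + 1)}
  have hs {i : Fin n} : i ∈ (s : Set (Fin n)) ↔ m i < m (i + 1) := by simp [s]
  obtain ⟨π, heq, hmono⟩ := exists_perm_eqOn_strictMonoOn_compl (f := f) (s := s)
    fun i hi j hj hij => Fin.ext (hinj (hs.1 hi) (hs.1 hj) (congrArg Fin.val hij))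
  refine ⟨π, fun i hi => ?_, fun i hi j hj hij => ?_⟩
  · by_cases hin : i < n
    · have hval : π ⟨i, hin⟩ = f ⟨i, hin⟩ := heq (hs.2 hi)
      exact (natPerm_val π ⟨i, hin⟩).trans (congrArg Fin.val hval)
    · rw [natPerm_of_le π (not_lt.1 hin), hconst i (not_lt.1 hin)]
  · have hjn : j < n := by
      by_contra! hjn
      refine hj ?_
      rw [Set.mem_ofPred_eq, hconst j hjn, hconst (j + 1) (by omega)]
      exact j.lt_succ_self
    have hlt : π ⟨i, hij.trans hjn⟩ < π ⟨j, hjn⟩ :=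
      hmono (mt (hs (i := ⟨i, _⟩)).1 hi) (mt (hs (i := ⟨j, hjn⟩)).1 hj) hij
    rwa [Fin.lt_def, ← natPerm_val, ← natPerm_val] at hlt

theorem exists_permHeight_eq {c : ℕ → ℕ} (hc : c ∈ walks lukDown n 0) (hend : c n = 0) :
    ∃ π : Equiv.Perm (Fin n), Avoids321 π ∧ permHeight (natPerm π) = c := by
  obtain ⟨h0, hstep, hconst⟩ := mem_walks.1 hc
  have hzero : ∀ i, n ≤ i → c i = 0 := fun i hi => (hconst i hi).trans hend
  have hsucc (i : ℕ) : c (i + 1) ≤ c i + 1 := by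
    rcases lt_or_ge i n with hi | hi
    · have := hstep i hi
      rw [steps_lukDown, Finset.mem_range] at this
      omega
    · simp [hzero (i + 1) (by omega)]
  have hci (i : ℕ) : c i ≤ i := by
    induction i with
    | zero => exact h0.le
    | succ i ih => exact (hsucc i).trans (by omega)
  let m (i : ℕ) : ℕ := i - c i
  have hle (i : ℕ) : m i ≤ i := Nat.sub_le _ _
  have hfix (i : ℕ) (hi : n ≤ i) : m i = i := by
    simp only [m, hzero i hi, Nat.sub_zero]
  have hm : Monotone m := monotone_nat_of_le_succ fun i => by
    have := hsucc i
    simp only [m]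
    omega
  have hunbdd (i : ℕ) : ∃ j, m i < m j :=
    ⟨n + i + 1, (hle i).trans_lt (by rw [hfix _ (by omega)]; omega)⟩
  obtain ⟨π, heq, hmono⟩ := exists_natPerm_eqOn_strictMonoOn_compl hm hle hfix
  have happly := le_apply_of_eqOn_of_strictMonoOn hm hle heq hmono
  refine ⟨π, seqAvoids321_natPerm_iff.1 (seqAvoids321_of_eqOn_of_strictMonoOn hm happly heq hmono),
    funext fun i => ?_⟩
  rw [permHeight, suffixMin_eq_of_eqOn hm happly heq hunbdd]
  exact Nat.sub_sub_self (hci i)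

theorem card_perms_eq_card_lukWalks {k : ℕ} {D : Finset ℕ} (hD : D ⊆ Finset.Icc 1 n) :
    Nat.card {π : Equiv.Perm (Fin (n + 1)) // Avoids321 π ∧ blockNum π = k ∧ DesSet π = D} =
      {c ∈ walks lukDown (n + 1) 0 |
        peakList n c = (List.range n).map (fun i => decide (i + 1 ∈ D)) ∧
          c (n + 1) = 0 ∧ numReturns (n + 1) c = k}.card := by
  have hpeak {π : Equiv.Perm (Fin (n + 1))} (hπ : Avoids321 π) :
      peakList n (permHeight (natPerm π)) = (List.range n).map (fun i => decide (i + 1 ∈ D)) ↔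
        DesSet π = D := by
    rw [peakList_eq_map_iff_inter_eq (E := DesSet π) hD fun i hi => by
      rw [isPeak_permHeight_iff (seqAvoids321_natPerm_iff.2 hπ), succ_mem_desSet_iff (by omega)]]
    exact iff_of_eq (congrArg (· = D) (Finset.inter_eq_left.2 (desSet_subset π)))
  refine natCard_subtype_eq_card (f := fun π => permHeight (natPerm π))
    ⟨fun π hπ => ?_, fun π hπ π' hπ' h => ?_, fun c hc => ?_⟩
  · obtain ⟨havoid, hblock, hdes⟩ := hπ
    exact Finset.mem_filter.2 ⟨permHeight_natPerm_mem_walks π, (hpeak havoid).2 hdes,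
      permHeight_natPerm_of_le π le_rfl, (blockNum_eq_numReturns π).symm.trans hblock⟩
  · exact natPerm_injective <| eq_of_permHeight_eq (seqAvoids321_natPerm_iff.2 hπ.1)
      (seqAvoids321_natPerm_iff.2 hπ'.1) h
  · obtain ⟨hc, hpeaks, hend, hreturns⟩ := Finset.mem_filter.1 hc
    obtain ⟨π, havoid, rfl⟩ := exists_permHeight_eq hc hend
    exact ⟨π, ⟨havoid, (blockNum_eq_numReturns π).trans hreturns, (hpeak havoid).1 hpeaks⟩, rfl⟩

theorem blockNum_eq_self_iff : blockNum π = n ↔ π = 1 := by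
  have hcard : blockNum π = n ↔ ∀ i j, j ≤ i → π j ≤ i := by
    have := Finset.card_filter_eq_iff (s := Finset.univ) (p := fun i => ∀ j ≤ i, π j ≤ i)
    simpa [blockNum] using this
  rw [hcard]
  refine ⟨fun h => Equiv.ext fun i => ?_, ?_⟩
  · induction i using WellFoundedLT.induction with
    | ind i ih =>
      refine (h i i le_rfl).eq_of_not_lt fun hlt => hlt.ne ?_
      exact π.injective (ih _ hlt)
  · rintro rfl i j hj
    exact hj

theorem desSet_one : DesSet (1 : Equiv.Perm (Fin n)) = ∅ := by
  rw [DesSet, Finset.image_eq_empty, Finset.filter_eq_empty_iff]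
  rintro i - ⟨_, hlt⟩
  exact absurd hlt (not_lt.2 (Fin.mk_le_mk.2 (Nat.le_add_right _ 1)))

theorem avoids321_one : Avoids321 (1 : Equiv.Perm (Fin n)) := fun _ _ _ _ hjk h => hjk.not_gt h.1

theorem card_perms_blockNum_eq_self (n : ℕ) (D : Finset ℕ) :
    Nat.card {π : Equiv.Perm (Fin n) // Avoids321 π ∧ blockNum π = n ∧ DesSet π = D} =
      if ∅ = D then 1 else 0 := by
  refine natCard_subtype_of_forall_iff (a := 1) fun π => ?_
  rw [blockNum_eq_self_iff]
  constructor
  · rintro ⟨-, rfl, hD⟩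
    exact ⟨rfl, desSet_one.symm.trans hD⟩
  · rintro ⟨rfl, hD⟩
    exact ⟨avoids321_one, rfl, desSet_one.trans hD⟩

end NatPerm

end HeightWalk

/-- The 321-avoiding permutations with `k` blocks and descent set `D` are
equinumerous with the standard Young tableaux of shape `(n-1, n-k)` whose descent
set intersected with `[n-1]` is `D`. -/
theorem card_blockNum_des_eq_card_SYT (n k : ℕ) (h1 : 1 ≤ k) (h2 : k ≤ n)
    (D : Finset ℕ) (hD : D ⊆ Finset.Icc 1 (n - 1)) :
    Nat.card {π : Equiv.Perm (Fin n) // Avoids321 π ∧ blockNum π = k ∧ DesSet π = D} =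
      Nat.card {T : TwoRowSYT (n - 1) (n - k) // DesSYT T ∩ Finset.Icc 1 (n - 1) = D} := by
  rcases eq_or_lt_of_le h2 with rfl | hkn
  · rw [HeightWalk.card_perms_blockNum_eq_self, Nat.sub_self, HeightWalk.card_oneRowTableaux]
  obtain ⟨k, rfl⟩ := Nat.exists_eq_add_of_le' h1
  obtain ⟨s, rfl⟩ : ∃ s, n = s + k + 1 + 1 := ⟨n - (k + 2), by omega⟩
  rw [Nat.add_sub_cancel] at hD ⊢
  have ha : s + k + 1 + (s + k + 1 + 1 - (k + 1)) = s + (s + k + 1) + 1 := by omega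
  have hb : s + k + 1 - (s + k + 1 + 1 - (k + 1)) = k := by omega
  rw [HeightWalk.card_perms_eq_card_lukWalks hD,
    HeightWalk.card_tableaux_eq_card_ballotWalks (by omega) (by omega) hD, ha, hb]
  have hwalks := HeightWalk.card_lukWalks_eq_card_ballotWalks (k := k) (s := s)
    ((List.range (s + k + 1)).map fun i => decide (i + 1 ∈ D)) (by simp)
  simpa only [List.length_map, List.length_range] using hwalks
end
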